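/- There exists an absolute constant A > 0 such that the following holds. Let Π be a set of n planes and S a set of k spheres in ℝ³ such that there is no 3×3 cone or cylinder configuration formed by three centers of spheres of S and three planes of Π (i.e., there are no three spheres of S whose centers lie on a common line ℓ together with three planes of Π all tangent to one common cone or cylinder with axis ℓ). Then the number T(Π,S) of tangent pairs satisfies T(Π,S) ≤ A · ( n^{3/4} k^{3/4} + n + k ). -/

import Mathlib

open scoped RealInnerProductSpace

noncomputable section

abbrev Pt3 := EuclideanSpace ℝ (Fin 3)

/-- The line through `a` with direction `v` (assumed nonzero where relevant). -/
def lineThrough3 (a v : Pt3) : Set Pt3 := {x : Pt3 | ∃ t : ℝ, x = a + t • v}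

/-- A line in space. -/
def IsLine3 (l : Set Pt3) : Prop := ∃ a v : Pt3, v ≠ 0 ∧ l = lineThrough3 a v

/-- A plane in space, given by a nonzero normal vector and an offset. -/
def IsPlane3 (s : Set Pt3) : Prop :=
  ∃ u : Pt3, ∃ d : ℝ, u ≠ 0 ∧ s = {x : Pt3 | ⟪u, x⟫ = d}

/-- Two subsets of space are tangent if they intersect in exactly one point. -/
def Tangent3 (a b : Set Pt3) : Prop := ∃ p : Pt3, a ∩ b = {p}

/-- The (double, circular) cone with apex `a`, axis direction `v` and half-angle `θ`:
the points `x` such that the angle between `x - a` and `v` is `θ` or `π - θ`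
(together with the apex itself). -/
def coneSet (a v : Pt3) (θ : ℝ) : Set Pt3 :=
  {x : Pt3 | x = a ∨ InnerProductGeometry.angle (x - a) v = θ ∨
    InnerProductGeometry.angle (x - a) v = Real.pi - θ}

/-- The cylinder with axis the line through `a` with direction `v`, and radius `r`:
the points at distance `r` from the axis. -/
def cylSet (a v : Pt3) (r : ℝ) : Set Pt3 :=
  {x : Pt3 | Metric.infDist x (lineThrough3 a v) = r}

/-- A plane is tangent to a cone precisely when it meets it in exactly one
(ruling) line. -/
def TangentPlaneCone (s : Set Pt3) (a v : Pt3) (θ : ℝ) : Prop :=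
  ∃ lam : Set Pt3, IsLine3 lam ∧ s ∩ coneSet a v θ = lam

/-- A plane is tangent to a cylinder precisely when it meets it in exactly one
(generator) line. -/
def TangentPlaneCyl (s : Set Pt3) (a v : Pt3) (r : ℝ) : Prop :=
  ∃ lam : Set Pt3, IsLine3 lam ∧ s ∩ cylSet a v r = lam

/-- Three distinct spheres of `S` (given by center–radius pairs) whose centers lie on a
common line `ℓ`, together with three distinct planes of `Pl` all tangent to one common
cone or cylinder with axis `ℓ`. -/
def SphereConeCylConfig33 (S : Finset (Pt3 × ℝ)) (Pl : Finset (Set Pt3)) : Prop :=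
  ∃ a v : Pt3, v ≠ 0 ∧
    (∃ s1 ∈ S, ∃ s2 ∈ S, ∃ s3 ∈ S,
      s1 ≠ s2 ∧ s1 ≠ s3 ∧ s2 ≠ s3 ∧
      s1.1 ∈ lineThrough3 a v ∧ s2.1 ∈ lineThrough3 a v ∧ s3.1 ∈ lineThrough3 a v) ∧
    (∃ q1 ∈ Pl, ∃ q2 ∈ Pl, ∃ q3 ∈ Pl,
      q1 ≠ q2 ∧ q1 ≠ q3 ∧ q2 ≠ q3 ∧
      ((∃ a' ∈ lineThrough3 a v, ∃ θ : ℝ, 0 < θ ∧ θ < Real.pi / 2 ∧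
          TangentPlaneCone q1 a' v θ ∧ TangentPlaneCone q2 a' v θ ∧
          TangentPlaneCone q3 a' v θ) ∨
       (∃ r : ℝ, 0 < r ∧
          TangentPlaneCyl q1 a v r ∧ TangentPlaneCyl q2 a v r ∧
          TangentPlaneCyl q3 a v r)))

/-!
Stereographic coordinates of a unit normal turn a plane into a point of `ℝ³` and an oriented sphere
into the graph of a polynomial of degree at most two in two variables, tangency becoming incidence.
Three unit vectors lie on at most one circle of the unit sphere, so a `K₃,₃` among these incidences
forces collinear centers and a common tangent cone or cylinder; without such configurations the
incidence graph is `K₃,₃`-free.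

Incidences of points with graphs are bounded by polynomial partitioning. In place of the ham
sandwich theorem, each polynomial of the partition is a determinant vanishing at one point chosen
from each large class. Averaged over the choices, antisymmetry puts at least a third of the pairs in
each of these classes on opposite sides, so the sum of the cubed class sizes drops by a constant
factor. The number of sign classes met by a graph is bounded by counting critical points of a
weighted product with Bézout's inequality. Balancing the number of partition steps against the
`K₃,₃` bound inside each class gives the exponent `3/4`.
-/

open MvPolynomial Module

section DimensionCounts

variable {σ K : Type*} [Field K]

theorem finrank_restrictTotalDegree (k N : ℕ) :
    finrank K (restrictTotalDegree (Fin k) K N) = (N + k).choose k := by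
  have h_supp : {n : Fin k →₀ ℕ | (n.sum fun _ e ↦ e) ≤ N} =
      ((Finset.range (N + 1)).biUnion fun j ↦ Finset.univ.finsuppAntidiag j :
        Finset (Fin k →₀ ℕ)) := by
    ext n
    simp [Finset.mem_finsuppAntidiag, Finsupp.sum_fintype]
  have h_card : finrank K (restrictTotalDegree (Fin k) K N) =
      Nat.card {n : Fin k →₀ ℕ | (n.sum fun _ e ↦ e) ≤ N} :=
    finrank_eq_nat_card_basis (basisRestrictSupport K _)
  rw [h_card, h_supp, Nat.card_coe_set_eq, Set.ncard_coe_finset, Finset.card_biUnion,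
    ← Nat.sum_range_multichoose]
  · simp [Finset.card_finsuppAntidiag_nat_eq_multichoose]
  · intro i _ j _ hij
    simp only [Finset.disjoint_left, Finset.mem_finsuppAntidiag]
    exact fun _ hi hj ↦ hij (hi.1.symm.trans hj.1)

theorem two_mul_finrank_restrictTotalDegree (N : ℕ) :
    2 * finrank K (restrictTotalDegree (Fin 2) K N) = (N + 1) * (N + 2) := by
  have h := Nat.descFactorial_eq_factorial_mul_choose (N + 2) 2
  simp only [Nat.descFactorial_succ, Nat.descFactorial_zero, Nat.factorial_two] at h
  rw [finrank_restrictTotalDegree, ← h]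
  simp

theorem six_mul_finrank_restrictTotalDegree (N : ℕ) :
    6 * finrank K (restrictTotalDegree (Fin 3) K N) = (N + 1) * (N + 2) * (N + 3) := by
  have h := Nat.descFactorial_eq_factorial_mul_choose (N + 3) 3
  simp only [Nat.descFactorial_succ, Nat.descFactorial_zero,
    show Nat.factorial 3 = 6 from rfl] at h
  rw [finrank_restrictTotalDegree, ← h]
  simp [mul_assoc]

/-- The polynomials of total degree at most `N` in the ideal `I`, as a `K`-subspace; its dimension
as a function of `N` is the Hilbert function of `I`. -/
def idealOfDegreeLE (I : Ideal (MvPolynomial σ K)) (N : ℕ) : Submodule K (MvPolynomial σ K) :=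
  I.restrictScalars K ⊓ restrictTotalDegree σ K N

theorem mem_idealOfDegreeLE {I : Ideal (MvPolynomial σ K)} {N : ℕ} {p : MvPolynomial σ K} :
    p ∈ idealOfDegreeLE I N ↔ p ∈ I ∧ p.totalDegree ≤ N := by
  rw [idealOfDegreeLE, Submodule.mem_inf, mem_restrictTotalDegree, Submodule.restrictScalars_mem]

theorem idealOfDegreeLE_le (I : Ideal (MvPolynomial σ K)) (N : ℕ) :
    idealOfDegreeLE I N ≤ restrictTotalDegree σ K N :=
  inf_le_right

theorem idealOfDegreeLE_mono {I J : Ideal (MvPolynomial σ K)} (h : I ≤ J) (N : ℕ) :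
    idealOfDegreeLE I N ≤ idealOfDegreeLE J N :=
  fun _ hp ↦ mem_idealOfDegreeLE.2 ((mem_idealOfDegreeLE.1 hp).imp_left (@h _))

theorem idealOfDegreeLE_span_singleton {g : MvPolynomial σ K} (hg : g ≠ 0) {N : ℕ}
    (hN : g.totalDegree ≤ N) :
    idealOfDegreeLE (Ideal.span {g}) N =
      (restrictTotalDegree σ K (N - g.totalDegree)).map (LinearMap.mulLeft K g) := by
  ext p
  simp only [mem_idealOfDegreeLE, Ideal.mem_span_singleton, Submodule.mem_map,
    mem_restrictTotalDegree, LinearMap.mulLeft_apply]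
  constructor
  · rintro ⟨⟨u, rfl⟩, hu⟩
    refine ⟨u, ?_, rfl⟩
    rcases eq_or_ne u 0 with rfl | hu0
    · simp
    · rw [totalDegree_mul_of_isDomain hg hu0] at hu
      omega
  · rintro ⟨u, hu, rfl⟩
    exact ⟨dvd_mul_right g u, (totalDegree_mul g u).trans (by omega)⟩

theorem finrank_idealOfDegreeLE_span_singleton {g : MvPolynomial σ K} (hg : g ≠ 0) {N : ℕ}
    (hN : g.totalDegree ≤ N) :
    finrank K (idealOfDegreeLE (Ideal.span {g}) N) =
      finrank K (restrictTotalDegree σ K (N - g.totalDegree)) := by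
  rw [idealOfDegreeLE_span_singleton hg hN]
  exact (Submodule.equivMapOfInjective _ (mul_right_injective₀ hg) _).finrank_eq.symm

theorem idealOfDegreeLE_span_singleton_eq_bot {g : MvPolynomial σ K} {N : ℕ}
    (hN : N < g.totalDegree) : idealOfDegreeLE (Ideal.span {g}) N = ⊥ := by
  rw [eq_bot_iff]
  intro p hp
  obtain ⟨hgp, hpN⟩ := mem_idealOfDegreeLE.1 hp
  by_contra hp0
  have := totalDegree_le_of_dvd_of_isDomain (Ideal.mem_span_singleton.1 hgp) hp0
  omega

variable [Finite σ]

instance (I : Ideal (MvPolynomial σ K)) (N : ℕ) : Module.Finite K (idealOfDegreeLE I N) :=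
  Submodule.finiteDimensional_of_le (idealOfDegreeLE_le I N)

-- Inside `(F, G)` lie `(F)` and `(G)`, which intersect in `(F * G)` by coprimality.
theorem le_finrank_idealOfDegreeLE_span_pair {F G : MvPolynomial σ K} (hF : F ≠ 0) (hG : G ≠ 0)
    (h : IsRelPrime F G) {N : ℕ} (hN : F.totalDegree + G.totalDegree ≤ N) :
    finrank K (restrictTotalDegree σ K (N - F.totalDegree)) +
        finrank K (restrictTotalDegree σ K (N - G.totalDegree)) ≤
      finrank K (idealOfDegreeLE (Ideal.span {F, G}) N) +
        finrank K (restrictTotalDegree σ K (N - F.totalDegree - G.totalDegree)) := by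
  have h_deg : (F * G).totalDegree = F.totalDegree + G.totalDegree :=
    totalDegree_mul_of_isDomain hF hG
  have h_inf : idealOfDegreeLE (Ideal.span {F}) N ⊓ idealOfDegreeLE (Ideal.span {G}) N ≤
      idealOfDegreeLE (Ideal.span {F * G}) N := by
    intro p hp
    simp only [Submodule.mem_inf, mem_idealOfDegreeLE, Ideal.mem_span_singleton] at hp ⊢
    exact ⟨h.mul_dvd hp.1.1 hp.2.1, hp.1.2⟩
  have h_sup : idealOfDegreeLE (Ideal.span {F}) N ⊔ idealOfDegreeLE (Ideal.span {G}) N ≤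
      idealOfDegreeLE (Ideal.span {F, G}) N :=
    sup_le (idealOfDegreeLE_mono (Ideal.span_mono (by simp)) N)
      (idealOfDegreeLE_mono (Ideal.span_mono (by simp)) N)
  rw [← finrank_idealOfDegreeLE_span_singleton hF (by omega),
    ← finrank_idealOfDegreeLE_span_singleton hG (by omega), Nat.sub_sub, ← h_deg,
    ← finrank_idealOfDegreeLE_span_singleton (mul_ne_zero hF hG) (by omega),
    ← Submodule.finrank_sup_add_finrank_inf_eq]
  exact add_le_add (Submodule.finrank_mono h_sup) (Submodule.finrank_mono h_inf)

theorem exists_complement_idealOfDegreeLE (I : Ideal (MvPolynomial σ K)) (N : ℕ) :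
    ∃ C ≤ restrictTotalDegree σ K N, (∀ p ∈ C, p ∈ I → p = 0) ∧
      finrank K (idealOfDegreeLE I N) + finrank K C = finrank K (restrictTotalDegree σ K N) := by
  obtain ⟨C, hC⟩ := Submodule.exists_isCompl (idealOfDegreeLE I N)
  have h_inf : idealOfDegreeLE I N ⊓ (C ⊓ restrictTotalDegree σ K N) = ⊥ := by
    rw [← inf_assoc, hC.inf_eq_bot, bot_inf_eq]
  have h_sup : idealOfDegreeLE I N ⊔ C ⊓ restrictTotalDegree σ K N = restrictTotalDegree σ K N := by
    rw [← sup_inf_assoc_of_le _ (idealOfDegreeLE_le I N), hC.sup_eq_top, top_inf_eq]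
  have : Module.Finite K (C ⊓ restrictTotalDegree σ K N : Submodule K (MvPolynomial σ K)) :=
    Submodule.finiteDimensional_of_le inf_le_right
  refine ⟨C ⊓ restrictTotalDegree σ K N, inf_le_right, fun p hp hpI ↦ ?_, ?_⟩
  · refine (Submodule.mem_bot K).1 (h_inf ▸ Submodule.mem_inf.2 ⟨?_, hp⟩)
    exact mem_idealOfDegreeLE.2 ⟨hpI, (mem_restrictTotalDegree _ _ _).1 hp.2⟩
  · rw [← Submodule.finrank_sup_add_finrank_inf_eq, h_sup, h_inf, finrank_bot, add_zero]

end DimensionCounts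

section Factors

open UniqueFactorizationMonoid

variable {σ K : Type*} [Field K]

theorem totalDegree_pos_of_irreducible {g : MvPolynomial σ K} (hg : Irreducible g) :
    0 < g.totalDegree := by
  refine Nat.pos_of_ne_zero fun h ↦ hg.not_isUnit ?_
  rw [totalDegree_eq_zero_iff_eq_C] at h
  rw [h]
  refine (isUnit_iff_ne_zero.2 fun h₀ ↦ hg.ne_zero ?_).map C
  rw [h, h₀, C_0]

theorem eval_eq_zero_of_dvd {g h : MvPolynomial σ K} {q : σ → K} (hd : g ∣ h)
    (hg : eval q g = 0) : eval q h = 0 :=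
  zero_dvd_iff.1 (hg ▸ map_dvd (eval q) hd)

theorem exists_mem_factors_eval_eq_zero {h : MvPolynomial σ K} (hh : h ≠ 0) {q : σ → K}
    (hq : eval q h = 0) : ∃ g ∈ factors h, eval q g = 0 := by
  have h_prod : eval q (factors h).prod = 0 := eval_eq_zero_of_dvd (factors_prod hh).dvd' hq
  rwa [← Multiset.prod_hom, Multiset.prod_eq_zero_iff, Multiset.mem_map] at h_prod

theorem totalDegree_multiset_prod_of_ne_zero {s : Multiset (MvPolynomial σ K)}
    (hs : ∀ g ∈ s, g ≠ 0) : s.prod.totalDegree = (s.map totalDegree).sum := by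
  induction s using Multiset.induction_on with
  | empty => simp
  | cons a s ih =>
    have hs' : ∀ g ∈ s, g ≠ 0 := fun g hg ↦ hs g (Multiset.mem_cons_of_mem hg)
    rw [Multiset.prod_cons, Multiset.map_cons, Multiset.sum_cons, ← ih hs']
    exact totalDegree_mul_of_isDomain (hs a (Multiset.mem_cons_self a s))
      (Multiset.prod_ne_zero fun h ↦ hs' 0 h rfl)

theorem sum_totalDegree_toFinset_factors_le [DecidableEq (MvPolynomial σ K)]
    {h : MvPolynomial σ K} (hh : h ≠ 0) :
    ∑ g ∈ (factors h).toFinset, g.totalDegree ≤ h.totalDegree := by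
  calc ∑ g ∈ (factors h).toFinset, g.totalDegree
      ≤ ((factors h).map totalDegree).sum := by
        rw [Finset.sum_multiset_map_count]
        refine Finset.sum_le_sum fun g hg ↦ ?_
        exact Nat.le_mul_of_pos_left _ (Multiset.count_pos.2 (Multiset.mem_toFinset.1 hg))
    _ = (factors h).prod.totalDegree :=
        (totalDegree_multiset_prod_of_ne_zero fun g hg ↦ (irreducible_of_factor g hg).ne_zero).symm
    _ ≤ h.totalDegree := totalDegree_le_of_dvd_of_isDomain (factors_prod hh).dvd hh

end Factors

section Bezout

variable {σ K : Type*} [Field K]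

theorem exists_totalDegree_le_card_eval_ne_zero (T : Finset (σ → K)) {t : σ → K} (ht : t ∉ T) :
    ∃ p : MvPolynomial σ K, p.totalDegree ≤ T.card ∧ eval t p ≠ 0 ∧ ∀ s ∈ T, eval s p = 0 := by
  have h_coord : ∀ s : T, ∃ i, t i ≠ s.1 i :=
    fun s ↦ Function.ne_iff.1 fun h ↦ ht (h ▸ s.2)
  choose i hi using h_coord
  refine ⟨∏ s : T, (X (i s) - C (s.1 (i s))), ?_, ?_, fun s hs ↦ ?_⟩
  · calc _ ≤ ∑ _s : T, 1 := (totalDegree_finsetProd _ _).trans <| Finset.sum_le_sum fun s _ ↦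
          (totalDegree_sub _ _).trans (by simp [totalDegree_X])
      _ = T.card := by simp
  · simp [map_prod, Finset.prod_eq_zero_iff, sub_eq_zero, hi]
  · rw [map_prod]
    exact Finset.prod_eq_zero (Finset.mem_univ ⟨s, hs⟩) (by simp)

theorem finrank_idealOfDegreeLE_add_card_le [Finite σ] {I : Ideal (MvPolynomial σ K)}
    {T : Finset (σ → K)} (hI : ∀ p ∈ I, ∀ t ∈ T, eval t p = 0) {N : ℕ} (hN : T.card ≤ N) :
    finrank K (idealOfDegreeLE I N) + T.card ≤ finrank K (restrictTotalDegree σ K N) := by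
  classical
  let E : restrictTotalDegree σ K N →ₗ[K] (T → K) :=
    LinearMap.pi fun t ↦ (aeval t.1).toLinearMap ∘ₗ (restrictTotalDegree σ K N).subtype
  have hE : ∀ p t, E p t = eval t.1 p.1 := fun p t ↦ by simp [E, aeval_eq_eval]
  have h_surj : LinearMap.range E = ⊤ := by
    rw [eq_top_iff, ← (Pi.basisFun K T).span_eq, Submodule.span_le]
    rintro _ ⟨t, rfl⟩
    obtain ⟨p, hp_deg, hp_ne, hp_zero⟩ :=
      exists_totalDegree_le_card_eval_ne_zero (T.erase t.1) (Finset.notMem_erase _ _)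
    have hpN : p ∈ restrictTotalDegree σ K N :=
      (mem_restrictTotalDegree _ _ _).2 (hp_deg.trans ((Finset.card_erase_le).trans hN))
    refine ⟨(eval t.1 p)⁻¹ • ⟨p, hpN⟩, funext fun s ↦ ?_⟩
    rw [map_smul, Pi.smul_apply, hE]
    rcases eq_or_ne s t with rfl | hst
    · simp [hp_ne]
    · rw [hp_zero s (Finset.mem_erase.2 ⟨Subtype.coe_ne_coe.2 hst, s.2⟩)]
      simp [hst]
  have h_ker : (idealOfDegreeLE I N).comap (restrictTotalDegree σ K N).subtype ≤
      LinearMap.ker E := by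
    intro p hp
    ext t
    rw [hE]
    exact hI p (mem_idealOfDegreeLE.1 hp).1 t.1 t.2
  rw [← LinearMap.finrank_range_add_finrank_ker E, h_surj, finrank_top,
    finrank_fintype_fun_eq_card, Fintype.card_coe, add_comm,
    ← (Submodule.comapSubtypeEquivOfLe (idealOfDegreeLE_le I N)).finrank_eq]
  exact Nat.add_le_add_left (Submodule.finrank_mono h_ker) _

theorem card_le_totalDegree_mul_totalDegree {F G : MvPolynomial (Fin 2) K} (hF : F ≠ 0)
    (hG : G ≠ 0) (h : IsRelPrime F G) {T : Finset (Fin 2 → K)}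
    (hTF : ∀ t ∈ T, eval t F = 0) (hTG : ∀ t ∈ T, eval t G = 0) :
    T.card ≤ F.totalDegree * G.totalDegree := by
  have h_vanish : ∀ p ∈ Ideal.span {F, G}, ∀ t ∈ T, eval t p = 0 := by
    intro p hp t ht
    obtain ⟨u, v, rfl⟩ := Ideal.mem_span_pair.1 hp
    simp [hTF t ht, hTG t ht]
  have h_upper := finrank_idealOfDegreeLE_add_card_le h_vanish
    (N := F.totalDegree + G.totalDegree + T.card) (by omega)
  have h_lower := le_finrank_idealOfDegreeLE_span_pair hF hG h
    (N := F.totalDegree + G.totalDegree + T.card) (by omega)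
  generalize F.totalDegree = a at *
  generalize G.totalDegree = b at *
  rw [show a + b + T.card - a - b = T.card by omega, show a + b + T.card - a = b + T.card by omega,
    show a + b + T.card - b = a + T.card by omega] at h_lower
  have e₀ := two_mul_finrank_restrictTotalDegree (K := K) (a + b + T.card)
  have e₁ := two_mul_finrank_restrictTotalDegree (K := K) (b + T.card)
  have e₂ := two_mul_finrank_restrictTotalDegree (K := K) (a + T.card)
  have e₃ := two_mul_finrank_restrictTotalDegree (K := K) T.card
  nlinarith

theorem card_le_totalDegree_mul_totalDegree_of_common_factor {F G : MvPolynomial (Fin 2) K}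
    (hF : F ≠ 0) {T : Finset (Fin 2 → K)}
    (hTF : ∀ t ∈ T, eval t F = 0) (hTG : ∀ t ∈ T, eval t G = 0)
    (h : ∀ g, Irreducible g → g ∣ F → g ∣ G → ∀ t ∈ T, eval t g ≠ 0) :
    T.card ≤ F.totalDegree * G.totalDegree := by
  rcases eq_or_ne G 0 with rfl | hG
  · suffices hT : T = ∅ by simp [hT]
    refine Finset.eq_empty_of_forall_notMem fun t ht ↦ ?_
    obtain ⟨g, hg, hgt⟩ := exists_mem_factors_eval_eq_zero hF (hTF t ht)
    exact h g (UniqueFactorizationMonoid.irreducible_of_factor g hg)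
      (UniqueFactorizationMonoid.dvd_of_mem_factors hg) (dvd_zero g) t ht hgt
  obtain ⟨A, B, c, h_rel, rfl, rfl⟩ :=
    UniqueFactorizationMonoid.exists_reduced_factors F hF G
  have hc : ∀ t ∈ T, eval t c ≠ 0 := by
    intro t ht hct
    obtain ⟨g, hg, hgt⟩ := exists_mem_factors_eval_eq_zero (left_ne_zero_of_mul hF) hct
    have hgc := UniqueFactorizationMonoid.dvd_of_mem_factors hg
    exact h g (UniqueFactorizationMonoid.irreducible_of_factor g hg) (hgc.mul_right A)
      (hgc.mul_right B) t ht hgt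
  have h_cancel : ∀ p, (∀ t ∈ T, eval t (c * p) = 0) → ∀ t ∈ T, eval t p = 0 :=
    fun p hp t ht ↦ (mul_eq_zero.1 ((map_mul _ c p).symm.trans (hp t ht))).resolve_left (hc t ht)
  exact (card_le_totalDegree_mul_totalDegree (right_ne_zero_of_mul hF) (right_ne_zero_of_mul hG)
    h_rel (h_cancel A hTF) (h_cancel B hTG)).trans <| Nat.mul_le_mul
      (totalDegree_le_of_dvd_of_isDomain (dvd_mul_left A c) hF)
      (totalDegree_le_of_dvd_of_isDomain (dvd_mul_left B c) hG)

end Bezout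

section Derivatives

variable {σ K : Type*} [Field K]

theorem totalDegree_pderiv_lt {i : σ} {p : MvPolynomial σ K} (h : pderiv i p ≠ 0) :
    (pderiv i p).totalDegree < p.totalDegree := by
  have h_mem : ∀ m ∈ (pderiv i p).support, m.degree < p.totalDegree := by
    intro m hm
    rw [MvPolynomial.mem_support_iff, coeff_pderiv] at hm
    have h_le : (m + Finsupp.single i 1).degree ≤ p.totalDegree :=
      le_totalDegree (MvPolynomial.mem_support_iff.2 (left_ne_zero_of_mul hm))
    rw [map_add, Finsupp.degree_single] at h_le
    omega
  obtain ⟨m, hm⟩ := support_nonempty.2 h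
  exact (Finset.sup_lt_iff (Nat.zero_lt_of_lt (h_mem m hm))).2 h_mem

theorem totalDegree_pderiv_le (i : σ) (p : MvPolynomial σ K) :
    (pderiv i p).totalDegree ≤ p.totalDegree := by
  rcases eq_or_ne (pderiv i p) 0 with h | h
  · simp [h]
  · exact (totalDegree_pderiv_lt h).le

theorem exists_pderiv_ne_zero [CharZero K] {p : MvPolynomial σ K} (hp : 0 < p.totalDegree) :
    ∃ i, pderiv i p ≠ 0 := by
  obtain ⟨m, hm, i, hi⟩ : ∃ m ∈ p.support, ∃ i, m i ≠ 0 := by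
    by_contra! h
    exact hp.ne' (Finset.sup_eq_zero.2 fun m hm ↦ Finset.sum_eq_zero fun i _ ↦ h m hm i)
  refine ⟨i, fun h ↦ ?_⟩
  have h_coeff := congrArg (coeff (m - Finsupp.single i 1)) h
  rw [coeff_pderiv, coeff_zero, tsub_add_cancel_of_le
    (Finsupp.single_le_iff.2 (Nat.one_le_iff_ne_zero.2 hi))] at h_coeff
  exact mul_ne_zero (MvPolynomial.mem_support_iff.1 hm) (Nat.cast_add_one_ne_zero _) h_coeff

theorem exists_not_dvd_pderiv [CharZero K] {g : MvPolynomial σ K} (hg : Irreducible g) :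
    ∃ i, ¬ g ∣ pderiv i g := by
  obtain ⟨i, hi⟩ := exists_pderiv_ne_zero (totalDegree_pos_of_irreducible hg)
  exact ⟨i, fun h ↦ (totalDegree_pderiv_lt hi).not_ge (totalDegree_le_of_dvd_of_isDomain h hi)⟩

/-- The `i`-th partial derivative of `H * exp (∑ i, w i * X i)`, divided by the exponential
factor. -/
def twistedPDeriv (w : σ → K) (i : σ) (H : MvPolynomial σ K) : MvPolynomial σ K :=
  pderiv i H + C (w i) * H

theorem totalDegree_twistedPDeriv_le (w : σ → K) (i : σ) (H : MvPolynomial σ K) :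
    (twistedPDeriv w i H).totalDegree ≤ H.totalDegree :=
  (totalDegree_add _ _).trans <|
    max_le (totalDegree_pderiv_le i H) ((totalDegree_mul _ _).trans (by simp))

theorem twistedPDeriv_ne_zero {w : σ → K} {i : σ} {H : MvPolynomial σ K} (hw : w i ≠ 0)
    (hH : H ≠ 0) : twistedPDeriv w i H ≠ 0 := by
  intro h
  have h_eq : pderiv i H = C (-w i) * H := by
    rw [twistedPDeriv] at h
    rw [C_neg]
    linear_combination h
  have h_ne : (C (-w i) : MvPolynomial σ K) ≠ 0 := by simpa using hw
  have h_lt := totalDegree_pderiv_lt (h_eq ▸ mul_ne_zero h_ne hH)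
  rw [h_eq, totalDegree_mul_of_isDomain h_ne hH] at h_lt
  simp at h_lt

/-- The Jacobian of `g` and `H * exp (∑ i, w i * X i)` in the variables `i` and `j`, divided by the
exponential factor. -/
def twistedJacobian (w : σ → K) (i j : σ) (g H : MvPolynomial σ K) : MvPolynomial σ K :=
  pderiv i g * twistedPDeriv w j H - pderiv j g * twistedPDeriv w i H

theorem totalDegree_twistedJacobian_le (w : σ → K) (i j : σ) (g H : MvPolynomial σ K) :
    (twistedJacobian w i j g H).totalDegree ≤ g.totalDegree + H.totalDegree :=
  (totalDegree_sub _ _).trans <| max_le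
    ((totalDegree_mul _ _).trans
      (add_le_add (totalDegree_pderiv_le _ _) (totalDegree_twistedPDeriv_le _ _ _)))
    ((totalDegree_mul _ _).trans
      (add_le_add (totalDegree_pderiv_le _ _) (totalDegree_twistedPDeriv_le _ _ _)))

theorem exists_not_dvd_twistedJacobian {i j : σ} (hij : i ≠ j) {g H : MvPolynomial σ K}
    (hg : Irreducible g) (hi : ¬ g ∣ pderiv i g) (hH : ¬ g ∣ H) :
    ∃ w, ¬ g ∣ twistedJacobian w i j g H := by
  classical
  by_contra! h
  have h_diff : twistedJacobian (Pi.single j 1) i j g H - twistedJacobian 0 i j g H =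
      pderiv i g * H := by
    simp only [twistedJacobian, twistedPDeriv, Pi.single_eq_same, Pi.single_eq_of_ne hij,
      Pi.zero_apply, C_0, C_1]
    ring
  exact (hg.prime.dvd_or_dvd (h_diff ▸ dvd_sub (h _) (h _))).elim hi hH

theorem exists_twistedPDeriv_common_factor_dvd [Infinite K] {i j : σ} (hij : i ≠ j)
    {H : MvPolynomial σ K} (hH : H ≠ 0) :
    ∃ w, twistedPDeriv w i H ≠ 0 ∧
      ∀ g, Irreducible g → g ∣ twistedPDeriv w i H → g ∣ twistedPDeriv w j H → g ∣ H := by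
  classical
  set A := twistedPDeriv (1 : σ → K) i H
  have hA : A ≠ 0 := twistedPDeriv_ne_zero one_ne_zero hH
  let bad (g : MvPolynomial σ K) : Set K := {v | ¬ g ∣ H ∧ g ∣ pderiv j H + C v * H}
  have h_bad : ∀ g, (bad g).Subsingleton := by
    rintro g v ⟨hgH, hv⟩ v' ⟨-, hv'⟩
    by_contra h_ne
    have h_unit : IsUnit (C (v - v') : MvPolynomial σ K) :=
      (isUnit_iff_ne_zero.2 (sub_ne_zero.2 h_ne)).map C
    refine hgH ((h_unit.dvd_mul_left).1 ?_)
    rw [show C (v - v') * H = (pderiv j H + C v * H) - (pderiv j H + C v' * H) by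
      rw [C_sub]; ring]
    exact dvd_sub hv hv'
  have h_fin : (⋃ g ∈ (UniqueFactorizationMonoid.factors A).toFinset, bad g).Finite :=
    Set.Finite.biUnion (Finset.finite_toSet _) fun g _ ↦ (h_bad g).finite
  obtain ⟨v, hv⟩ := h_fin.exists_notMem
  have h_i : twistedPDeriv (Function.update 1 j v) i H = A := by
    simp [A, twistedPDeriv, Function.update_of_ne hij]
  have h_j : twistedPDeriv (Function.update 1 j v) j H = pderiv j H + C v * H := by
    simp [twistedPDeriv]
  refine ⟨Function.update 1 j v, h_i ▸ hA, fun g hg h_dvd_i h_dvd_j ↦ ?_⟩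
  rw [h_i] at h_dvd_i
  rw [h_j] at h_dvd_j
  obtain ⟨g', hg', h_assoc⟩ := UniqueFactorizationMonoid.exists_mem_factors_of_dvd hA hg h_dvd_i
  by_contra hgH
  refine hv (Set.mem_biUnion (Multiset.mem_toFinset.2 hg') ⟨?_, ?_⟩)
  · exact fun h ↦ hgH (h_assoc.dvd.trans h)
  · exact h_assoc.symm.dvd.trans h_dvd_j

end Derivatives

section CriticalPoints

variable {σ : Type*} [Fintype σ]

/-- The gradient at `q` of the function defined by a real polynomial, as a linear form. -/
def evalGradient (p : MvPolynomial σ ℝ) (q : σ → ℝ) : (σ → ℝ) →L[ℝ] ℝ :=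
  ∑ i, eval q (pderiv i p) • ContinuousLinearMap.proj i

theorem evalGradient_apply (p : MvPolynomial σ ℝ) (q x : σ → ℝ) :
    evalGradient p q x = ∑ i, eval q (pderiv i p) * x i := by
  simp [evalGradient]

theorem hasStrictFDerivAt_eval (p : MvPolynomial σ ℝ) (q : σ → ℝ) :
    HasStrictFDerivAt (fun x ↦ eval x p) (evalGradient p q) q := by
  classical
  induction p using MvPolynomial.induction_on with
  | C a =>
    simpa [evalGradient] using hasStrictFDerivAt_const (𝕜 := ℝ) a q
  | add p r hp hr =>
    simp only [map_add]
    refine (hp.fun_add hr).congr_fderiv ?_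
    ext x
    simp [evalGradient_apply, add_mul, Finset.sum_add_distrib]
  | mul_X p i hp =>
    have h_proj : HasStrictFDerivAt (fun x : σ → ℝ ↦ x i) (ContinuousLinearMap.proj i) q :=
      (ContinuousLinearMap.proj i : (σ → ℝ) →L[ℝ] ℝ).hasStrictFDerivAt
    simp only [map_mul, eval_X]
    refine (hp.fun_mul h_proj).congr_fderiv ?_
    ext x
    simp only [add_apply, smul_apply,
      ContinuousLinearMap.proj_apply, smul_eq_mul, evalGradient_apply, Derivation.leibniz,
      pderiv_X, map_add, map_mul, eval_X, add_mul, Finset.sum_add_distrib, Finset.mul_sum]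
    congr 1
    · rw [Finset.sum_eq_single i (fun j _ hj ↦ by simp [Pi.single_eq_of_ne' hj]) (by simp)]
      simp
    · exact Finset.sum_congr rfl fun j _ ↦ (mul_assoc _ _ _).symm

/-- The square of `H * exp (∑ i, w i * X i)`, as a function on `σ → ℝ`. -/
def expWeight (w : σ → ℝ) (H : MvPolynomial σ ℝ) (q : σ → ℝ) : ℝ :=
  eval q H ^ 2 * Real.exp (2 * ∑ i, w i * q i)

theorem continuous_expWeight (w : σ → ℝ) (H : MvPolynomial σ ℝ) : Continuous (expWeight w H) := by
  have := MvPolynomial.continuous_eval H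
  unfold expWeight
  fun_prop

theorem expWeight_pos_iff {w : σ → ℝ} {H : MvPolynomial σ ℝ} {q : σ → ℝ} :
    0 < expWeight w H q ↔ eval q H ≠ 0 := by
  rw [expWeight, mul_pos_iff_of_pos_right (Real.exp_pos _), sq_pos_iff]

theorem hasStrictFDerivAt_expWeight (w : σ → ℝ) (H : MvPolynomial σ ℝ) (q : σ → ℝ) :
    HasStrictFDerivAt (expWeight w H)
      ((2 * eval q H * Real.exp (2 * ∑ i, w i * q i)) •
        ∑ i, eval q (twistedPDeriv w i H) •
          (ContinuousLinearMap.proj i : (σ → ℝ) →L[ℝ] ℝ)) q := by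
  have h_proj : ∀ i, HasStrictFDerivAt (fun x : σ → ℝ ↦ x i) (ContinuousLinearMap.proj i) q :=
    fun i ↦ (ContinuousLinearMap.proj i : (σ → ℝ) →L[ℝ] ℝ).hasStrictFDerivAt
  have h_exp := ((HasStrictFDerivAt.fun_sum fun i (_ : i ∈ Finset.univ) ↦
    (h_proj i).const_mul (w i)).const_mul 2).exp
  refine (((hasStrictFDerivAt_eval H q).pow 2).fun_mul h_exp).congr_fderiv ?_
  ext x
  simp only [twistedPDeriv, add_apply, smul_apply,
    ContinuousLinearMap.proj_apply, smul_eq_mul, evalGradient_apply, sum_apply,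
    map_add, map_mul, eval_C, add_mul, Finset.sum_add_distrib, Finset.mul_sum, mul_add]
  rw [add_comm]
  congr 1 <;> exact Finset.sum_congr rfl fun i _ ↦ by ring

theorem eval_twistedPDeriv_eq_zero_of_isLocalMax {w : σ → ℝ} {H : MvPolynomial σ ℝ} {q : σ → ℝ}
    (hq : eval q H ≠ 0) (h_max : IsLocalMax (expWeight w H) q) (i : σ) :
    eval q (twistedPDeriv w i H) = 0 := by
  classical
  have h_crit := h_max.hasFDerivAt_eq_zero (hasStrictFDerivAt_expWeight w H q).hasFDerivAt
  have h_i := congrArg (fun l ↦ l (Pi.single i 1)) h_crit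
  simpa [Pi.single_apply, hq, (Real.exp_pos _).ne'] using h_i

theorem eval_twistedJacobian_eq_zero_of_isLocalMaxOn {w : σ → ℝ} {g H : MvPolynomial σ ℝ}
    {q : σ → ℝ} (hg : eval q g = 0) (hq : eval q H ≠ 0)
    (h_max : IsLocalMaxOn (expWeight w H) {x | eval x g = 0} q) (i j : σ) :
    eval q (twistedJacobian w i j g H) = 0 := by
  classical
  have h_extr : IsLocalExtrOn (expWeight w H) {x | eval x g = eval q g} q :=
    Or.inr (by rwa [hg])
  obtain ⟨α, β, hαβ, h_lin⟩ := h_extr.exists_multipliers_of_hasStrictFDerivAt_1d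
    (hasStrictFDerivAt_eval g q) (hasStrictFDerivAt_expWeight w H q)
  set E := 2 * eval q H * Real.exp (2 * ∑ i, w i * q i)
  have hE0 : E ≠ 0 := mul_ne_zero (mul_ne_zero two_ne_zero hq) (Real.exp_pos _).ne'
  have h_coord : ∀ k, α * eval q (pderiv k g) + β * (E * eval q (twistedPDeriv w k H)) = 0 := by
    intro k
    have h_k := congrArg (fun l ↦ l (Pi.single k 1)) h_lin
    simpa [evalGradient_apply, Pi.single_apply] using h_k
  have h_eval : eval q (twistedJacobian w i j g H) =
      eval q (pderiv i g) * eval q (twistedPDeriv w j H) -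
        eval q (pderiv j g) * eval q (twistedPDeriv w i H) := by
    simp [twistedJacobian]
  have hβ : β * E * eval q (twistedJacobian w i j g H) = 0 := by
    rw [h_eval]
    linear_combination eval q (pderiv i g) * h_coord j - eval q (pderiv j g) * h_coord i
  have hα : α * eval q (twistedJacobian w i j g H) = 0 := by
    rw [h_eval]
    linear_combination
      eval q (twistedPDeriv w j H) * h_coord i - eval q (twistedPDeriv w i H) * h_coord j
  by_contra h
  refine hαβ (Prod.ext ?_ ?_)
  · exact (mul_eq_zero.1 hα).resolve_right h
  · exact ((mul_eq_zero.1 ((mul_eq_zero.1 hβ).resolve_right h)).resolve_right hE0)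

end CriticalPoints

section SignClasses

variable {σ : Type*}

/-- Every polynomial in `L` is nonzero at `p` and at `q`, with the same sign. -/
def SameSign (L : List (MvPolynomial σ ℝ)) (p q : σ → ℝ) : Prop :=
  ∀ f ∈ L, 0 < eval p f * eval q f

theorem SameSign.symm {L : List (MvPolynomial σ ℝ)} {p q : σ → ℝ} (h : SameSign L p q) :
    SameSign L q p :=
  fun f hf ↦ mul_comm (eval p f) (eval q f) ▸ h f hf

theorem SameSign.trans {L : List (MvPolynomial σ ℝ)} {p q r : σ → ℝ} (h : SameSign L p q)
    (h' : SameSign L q r) : SameSign L p r := by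
  intro f hf
  refine pos_of_mul_pos_left ?_ (sq_nonneg (eval q f))
  calc 0 < (eval p f * eval q f) * (eval q f * eval r f) := mul_pos (h f hf) (h' f hf)
    _ = (eval p f * eval r f) * eval q f ^ 2 := by ring

theorem eval_list_prod_ne_zero_iff {L : List (MvPolynomial σ ℝ)} {q : σ → ℝ} :
    eval q L.prod ≠ 0 ↔ ∀ f ∈ L, eval q f ≠ 0 := by
  simp [← List.prod_hom, List.prod_eq_zero_iff]

/-- The points of `T` lie off the zero sets of the polynomials in `L` and have pairwise distinct
sign patterns under `L`. -/
def SignSeparated (L : List (MvPolynomial σ ℝ)) (T : Finset (σ → ℝ)) : Prop :=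
  (∀ t ∈ T, ∀ f ∈ L, eval t f ≠ 0) ∧ ∀ s ∈ T, ∀ t ∈ T, SameSign L s t → s = t

theorem SignSeparated.subset {L : List (MvPolynomial σ ℝ)} {S T : Finset (σ → ℝ)}
    (h : SignSeparated L T) (hST : S ⊆ T) : SignSeparated L S :=
  ⟨fun t ht ↦ h.1 t (hST ht), fun s hs t ht ↦ h.2 s (hST hs) t (hST ht)⟩

theorem SignSeparated.cons {L : List (MvPolynomial σ ℝ)} {T : Finset (σ → ℝ)}
    (h : SignSeparated L T) {b : MvPolynomial σ ℝ} (hb : ∀ t ∈ T, eval t b ≠ 0) :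
    SignSeparated (b :: L) T :=
  ⟨fun t ht ↦ List.forall_mem_cons.2 ⟨hb t ht, h.1 t ht⟩, fun s hs t ht hst ↦
    h.2 s hs t ht fun f hf ↦ hst f (List.mem_cons_of_mem _ hf)⟩

theorem SignSeparated.card_le {L : List (MvPolynomial σ ℝ)} {T : Finset (σ → ℝ)}
    (h : SignSeparated L T) {Q : (σ → ℝ) → Prop} {B : ℕ}
    (hQ : ∀ t ∈ T, ∃ q, SameSign L t q ∧ Q q)
    (hB : ∀ T' : Finset (σ → ℝ), (∀ q ∈ T', Q q) → T'.card ≤ B) : T.card ≤ B := by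
  classical
  choose! f hf using hQ
  have h_inj : Set.InjOn f T := fun s hs t ht hst ↦
    h.2 s hs t ht ((hf s hs).1.trans (hst ▸ (hf t ht).1.symm))
  rw [← Finset.card_image_of_injOn h_inj]
  exact hB _ fun q hq ↦ by
    obtain ⟨t, ht, rfl⟩ := Finset.mem_image.1 hq
    exact (hf t ht).2

/-- The closed region where each polynomial of `L` vanishes or has the same sign as at `t`. -/
def signCell (L : List (MvPolynomial σ ℝ)) (t : σ → ℝ) : Set (σ → ℝ) :=
  {q | ∀ f ∈ L, 0 ≤ eval t f * eval q f}

theorem isClosed_signCell (L : List (MvPolynomial σ ℝ)) (t : σ → ℝ) : IsClosed (signCell L t) := by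
  simp only [signCell, Set.ofPred_forall]
  exact isClosed_biInter fun f _ ↦ isClosed_le continuous_const
    (continuous_const.mul (MvPolynomial.continuous_eval f))

theorem isOpen_setOf_sameSign (L : List (MvPolynomial σ ℝ)) (t : σ → ℝ) :
    IsOpen {q | SameSign L t q} := by
  simp only [SameSign, Set.ofPred_forall]
  exact L.finite_toSet.isOpen_biInter fun f _ ↦ isOpen_lt continuous_const
    (continuous_const.mul (MvPolynomial.continuous_eval f))

theorem exists_sameSign_isLocalMaxOn [Fintype σ] {L : List (MvPolynomial σ ℝ)} {t : σ → ℝ}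
    (h_cell : IsCompact (signCell L t)) (ht : ∀ f ∈ L, eval t f ≠ 0) {Z : Set (σ → ℝ)}
    (hZ : IsClosed Z) (htZ : t ∈ Z) (w : σ → ℝ) :
    ∃ q ∈ Z, SameSign L t q ∧ eval q L.prod ≠ 0 ∧ IsLocalMaxOn (expWeight w L.prod) Z q := by
  have ht_cell : t ∈ signCell L t := fun f _ ↦ mul_self_nonneg _
  obtain ⟨q, ⟨hq_cell, hqZ⟩, h_max⟩ := (h_cell.inter_right hZ).exists_isMaxOn ⟨t, ht_cell, htZ⟩
    (continuous_expWeight w L.prod).continuousOn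
  have hq : eval q L.prod ≠ 0 := expWeight_pos_iff.1 <|
    (expWeight_pos_iff.2 (eval_list_prod_ne_zero_iff.2 ht)).trans_le (h_max ⟨ht_cell, htZ⟩)
  have h_same : SameSign L t q := fun f hf ↦ (hq_cell f hf).lt_of_ne'
    (mul_ne_zero (ht f hf) (eval_list_prod_ne_zero_iff.1 hq f hf))
  refine ⟨q, hqZ, h_same, hq, ?_⟩
  filter_upwards [mem_nhdsWithin_of_mem_nhds ((isOpen_setOf_sameSign L t).mem_nhds h_same),
    self_mem_nhdsWithin] with x hx hxZ
  exact h_max ⟨fun f hf ↦ (hx f hf).le, hxZ⟩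

theorem exists_isCompact_nonneg [Finite σ] (T : Finset (σ → ℝ)) :
    ∃ b : MvPolynomial σ ℝ, b.totalDegree ≤ 2 ∧ IsCompact {q | 0 ≤ eval q b} ∧
      ∀ t ∈ T, 0 < eval t b := by
  have := Fintype.ofFinite σ
  set M : ℝ := ∑ t ∈ T, ∑ i, t i ^ 2 + 1
  have hM : 1 ≤ M := le_add_of_nonneg_left (by positivity)
  have h_eval : ∀ q : σ → ℝ, eval q (C M - ∑ i, X i ^ 2) = M - ∑ i, q i ^ 2 := by simp
  refine ⟨C M - ∑ i, X i ^ 2, ?_, ?_, fun t ht ↦ ?_⟩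
  · refine (totalDegree_sub _ _).trans (max_le (by simp) ?_)
    exact totalDegree_finsetSum_le fun i _ ↦ (totalDegree_X_pow i 2).le
  · refine Metric.isCompact_of_isClosed_isBounded
      (isClosed_le continuous_const (MvPolynomial.continuous_eval _)) ?_
    refine (Metric.isBounded_closedBall (x := (0 : σ → ℝ)) (r := M)).subset fun q hq ↦ ?_
    have hq' : 0 ≤ eval q (C M - ∑ i, X i ^ 2) := hq
    rw [h_eval] at hq'
    rw [mem_closedBall_zero_iff, pi_norm_le_iff_of_nonneg (by linarith)]
    intro i
    have h_i := Finset.single_le_sum (f := fun i ↦ q i ^ 2) (fun i _ ↦ sq_nonneg (q i))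
      (Finset.mem_univ i)
    exact abs_le_of_sq_le_sq (by nlinarith) (by linarith)
  · have h_t := Finset.single_le_sum (f := fun t : σ → ℝ ↦ ∑ i, t i ^ 2)
      (fun t _ ↦ Finset.sum_nonneg fun i _ ↦ sq_nonneg (t i)) ht
    rw [h_eval]
    linarith

theorem SignSeparated.exists_cons_isCompact_signCell [Finite σ] {L : List (MvPolynomial σ ℝ)}
    {T : Finset (σ → ℝ)} (h : SignSeparated L T) :
    ∃ b : MvPolynomial σ ℝ, SignSeparated (b :: L) T ∧ (∀ t ∈ T, IsCompact (signCell (b :: L) t)) ∧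
      (b :: L).prod.totalDegree ≤ L.prod.totalDegree + 2 := by
  obtain ⟨b, hb_deg, hb_compact, hb_pos⟩ := exists_isCompact_nonneg T
  refine ⟨b, h.cons fun t ht ↦ (hb_pos t ht).ne', fun t ht ↦ ?_, ?_⟩
  · refine hb_compact.of_isClosed_subset (isClosed_signCell _ t) fun q hq ↦ ?_
    exact nonneg_of_mul_nonneg_right (hq b List.mem_cons_self) (hb_pos t ht)
  · rw [List.prod_cons]
    exact (totalDegree_mul _ _).trans (by omega)

theorem SignSeparated.card_le_of_irreducible {L : List (MvPolynomial (Fin 2) ℝ)}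
    {T : Finset (Fin 2 → ℝ)} (h : SignSeparated L T) (h_cell : ∀ t ∈ T, IsCompact (signCell L t))
    {g : MvPolynomial (Fin 2) ℝ} (hg : Irreducible g) (hTg : ∀ t ∈ T, eval t g = 0) :
    T.card ≤ g.totalDegree * (g.totalDegree + L.prod.totalDegree) := by
  rcases T.eq_empty_or_nonempty with rfl | ⟨t₀, ht₀⟩
  · simp
  have hgL : ¬ g ∣ L.prod := fun hd ↦ eval_list_prod_ne_zero_iff.2 (h.1 t₀ ht₀)
    (eval_eq_zero_of_dvd hd (hTg t₀ ht₀))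
  obtain ⟨i, hi⟩ := exists_not_dvd_pderiv hg
  obtain ⟨j, hij⟩ := exists_ne i
  obtain ⟨w, hw⟩ := exists_not_dvd_twistedJacobian hij.symm hg hi hgL
  set J := twistedJacobian w i j g L.prod
  have hJ : J ≠ 0 := fun hJ ↦ hw (hJ ▸ dvd_zero g)
  refine h.card_le (Q := fun q ↦ eval q g = 0 ∧ eval q J = 0) (fun t ht ↦ ?_) fun T' hT' ↦ ?_
  · have hZ : IsClosed {q : Fin 2 → ℝ | eval q g = 0} :=
      isClosed_eq (MvPolynomial.continuous_eval g) continuous_const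
    obtain ⟨q, hqg, h_same, hq, h_max⟩ :=
      exists_sameSign_isLocalMaxOn (h_cell t ht) (h.1 t ht) hZ (hTg t ht) w
    exact ⟨q, h_same, hqg, eval_twistedJacobian_eq_zero_of_isLocalMaxOn hqg hq h_max i j⟩
  · exact (card_le_totalDegree_mul_totalDegree hg.ne_zero hJ (hg.isRelPrime_iff_not_dvd.2 hw)
      (fun q hq ↦ (hT' q hq).1) (fun q hq ↦ (hT' q hq).2)).trans
      (Nat.mul_le_mul_left _ (totalDegree_twistedJacobian_le w i j g L.prod))

theorem SignSeparated.card_le_of_eval_eq_zero {L : List (MvPolynomial (Fin 2) ℝ)}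
    {T : Finset (Fin 2 → ℝ)} (h : SignSeparated L T) {Φ : MvPolynomial (Fin 2) ℝ} (hΦ : Φ ≠ 0)
    (hTΦ : ∀ t ∈ T, eval t Φ = 0) :
    T.card ≤ Φ.totalDegree * (Φ.totalDegree + L.prod.totalDegree + 2) := by
  classical
  obtain ⟨b, h_sep, h_cell, h_deg⟩ := h.exists_cons_isCompact_signCell
  set S := (UniqueFactorizationMonoid.factors Φ).toFinset
  have h_cover : T ⊆ S.biUnion fun g ↦ {t ∈ T | eval t g = 0} := by
    intro t ht
    obtain ⟨g, hg, hgt⟩ := exists_mem_factors_eval_eq_zero hΦ (hTΦ t ht)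
    exact Finset.mem_biUnion.2
      ⟨g, Multiset.mem_toFinset.2 hg, Finset.mem_filter.2 ⟨ht, hgt⟩⟩
  have h_factor : ∀ g ∈ S, {t ∈ T | eval t g = 0}.card ≤
      g.totalDegree * (Φ.totalDegree + L.prod.totalDegree + 2) := by
    intro g hg
    have hg' := Multiset.mem_toFinset.1 hg
    have h_le := totalDegree_le_of_dvd_of_isDomain
      (UniqueFactorizationMonoid.dvd_of_mem_factors hg') hΦ
    refine ((h_sep.subset (Finset.filter_subset _ T)).card_le_of_irreducible
      (fun t ht ↦ h_cell t (Finset.mem_filter.1 ht).1)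
      (UniqueFactorizationMonoid.irreducible_of_factor g hg')
      (fun t ht ↦ (Finset.mem_filter.1 ht).2)).trans (Nat.mul_le_mul_left _ (by omega))
  calc T.card ≤ ∑ g ∈ S, {t ∈ T | eval t g = 0}.card :=
        (Finset.card_le_card h_cover).trans Finset.card_biUnion_le
    _ ≤ ∑ g ∈ S, g.totalDegree * (Φ.totalDegree + L.prod.totalDegree + 2) :=
        Finset.sum_le_sum h_factor
    _ = (∑ g ∈ S, g.totalDegree) * (Φ.totalDegree + L.prod.totalDegree + 2) :=
        (Finset.sum_mul _ _ _).symm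
    _ ≤ Φ.totalDegree * (Φ.totalDegree + L.prod.totalDegree + 2) :=
        Nat.mul_le_mul_right _ (sum_totalDegree_toFinset_factors_le hΦ)

theorem SignSeparated.card_le_sq {L : List (MvPolynomial (Fin 2) ℝ)} {T : Finset (Fin 2 → ℝ)}
    (h : SignSeparated L T) : T.card ≤ (L.prod.totalDegree + 2) ^ 2 := by
  rcases T.eq_empty_or_nonempty with rfl | ⟨t₀, ht₀⟩
  · simp
  obtain ⟨b, h_sep, h_cell, h_deg⟩ := h.exists_cons_isCompact_signCell
  set H := (b :: L).prod
  have hH : H ≠ 0 := fun hH ↦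
    eval_list_prod_ne_zero_iff.2 (h_sep.1 t₀ ht₀) (show eval t₀ H = 0 by rw [hH, map_zero])
  obtain ⟨w, h₀, h_common⟩ :=
    exists_twistedPDeriv_common_factor_dvd (Fin.zero_ne_one (n := 0)) hH
  refine h_sep.card_le (Q := fun q ↦ eval q H ≠ 0 ∧ ∀ i, eval q (twistedPDeriv w i H) = 0)
    (fun t ht ↦ ?_) fun T' hT' ↦ ?_
  · obtain ⟨q, -, h_same, hq, h_max⟩ := exists_sameSign_isLocalMaxOn (h_cell t ht)
      (h_sep.1 t ht) isClosed_univ (Set.mem_univ t) w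
    rw [isLocalMaxOn_univ_iff] at h_max
    exact ⟨q, h_same, hq, eval_twistedPDeriv_eq_zero_of_isLocalMax hq h_max⟩
  · refine (card_le_totalDegree_mul_totalDegree_of_common_factor h₀
      (fun q hq ↦ (hT' q hq).2 0) (fun q hq ↦ (hT' q hq).2 1) fun g hg hg₀ hg₁ q hq hgq ↦
        (hT' q hq).1 (eval_eq_zero_of_dvd (h_common g hg hg₀ hg₁) hgq)).trans ?_
    rw [sq]
    exact Nat.mul_le_mul ((totalDegree_twistedPDeriv_le w 0 H).trans h_deg)
      ((totalDegree_twistedPDeriv_le w 1 H).trans h_deg)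

end SignClasses

section TransversalDeterminants

open Finset

variable {ι α K : Type*}

theorem three_mul_sum_card_filter_mul_pos_le [CommRing K] [LinearOrder K] [IsStrictOrderedRing K]
    (A : Finset α) {B : α → α → K} (hB : ∀ x y, B x y = -B y x) {N : α → Prop} [DecidablePred N]
    (hN : ∀ x, ¬ N x → ∀ y, B x y = 0) :
    3 * ∑ x ∈ A, #{p ∈ A ×ˢ A | 0 < B x p.1 * B x p.2} ≤ 2 * #A ^ 2 * #{x ∈ A | N x} := by
  let s (x y w : α) : ℕ := if 0 < B x y * B x w then 1 else 0
  let n (x : α) : ℕ := if N x then 1 else 0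
  have hn : ∀ {x y}, B x y ≠ 0 → n x = 1 := fun {x y} h ↦ if_pos (by_contra fun hx ↦ h (hN x hx y))
  have h_nonneg : ∀ x y w, B x y * B x w * (B y x * B y w) * (B w x * B w y) ≤ 0 := by
    intro x y w
    rw [hB y x, hB w x, hB w y]
    linarith [sq_nonneg (B x y * B x w * B y w)]
  have h_triple : ∀ x y w, 3 * (s x y w + s y x w + s w x y) ≤ 2 * (n x + n y + n w) := by
    intro x y w
    have h_all : ∀ {x y w}, 0 < B x y * B x w → n x = 1 ∧ n y = 1 ∧ n w = 1 := by
      intro x y w h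
      have hxy := left_ne_zero_of_mul h.ne'
      have hxw := right_ne_zero_of_mul h.ne'
      exact ⟨hn hxy, hn (neg_ne_zero.1 (hB x y ▸ hxy)), hn (neg_ne_zero.1 (hB x w ▸ hxw))⟩
    by_cases hx : 0 < B x y * B x w <;> by_cases hy : 0 < B y x * B y w <;>
      by_cases hw : 0 < B w x * B w y
    · exact absurd (h_nonneg x y w) (mul_pos (mul_pos hx hy) hw).not_ge
    all_goals
      simp only [s, hx, hy, hw, if_true, if_false]
      first
        | omega
        | have := h_all hx; omega
        | have := h_all hy; omega
        | have := h_all hw; omega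
  have h_card : ∀ x, #{p ∈ A ×ˢ A | 0 < B x p.1 * B x p.2} = ∑ y ∈ A, ∑ w ∈ A, s x y w := by
    intro x
    rw [card_filter, sum_product]
  have h_swap : ∑ x ∈ A, ∑ y ∈ A, ∑ w ∈ A, s y x w = ∑ x ∈ A, ∑ y ∈ A, ∑ w ∈ A, s x y w :=
    sum_comm
  have h_rotate : ∑ x ∈ A, ∑ y ∈ A, ∑ w ∈ A, s w x y = ∑ x ∈ A, ∑ y ∈ A, ∑ w ∈ A, s x y w :=
    (sum_congr rfl fun x _ ↦ sum_comm).trans sum_comm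
  have h_sum := sum_le_sum fun x (_ : x ∈ A) ↦ sum_le_sum fun y (_ : y ∈ A) ↦
    sum_le_sum fun w (_ : w ∈ A) ↦ h_triple x y w
  simp only [← mul_sum, sum_add_distrib, h_swap, h_rotate, sum_const, smul_eq_mul] at h_sum
  simp only [h_card, card_filter]
  change 3 * _ ≤ 2 * #A ^ 2 * ∑ x ∈ A, n x
  linarith

theorem card_filter_mul_pos [CommRing K] [LinearOrder K] [IsStrictOrderedRing K] (A : Finset α)
    (f : α → K) :
    #{p ∈ A ×ˢ A | 0 < f p.1 * f p.2} = #{x ∈ A | 0 < f x} ^ 2 + #{x ∈ A | f x < 0} ^ 2 := by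
  classical
  have h_union : {p ∈ A ×ˢ A | 0 < f p.1 * f p.2} =
      {x ∈ A | 0 < f x} ×ˢ {x ∈ A | 0 < f x} ∪ {x ∈ A | f x < 0} ×ˢ {x ∈ A | f x < 0} := by
    ext p
    simp only [mem_filter, mem_product, mem_union, mul_pos_iff]
    tauto
  have h_disjoint : Disjoint {x ∈ A | 0 < f x} {x ∈ A | f x < 0} :=
    disjoint_filter.2 fun x _ h h' ↦ lt_asymm h h'
  rw [h_union, card_union_of_disjoint (disjoint_product.2 (.inl h_disjoint)), card_product,
    card_product, sq, sq]

variable [Fintype ι] [DecidableEq ι]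

theorem sum_piFinset_sum_update {M : Type*} [AddCommMonoid M] (A : ι → Finset α) (i : ι)
    (g : (ι → α) → M) :
    ∑ a ∈ Fintype.piFinset A, ∑ x ∈ A i, g (Function.update a i x) =
      #(A i) • ∑ a ∈ Fintype.piFinset A, g a := by
  have h_update : ∀ {a x}, a ∈ Fintype.piFinset A → x ∈ A i →
      Function.update a i x ∈ Fintype.piFinset A := by
    intro a x ha hx
    rw [Fintype.mem_piFinset] at ha ⊢
    intro j
    rcases eq_or_ne j i with rfl | hj
    · simpa using hx
    · simpa [Function.update_of_ne hj] using ha j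
  rw [← sum_product', ← sum_const, ← sum_product']
  refine sum_bij' (fun p _ ↦ (p.1 i, Function.update p.1 i p.2))
    (fun p _ ↦ (Function.update p.2 i p.1, p.2 i)) ?_ ?_ ?_ ?_ ?_
  · rintro ⟨a, x⟩ h
    rw [mem_product] at h ⊢
    exact ⟨Fintype.mem_piFinset.1 h.1 i, h_update h.1 h.2⟩
  · rintro ⟨x, a⟩ h
    rw [mem_product] at h ⊢
    exact ⟨h_update h.2 h.1, Fintype.mem_piFinset.1 h.2 i⟩
  all_goals simp

section LinearForm

variable [CommRing K]

/-- The rows of a square matrix: row `some i` is the vector that the family `v i` attaches to the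
point `a i`, and row `none` is `z`. -/
def transversalRows (v : ι → α → Option ι → K) (a : ι → α) (z : Option ι → K) :
    Option ι → Option ι → K :=
  fun r ↦ r.elim z fun i ↦ v i (a i)

/-- The determinant of the matrix with rows `transversalRows v a z`, as a linear form in `z`. -/
def transversalDet (v : ι → α → Option ι → K) (a : ι → α) : (Option ι → K) →ₗ[K] K :=
  Matrix.detRowAlternating.toMultilinearMap.toLinearMap (transversalRows v a 0) none

theorem transversalDet_apply (v : ι → α → Option ι → K) (a : ι → α) (z : Option ι → K) :
    transversalDet v a z = (Matrix.of (transversalRows v a z)).det := by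
  rw [transversalDet, MultilinearMap.toLinearMap_apply]
  refine congrArg Matrix.det (funext fun r ↦ ?_)
  change _ = transversalRows v a z r
  cases r <;> simp [transversalRows]

theorem transversalDet_update_swap (v : ι → α → Option ι → K) (a : ι → α) (i : ι) (x y : α) :
    transversalDet v (Function.update a i x) (v i y) =
      -transversalDet v (Function.update a i y) (v i x) := by
  have h := AlternatingMap.map_swap Matrix.detRowAlternating
    (transversalRows v (Function.update a i x) (v i y)) (Option.some_ne_none i).symm
  rw [transversalDet_apply, transversalDet_apply, ← neg_eq_iff_eq_neg]
  refine h.symm.trans (congrArg Matrix.det (funext fun r ↦ ?_))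
  change _ = transversalRows v (Function.update a i y) (v i x) r
  rcases r with _ | j
  · simp [transversalRows]
  · rcases eq_or_ne j i with rfl | hj
    · simp [transversalRows]
    · have h_fix : Equiv.swap none (some i) (some j) = some j :=
        Equiv.swap_apply_of_ne_of_ne (Option.some_ne_none j) (by simpa using hj)
      simp [transversalRows, h_fix, Function.update_of_ne hj]

end LinearForm

variable [Field K] [LinearOrder K] [IsStrictOrderedRing K]

open Classical in
theorem three_mul_sum_card_filter_transversalDet_mul_pos_le (A : ι → Finset α)
    (v : ι → α → Option ι → K) (i : ι) :
    3 * ∑ a ∈ Fintype.piFinset A,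
        #{p ∈ A i ×ˢ A i | 0 < transversalDet v a (v i p.1) * transversalDet v a (v i p.2)} ≤
      2 * #(A i) ^ 2 * #{a ∈ Fintype.piFinset A | transversalDet v a ≠ 0} := by
  rcases (A i).eq_empty_or_nonempty with h_empty | h_ne
  · simp [h_empty]
  refine Nat.le_of_mul_le_mul_left ?_ h_ne.card_pos
  calc #(A i) * (3 * ∑ a ∈ Fintype.piFinset A,
        #{p ∈ A i ×ˢ A i | 0 < transversalDet v a (v i p.1) * transversalDet v a (v i p.2)})
      = ∑ a ∈ Fintype.piFinset A, 3 * ∑ x ∈ A i, #{p ∈ A i ×ˢ A i |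
          0 < transversalDet v (Function.update a i x) (v i p.1) *
            transversalDet v (Function.update a i x) (v i p.2)} := by
        rw [mul_left_comm, ← smul_eq_mul #(A i), ← sum_piFinset_sum_update A i, mul_sum]
    _ ≤ ∑ a ∈ Fintype.piFinset A,
          2 * #(A i) ^ 2 * #{x ∈ A i | transversalDet v (Function.update a i x) ≠ 0} := by
        refine sum_le_sum fun a _ ↦ three_mul_sum_card_filter_mul_pos_le (A i)
          (transversalDet_update_swap v a i) fun x hx y ↦ ?_
        rw [not_not.1 hx, LinearMap.zero_apply]
    _ = #(A i) * (2 * #(A i) ^ 2 * #{a ∈ Fintype.piFinset A | transversalDet v a ≠ 0}) := by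
        simp only [card_filter]
        rw [← mul_sum, sum_piFinset_sum_update A i fun a ↦ if transversalDet v a ≠ 0 then 1 else 0,
          smul_eq_mul, mul_left_comm]

-- The form is `transversalDet v a` for a transversal `a`; antisymmetry makes a third of all pairs
-- of points of each `A i` lie on opposite sides, on average over `a`.
theorem exists_sum_card_cube_le_of_transversalDet_ne_zero (A : ι → Finset α)
    (v : ι → α → Option ι → K) {a₀ : ι → α} (ha₀ : ∀ i, a₀ i ∈ A i)
    (h_det : transversalDet v a₀ ≠ 0) :
    ∃ c : Option ι → K, c ≠ 0 ∧
      3 * ∑ i, (#{p ∈ A i | 0 < c ⬝ᵥ v i p} ^ 3 + #{p ∈ A i | c ⬝ᵥ v i p < 0} ^ 3) ≤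
        2 * ∑ i, #(A i) ^ 3 := by
  classical
  let pairs (i : ι) (a : ι → α) : ℕ :=
    #{p ∈ A i ×ˢ A i | 0 < transversalDet v a (v i p.1) * transversalDet v a (v i p.2)}
  have h_avg : ∑ a ∈ Fintype.piFinset A with transversalDet v a ≠ 0,
      3 * ∑ i, #(A i) * pairs i a ≤
        ∑ a ∈ Fintype.piFinset A with transversalDet v a ≠ 0, 2 * ∑ i, #(A i) ^ 3 := by
    calc ∑ a ∈ Fintype.piFinset A with transversalDet v a ≠ 0, 3 * ∑ i, #(A i) * pairs i a
        ≤ ∑ a ∈ Fintype.piFinset A, 3 * ∑ i, #(A i) * pairs i a :=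
          sum_le_sum_of_subset (filter_subset _ _)
      _ = ∑ i, #(A i) * (3 * ∑ a ∈ Fintype.piFinset A, pairs i a) := by
          simp only [mul_sum, mul_left_comm 3]
          exact sum_comm
      _ ≤ ∑ i, #(A i) *
            (2 * #(A i) ^ 2 * #{a ∈ Fintype.piFinset A | transversalDet v a ≠ 0}) :=
          sum_le_sum fun i _ ↦ Nat.mul_le_mul_left _
            (three_mul_sum_card_filter_transversalDet_mul_pos_le A v i)
      _ = ∑ a ∈ Fintype.piFinset A with transversalDet v a ≠ 0, 2 * ∑ i, #(A i) ^ 3 := by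
          rw [sum_const, smul_eq_mul, mul_left_comm, mul_sum, mul_sum]
          exact sum_congr rfl fun i _ ↦ by ring
  have h_ne : (Finset.filter (fun a ↦ transversalDet v a ≠ 0) (Fintype.piFinset A)).Nonempty :=
    ⟨a₀, mem_filter.2 ⟨Fintype.mem_piFinset.2 ha₀, h_det⟩⟩
  obtain ⟨a, ha, h_le⟩ := exists_le_of_sum_le h_ne h_avg
  have h_dot : ∀ z, (dotProductEquiv K (Option ι)).symm (transversalDet v a) ⬝ᵥ z =
      transversalDet v a z :=
    fun z ↦ LinearMap.congr_fun ((dotProductEquiv K (Option ι)).apply_symm_apply _) z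
  refine ⟨(dotProductEquiv K (Option ι)).symm (transversalDet v a), ?_, ?_⟩
  · simpa using (mem_filter.1 ha).2
  · refine (Nat.mul_le_mul_left 3 (sum_le_sum fun i _ ↦ ?_)).trans h_le
    simp only [h_dot, pairs]
    rw [card_filter_mul_pos (A i) fun p ↦ transversalDet v a (v i p), mul_add, pow_succ' _ 2,
      pow_succ' _ 2]
    exact add_le_add (Nat.mul_le_mul_right _ (card_filter_le _ _))
      (Nat.mul_le_mul_right _ (card_filter_le _ _))

end TransversalDeterminants

section Bisection

open Finset Filter Topology

theorem exists_tendsto_zero_det_add_smul_one_ne_zero {n : Type*} [Fintype n] [DecidableEq n]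
    (M : Matrix n n ℝ) :
    ∃ ε : ℕ → ℝ, Tendsto ε atTop (𝓝 0) ∧ ∀ k, (M + ε k • (1 : Matrix n n ℝ)).det ≠ 0 := by
  have h_fin : {x | (-M).charpoly.IsRoot x}.Finite :=
    Polynomial.finite_setOfPred_isRoot (Matrix.charpoly_monic (-M)).ne_zero
  obtain ⟨ε, hε, h_lim⟩ := mem_closure_iff_seq_limit.1 ((h_fin.countable.dense_compl ℝ) 0)
  refine ⟨ε, h_lim, fun k h ↦ hε k ?_⟩
  rw [Set.mem_ofPred_eq, Polynomial.IsRoot, Matrix.eval_charpoly, sub_neg_eq_add, add_comm,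
    Matrix.scalar_apply, ← Matrix.smul_one_eq_diagonal, h]

theorem exists_ne_zero_sign_inherited {α κ : Type*} [Fintype κ] (A : Finset α)
    {v : α → κ → ℝ} {u : ℕ → α → κ → ℝ} (hu : ∀ p, Tendsto (u · p) atTop (𝓝 (v p)))
    {c : ℕ → κ → ℝ} (hc : ∀ n, c n ≠ 0) :
    ∃ c₀ : κ → ℝ, c₀ ≠ 0 ∧ ∃ n, ∀ p ∈ A,
      (0 < c₀ ⬝ᵥ v p → 0 < c n ⬝ᵥ u n p) ∧ (c₀ ⬝ᵥ v p < 0 → c n ⬝ᵥ u n p < 0) := by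
  let d (n : ℕ) : κ → ℝ := ‖c n‖⁻¹ • c n
  have hd : ∀ n, d n ∈ Metric.sphere (0 : κ → ℝ) 1 := by
    intro n
    rw [mem_sphere_zero_iff_norm, norm_smul, norm_inv, norm_norm]
    exact inv_mul_cancel₀ (norm_ne_zero_iff.2 (hc n))
  obtain ⟨c₀, hc₀, φ, hφ, h_lim⟩ := (isCompact_sphere (0 : κ → ℝ) 1).tendsto_subseq hd
  have h_dot : ∀ p, Tendsto (fun n ↦ d (φ n) ⬝ᵥ u (φ n) p) atTop (𝓝 (c₀ ⬝ᵥ v p)) := fun p ↦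
    tendsto_finsetSum _ fun j _ ↦ (tendsto_pi_nhds.1 h_lim j).mul
      (tendsto_pi_nhds.1 ((hu p).comp hφ.tendsto_atTop) j)
  have h_scale : ∀ n p, d n ⬝ᵥ u n p = ‖c n‖⁻¹ * (c n ⬝ᵥ u n p) := fun n p ↦ smul_dotProduct _ _ _
  have h_norm : ∀ n, 0 < ‖c n‖⁻¹ := fun n ↦ inv_pos.2 (norm_pos_iff.2 (hc n))
  have h_pos : ∀ p, ∀ᶠ n in atTop, 0 < c₀ ⬝ᵥ v p → 0 < c (φ n) ⬝ᵥ u (φ n) p := by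
    intro p
    refine eventually_imp_distrib_left.2 fun h ↦ ?_
    filter_upwards [(h_dot p).eventually_const_lt h] with n hn
    rwa [h_scale, mul_pos_iff_of_pos_left (h_norm _)] at hn
  have h_neg : ∀ p, ∀ᶠ n in atTop, c₀ ⬝ᵥ v p < 0 → c (φ n) ⬝ᵥ u (φ n) p < 0 := by
    intro p
    refine eventually_imp_distrib_left.2 fun h ↦ ?_
    filter_upwards [(h_dot p).eventually_lt_const h] with n hn
    rw [h_scale] at hn
    exact neg_of_mul_neg_right hn (h_norm _).le
  obtain ⟨n, hn⟩ := ((eventually_all_finset A).2 fun p _ ↦ (h_pos p).and (h_neg p)).exists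
  exact ⟨c₀, Metric.ne_of_mem_sphere hc₀ one_ne_zero, φ n, hn⟩

-- A generic perturbation of `v` makes the determinant of a transversal nonzero.
theorem exists_sum_card_cube_le {ι α : Type*} [Fintype ι] {A : ι → Finset α}
    (hA : ∀ i, (A i).Nonempty) (v : α → Option ι → ℝ) :
    ∃ c : Option ι → ℝ, c ≠ 0 ∧
      3 * ∑ i, (#{p ∈ A i | 0 < c ⬝ᵥ v p} ^ 3 + #{p ∈ A i | c ⬝ᵥ v p < 0} ^ 3) ≤
        2 * ∑ i, #(A i) ^ 3 := by
  classical
  choose a ha using hA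
  obtain ⟨ε, h_lim, h_det⟩ := exists_tendsto_zero_det_add_smul_one_ne_zero
    (Matrix.of (transversalRows (fun _ ↦ v) a 0))
  let u (n : ℕ) (i : ι) (p : α) : Option ι → ℝ := v p + ε n • Pi.single (some i) 1
  have h_transversal : ∀ n, transversalDet (u n) a ≠ 0 := by
    intro n h
    refine h_det n ?_
    have h_none := LinearMap.congr_fun h (ε n • Pi.single none 1)
    rw [transversalDet_apply, LinearMap.zero_apply] at h_none
    rw [← h_none]
    congr 1
    ext r s
    cases r <;> simp [transversalRows, u, Matrix.one_apply, Pi.single_apply, eq_comm]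
  choose c hc h_le using fun n ↦
    exists_sum_card_cube_le_of_transversalDet_ne_zero A (u n) ha (h_transversal n)
  have hu : ∀ q : ι × α, Tendsto (fun n ↦ u n q.1 q.2) atTop (𝓝 (v q.2)) := by
    intro q
    simpa using (h_lim.smul_const (Pi.single (some q.1) 1 : Option ι → ℝ)).const_add (v q.2)
  obtain ⟨c₀, hc₀, n, hn⟩ :=
    exists_ne_zero_sign_inherited (univ ×ˢ univ.biUnion A) (u := fun n q ↦ u n q.1 q.2) hu hc
  have h_sign : ∀ i, ∀ p ∈ A i,
      (0 < c₀ ⬝ᵥ v p → 0 < c n ⬝ᵥ u n i p) ∧ (c₀ ⬝ᵥ v p < 0 → c n ⬝ᵥ u n i p < 0) :=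
    fun i p hp ↦ hn (i, p) (mem_product.2 ⟨mem_univ i, mem_biUnion.2 ⟨i, mem_univ i, hp⟩⟩)
  refine ⟨c₀, hc₀, (Nat.mul_le_mul_left 3 (sum_le_sum fun i _ ↦ ?_)).trans (h_le n)⟩
  have h_pos : {p ∈ A i | 0 < c₀ ⬝ᵥ v p} ⊆ {p ∈ A i | 0 < c n ⬝ᵥ u n i p} :=
    by
    intro p hp
    rw [mem_filter] at hp ⊢
    exact ⟨hp.1, (h_sign i p hp.1).1 hp.2⟩
  have h_neg : {p ∈ A i | c₀ ⬝ᵥ v p < 0} ⊆ {p ∈ A i | c n ⬝ᵥ u n i p < 0} :=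
    by
    intro p hp
    rw [mem_filter] at hp ⊢
    exact ⟨hp.1, (h_sign i p hp.1).2 hp.2⟩
  gcongr

end Bisection

section ClassSizes

open Finset

variable {σ : Type*} {P C : Finset (σ → ℝ)} {L L' : List (MvPolynomial σ ℝ)} {x y : σ → ℝ}

open Classical in
/-- The sign class of `x` under `L`: the points of `P` with the same signs as `x`. It is empty if
some polynomial of `L` vanishes at `x`. -/
def signClass (P : Finset (σ → ℝ)) (L : List (MvPolynomial σ ℝ)) (x : σ → ℝ) : Finset (σ → ℝ) :=
  {y ∈ P | SameSign L x y}

open Classical in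
/-- The points of `P` outside the zero sets of the polynomials in `L`, that is, in the open cells
of the partition defined by `L`. -/
def offZeros (P : Finset (σ → ℝ)) (L : List (MvPolynomial σ ℝ)) : Finset (σ → ℝ) :=
  {y ∈ P | ∀ f ∈ L, eval y f ≠ 0}

open Classical in
/-- The partition of `offZeros P L` into sign classes. -/
def signClasses (P : Finset (σ → ℝ)) (L : List (MvPolynomial σ ℝ)) : Finset (Finset (σ → ℝ)) :=
  (offZeros P L).image (signClass P L)

/-- The cubic potential measuring how unevenly `L` partitions `P`: the sum of the cubes of the sizes
of the sign classes, written as a sum over points. -/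
def signPotential (P : Finset (σ → ℝ)) (L : List (MvPolynomial σ ℝ)) : ℕ :=
  ∑ x ∈ P, #(signClass P L x) ^ 2

theorem mem_signClass : y ∈ signClass P L x ↔ y ∈ P ∧ SameSign L x y := by
  simp [signClass]

theorem mem_offZeros : y ∈ offZeros P L ↔ y ∈ P ∧ ∀ f ∈ L, eval y f ≠ 0 := by
  simp [offZeros]

theorem sameSign_self_iff : SameSign L x x ↔ ∀ f ∈ L, eval x f ≠ 0 :=
  forall₂_congr fun _ _ ↦ mul_self_pos

theorem SameSign.eval_ne_zero (h : SameSign L x y) : ∀ f ∈ L, eval x f ≠ 0 :=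
  fun f hf ↦ left_ne_zero_of_mul (h f hf).ne'

theorem SameSign.signClass_eq (h : SameSign L x y) : signClass P L x = signClass P L y := by
  ext z
  rw [mem_signClass, mem_signClass]
  exact and_congr_right fun _ ↦ ⟨h.symm.trans, h.trans⟩

theorem mem_iff_of_mem_signClasses (hC : C ∈ signClasses P L) :
    x ∈ C ↔ x ∈ offZeros P L ∧ signClass P L x = C := by
  classical
  obtain ⟨y, -, rfl⟩ := mem_image.1 hC
  refine ⟨fun hx ↦ ?_, fun ⟨hx, h⟩ ↦ ?_⟩
  · obtain ⟨hxP, hyx⟩ := mem_signClass.1 hx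
    exact ⟨mem_offZeros.2 ⟨hxP, hyx.symm.eval_ne_zero⟩, hyx.symm.signClass_eq⟩
  · rw [mem_offZeros, ← sameSign_self_iff] at hx
    exact h ▸ mem_signClass.2 hx

theorem nonempty_of_mem_signClasses (hC : C ∈ signClasses P L) : C.Nonempty := by
  classical
  obtain ⟨y, hy, h⟩ := mem_image.1 hC
  exact ⟨y, (mem_iff_of_mem_signClasses hC).2 ⟨hy, h⟩⟩

theorem sum_offZeros {M : Type*} [AddCommMonoid M] (P : Finset (σ → ℝ))
    (L : List (MvPolynomial σ ℝ)) (g : (σ → ℝ) → M) :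
    ∑ x ∈ offZeros P L, g x = ∑ C ∈ signClasses P L, ∑ x ∈ C, g x := by
  classical
  rw [← sum_fiberwise_of_maps_to (g := signClass P L) fun x hx ↦ mem_image_of_mem _ hx]
  refine sum_congr rfl fun C hC ↦ congrArg (∑ x ∈ ·, g x) (ext fun x ↦ ?_)
  rw [mem_filter, mem_iff_of_mem_signClasses hC]

theorem sum_card_signClasses_le (P : Finset (σ → ℝ)) (L : List (MvPolynomial σ ℝ)) :
    ∑ C ∈ signClasses P L, #C ≤ #P := by
  simp only [card_eq_sum_ones, ← sum_offZeros]
  exact sum_le_sum_of_subset (filter_subset _ _)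

theorem signPotential_nil (P : Finset (σ → ℝ)) : signPotential P [] = #P ^ 3 := by
  simp [signPotential, signClass, SameSign, pow_succ']

theorem signPotential_eq_sum_offZeros (h : L ⊆ L') :
    signPotential P L' = ∑ x ∈ offZeros P L, #(signClass P L' x) ^ 2 := by
  classical
  refine (sum_subset (filter_subset _ _) fun x hxP hx ↦ ?_).symm
  rw [sq_eq_zero_iff, card_eq_zero, eq_empty_iff_forall_notMem]
  exact fun y hy ↦ hx <| mem_offZeros.2
    ⟨hxP, fun f hf ↦ (mem_signClass.1 hy).2.eval_ne_zero f (h hf)⟩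

theorem signPotential_eq_sum_card_cube (P : Finset (σ → ℝ)) (L : List (MvPolynomial σ ℝ)) :
    signPotential P L = ∑ C ∈ signClasses P L, #C ^ 3 := by
  rw [signPotential_eq_sum_offZeros (List.Subset.refl L), sum_offZeros]
  refine sum_congr rfl fun C hC ↦ ?_
  rw [pow_succ' _ 2, ← smul_eq_mul, ← sum_const]
  exact sum_congr rfl fun x hx ↦ by rw [((mem_iff_of_mem_signClasses hC).1 hx).2]

theorem signClass_cons (f : MvPolynomial σ ℝ) (hC : C ∈ signClasses P L) (hx : x ∈ C) :
    signClass P (f :: L) x = {y ∈ C | 0 < eval x f * eval y f} := by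
  ext y
  rw [mem_filter, ← ((mem_iff_of_mem_signClasses hC).1 hx).2, mem_signClass, mem_signClass,
    SameSign, List.forall_mem_cons, and_assoc, and_comm (a := 0 < _), SameSign]

theorem signPotential_cons (P : Finset (σ → ℝ)) (L : List (MvPolynomial σ ℝ))
    (f : MvPolynomial σ ℝ) :
    signPotential P (f :: L) =
      ∑ C ∈ signClasses P L, (#{p ∈ C | 0 < eval p f} ^ 3 + #{p ∈ C | eval p f < 0} ^ 3) := by
  rw [signPotential_eq_sum_offZeros (List.subset_cons_self f L), sum_offZeros]
  refine sum_congr rfl fun C hC ↦ ?_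
  have h_card : ∀ x ∈ C, #(signClass P (f :: L) x) ^ 2 =
      (if 0 < eval x f then #{p ∈ C | 0 < eval p f} ^ 2 else 0) +
        if eval x f < 0 then #{p ∈ C | eval p f < 0} ^ 2 else 0 := by
    intro x hx
    rw [signClass_cons f hC hx]
    rcases lt_trichotomy (eval x f) 0 with h | h | h <;>
      simp [h, h.not_gt, mul_pos_iff]
  rw [sum_congr rfl h_card, sum_add_distrib, ← sum_filter, ← sum_filter, sum_const, sum_const,
    smul_eq_mul, smul_eq_mul, ← pow_succ', ← pow_succ']

theorem card_filter_pos_cube_add_card_filter_neg_cube_le {α : Type*} (C : Finset α) (f : α → ℝ) :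
    #{p ∈ C | 0 < f p} ^ 3 + #{p ∈ C | f p < 0} ^ 3 ≤ #C ^ 3 := by
  classical
  have h_disjoint : Disjoint {p ∈ C | 0 < f p} {p ∈ C | f p < 0} :=
    disjoint_filter.2 fun p _ h ↦ h.not_gt
  calc #{p ∈ C | 0 < f p} ^ 3 + #{p ∈ C | f p < 0} ^ 3
      ≤ (#{p ∈ C | 0 < f p} + #{p ∈ C | f p < 0}) ^ 3 :=
        pow_add_pow_le (Nat.zero_le _) (Nat.zero_le _) three_ne_zero
    _ ≤ #C ^ 3 := by
        rw [← card_union_of_disjoint h_disjoint]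
        gcongr
        exact union_subset (filter_subset _ _) (filter_subset _ _)

end ClassSizes

section Partition

open Finset

variable {σ : Type*}

theorem exists_mem_sum_card_cube_le {H : Finset (Finset (σ → ℝ))} (hH : ∀ C ∈ H, C.Nonempty)
    {U : Submodule ℝ (MvPolynomial σ ℝ)} (hU : #H < finrank ℝ U) :
    ∃ f ∈ U, f ≠ 0 ∧
      3 * ∑ C ∈ H, (#{p ∈ C | 0 < eval p f} ^ 3 + #{p ∈ C | eval p f < 0} ^ 3) ≤
        2 * ∑ C ∈ H, #C ^ 3 := by
  have := Module.finite_of_finrank_pos (Nat.zero_lt_of_lt hU)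
  obtain ⟨e⟩ : Nonempty (Option H ↪ Fin (finrank ℝ U)) :=
    Function.Embedding.nonempty_of_card_le (by simpa using hU)
  let b (j : Option H) : U := finBasis ℝ U (e j)
  have hb : LinearIndependent ℝ b := (finBasis ℝ U).linearIndependent.comp e e.injective
  obtain ⟨c, hc, h_le⟩ := exists_sum_card_cube_le (A := fun C : H ↦ C.1) (fun C ↦ hH C.1 C.2)
    fun p j ↦ eval p (b j).1
  have h_eval : ∀ p, eval p (∑ j, c j • b j : U).1 = c ⬝ᵥ fun j ↦ eval p (b j).1 := by
    intro p
    simp [map_sum, smul_eval, dotProduct]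
  refine ⟨(∑ j, c j • b j : U).1, (∑ j, c j • b j).2, fun h ↦ hc ?_, ?_⟩
  · exact funext (Fintype.linearIndependent_iff.1 hb c (Subtype.ext h))
  · simp only [h_eval]
    rwa [sum_coe_sort H fun C ↦ #{p ∈ C | 0 < c ⬝ᵥ fun j ↦ eval p (b j).1} ^ 3 +
      #{p ∈ C | (c ⬝ᵥ fun j ↦ eval p (b j).1) < 0} ^ 3, sum_coe_sort H fun C ↦ #C ^ 3] at h_le

theorem card_heavy_signClasses_lt (P : Finset (σ → ℝ)) (L : List (MvPolynomial σ ℝ)) {τ : ℝ}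
    (hτ : 0 < τ) : (#{C ∈ signClasses P L | (#P : ℝ) < #C * τ} : ℝ) < τ := by
  set H := {C ∈ signClasses P L | (#P : ℝ) < #C * τ}
  rcases H.eq_empty_or_nonempty with h_empty | h_ne
  · simpa [h_empty] using hτ
  refine lt_of_mul_lt_mul_right ?_ (Nat.cast_nonneg #P)
  calc (#H : ℝ) * #P = ∑ _ ∈ H, (#P : ℝ) := by rw [sum_const, nsmul_eq_mul]
    _ < ∑ C ∈ H, #C * τ := sum_lt_sum_of_nonempty h_ne fun _ hC ↦ (mem_filter.1 hC).2
    _ = τ * (∑ C ∈ H, #C : ℕ) := by rw [← sum_mul, Nat.cast_sum, mul_comm]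
    _ ≤ τ * #P := by
        gcongr
        exact (sum_le_sum_of_subset (filter_subset _ _)).trans (sum_card_signClasses_le P L)

theorem sum_card_cube_light_signClasses_le (P : Finset (σ → ℝ)) (L : List (MvPolynomial σ ℝ))
    {τ : ℝ} (hτ : 0 < τ) :
    (∑ C ∈ signClasses P L with ¬ (#P : ℝ) < #C * τ, #C ^ 3 : ℕ) ≤ (#P : ℝ) ^ 3 / τ ^ 2 := by
  calc ((∑ C ∈ signClasses P L with ¬ (#P : ℝ) < #C * τ, #C ^ 3 : ℕ) : ℝ)
      ≤ ∑ C ∈ signClasses P L with ¬ (#P : ℝ) < #C * τ, (#P / τ) ^ 2 * (#C : ℝ) := by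
        rw [Nat.cast_sum]
        refine sum_le_sum fun C hC ↦ ?_
        have h_light : (#C : ℝ) ≤ #P / τ := (le_div_iff₀ hτ).2 (not_lt.1 (mem_filter.1 hC).2)
        rw [Nat.cast_pow, pow_succ]
        gcongr
    _ ≤ (#P / τ) ^ 2 * (∑ C ∈ signClasses P L, #C : ℕ) := by
        rw [← mul_sum, Nat.cast_sum]
        gcongr
        exact filter_subset _ _
    _ ≤ (#P / τ) ^ 2 * #P := by
        gcongr
        exact sum_card_signClasses_le P L
    _ = #P ^ 3 / τ ^ 2 := by ring

theorem exists_mem_signPotential_cons_le (P : Finset (σ → ℝ)) (L : List (MvPolynomial σ ℝ))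
    {U : Submodule ℝ (MvPolynomial σ ℝ)} {τ : ℝ} (hτ : 0 < τ) (hU : τ ≤ finrank ℝ U) :
    ∃ f ∈ U, f ≠ 0 ∧
      (signPotential P (f :: L) : ℝ) ≤ 2 / 3 * signPotential P L + #P ^ 3 / τ ^ 2 := by
  obtain ⟨f, hfU, hf, h_heavy⟩ := exists_mem_sum_card_cube_le
    (H := {C ∈ signClasses P L | (#P : ℝ) < #C * τ})
    (fun C hC ↦ nonempty_of_mem_signClasses (mem_of_mem_filter C hC))
    (by exact_mod_cast (card_heavy_signClasses_lt P L hτ).trans_le hU)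
  refine ⟨f, hfU, hf, ?_⟩
  have h_light : ∑ C ∈ signClasses P L with ¬ (#P : ℝ) < #C * τ,
      (#{p ∈ C | 0 < eval p f} ^ 3 + #{p ∈ C | eval p f < 0} ^ 3) ≤
        ∑ C ∈ signClasses P L with ¬ (#P : ℝ) < #C * τ, #C ^ 3 :=
    sum_le_sum fun C _ ↦ card_filter_pos_cube_add_card_filter_neg_cube_le C (eval · f)
  have h_subset : ∑ C ∈ signClasses P L with (#P : ℝ) < #C * τ, #C ^ 3 ≤ signPotential P L := by
    rw [signPotential_eq_sum_card_cube]
    exact sum_le_sum_of_subset (filter_subset _ _)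
  have h_cons : 3 * signPotential P (f :: L) ≤ 2 * signPotential P L +
      3 * ∑ C ∈ signClasses P L with ¬ (#P : ℝ) < #C * τ, #C ^ 3 := by
    rw [signPotential_cons, ← sum_filter_add_sum_filter_not _ fun C ↦ (#P : ℝ) < #C * τ]
    omega
  have h_cast : (3 * signPotential P (f :: L) : ℝ) ≤ 2 * signPotential P L +
      3 * (∑ C ∈ signClasses P L with ¬ (#P : ℝ) < #C * τ, #C ^ 3 : ℕ) := by
    exact_mod_cast h_cons
  linarith [sum_card_cube_light_signClasses_le P L hτ]

theorem exists_length_eq_signPotential_append_le (P : Finset (σ → ℝ))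
    (L : List (MvPolynomial σ ℝ)) {U : Submodule ℝ (MvPolynomial σ ℝ)} {τ : ℝ} (hτ : 0 < τ)
    (hU : τ ≤ finrank ℝ U) (k : ℕ) :
    ∃ L' : List (MvPolynomial σ ℝ), L'.length = k ∧ (∀ f ∈ L', f ∈ U ∧ f ≠ 0) ∧
      (signPotential P (L' ++ L) : ℝ) ≤
        (2 / 3) ^ k * signPotential P L + 3 * (#P ^ 3 / τ ^ 2) := by
  induction k with
  | zero =>
    exact ⟨[], rfl, by simp, by simpa using div_nonneg (by positivity) (sq_nonneg τ)⟩
  | succ k ih =>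
    obtain ⟨L', h_length, h_mem, h_le⟩ := ih
    obtain ⟨f, hfU, hf, h_cons⟩ := exists_mem_signPotential_cons_le P (L' ++ L) hτ hU
    refine ⟨f :: L', by rw [List.length_cons, h_length],
      List.forall_mem_cons.2 ⟨⟨hfU, hf⟩, h_mem⟩, ?_⟩
    rw [List.cons_append, pow_succ]
    linarith

theorem exists_signPotential_le (P : Finset (σ → ℝ)) {U : ℕ → Submodule ℝ (MvPolynomial σ ℝ)}
    {τ : ℕ → ℝ} (hτ : ∀ i, 0 < τ i) (hτ_zero : τ 0 ≤ 1) (hτ_succ : ∀ i, τ (i + 1) ≤ 8 * τ i)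
    (hU : ∀ i, τ i ≤ finrank ℝ (U i)) (h_deg : ∀ i, U i ≤ restrictTotalDegree σ ℝ (2 ^ i)) (I : ℕ) :
    ∃ L : List (MvPolynomial σ ℝ), (∀ f ∈ L, ∃ i, f ∈ U i ∧ f ≠ 0) ∧
      (L.map totalDegree).sum ≤ 22 * 2 ^ I ∧
      (signPotential P L : ℝ) ≤ 12 * (#P ^ 3 / τ I ^ 2) := by
  induction I with
  | zero =>
    refine ⟨[], by simp, by simp, ?_⟩
    rw [signPotential_nil, Nat.cast_pow]
    have h_sq : τ 0 ^ 2 ≤ 1 := pow_le_one₀ (hτ 0).le hτ_zero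
    have h_le : (#P : ℝ) ^ 3 ≤ #P ^ 3 / τ 0 ^ 2 :=
      le_div_self (by positivity) (pow_pos (hτ 0) 2) h_sq
    linarith [pow_nonneg (Nat.cast_nonneg (α := ℝ) #P) 3]
  | succ I ih =>
    obtain ⟨L, hL, h_sum, h_le⟩ := ih
    obtain ⟨L', h_length, hL', h_append⟩ :=
      exists_length_eq_signPotential_append_le P L (hτ (I + 1)) (hU (I + 1)) 11
    refine ⟨L' ++ L, fun f hf ↦ ?_, ?_, ?_⟩
    · exact (List.mem_append.1 hf).elim (fun hf ↦ ⟨I + 1, hL' f hf⟩) (hL f)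
    · have h_sum' : (L'.map totalDegree).sum ≤ 11 * 2 ^ (I + 1) := by
        rw [← h_length, ← L'.length_map totalDegree, ← smul_eq_mul]
        refine List.sum_le_card_nsmul _ _ fun d hd ↦ ?_
        obtain ⟨f, hf, rfl⟩ := List.mem_map.1 hd
        exact (mem_restrictTotalDegree _ _ _).1 (h_deg _ (hL' f hf).1)
      rw [List.map_append, List.sum_append]
      omega
    · have h_ratio : (#P : ℝ) ^ 3 / τ I ^ 2 ≤ 64 * (#P ^ 3 / τ (I + 1) ^ 2) := by
        have h_sq : τ (I + 1) ^ 2 ≤ 64 * τ I ^ 2 := by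
          calc τ (I + 1) ^ 2 ≤ (8 * τ I) ^ 2 := pow_le_pow_left₀ (hτ _).le (hτ_succ I) 2
            _ = 64 * τ I ^ 2 := by ring
        rw [mul_div_assoc', div_le_div_iff₀ (pow_pos (hτ _) 2) (pow_pos (hτ _) 2), mul_comm 64,
          mul_assoc]
        gcongr
      -- `11` bisections per dyadic scale: `(2 / 3) ^ 11 * 12 * 64 + 3 ≤ 12`.
      norm_num at h_append
      linarith [show 0 ≤ (#P : ℝ) ^ 3 / τ (I + 1) ^ 2 by positivity]

end Partition

section Incidences

open Finset

variable {α β : Type*} {R : α → β → Prop} {P P' : Finset α} {N N' : Finset β}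

open Classical in
/-- The number of pairs of a point of `P` and an object of `N` that are incident under `R`. -/
def incidences (R : α → β → Prop) (P : Finset α) (N : Finset β) : ℕ :=
  #(Rel.interedges R P N)

/-- The incidence graph of `R` between `P` and `N` contains no `K₃,₃`. -/
def K33Free (R : α → β → Prop) (P : Finset α) (N : Finset β) : Prop :=
  ∀ A ⊆ P, ∀ B ⊆ N, (∀ a ∈ A, ∀ b ∈ B, R a b) → #A ≤ 2 ∨ #B ≤ 2

theorem K33Free.mono (h : K33Free R P N) (hP : P' ⊆ P) (hN : N' ⊆ N) : K33Free R P' N' :=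
  fun A hA B hB ↦ h A (hA.trans hP) B (hB.trans hN)

theorem K33Free.swap (h : K33Free R P N) : K33Free (Function.swap R) N P :=
  fun B hB A hA hR ↦ (h A hA B hB fun a ha b hb ↦ hR b hb a ha).symm

theorem K33Free.image {γ δ : Type*} [DecidableEq γ] [DecidableEq δ] {R' : γ → δ → Prop} {f : α → γ}
    {g : β → δ} (h : K33Free R P N) (hR : ∀ p ∈ P, ∀ s ∈ N, R' (f p) (g s) → R p s) :
    K33Free R' (P.image f) (N.image g) := by
  intro A hA B hB hAB
  obtain ⟨A, hAP, rfl⟩ := subset_image_iff.1 hA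
  obtain ⟨B, hBN, rfl⟩ := subset_image_iff.1 hB
  refine (h A hAP B hBN fun a ha b hb ↦ hR a (hAP ha) b (hBN hb) ?_).imp card_image_le.trans
    card_image_le.trans
  exact hAB _ (mem_image_of_mem f ha) _ (mem_image_of_mem g hb)

open Classical in
theorem incidences_eq_sum_right (R : α → β → Prop) (P : Finset α) (N : Finset β) :
    incidences R P N = ∑ s ∈ N, #{p ∈ P | R p s} := by
  simp only [incidences, Rel.interedges, card_filter, sum_product_right]

theorem incidences_swap (R : α → β → Prop) (P : Finset α) (N : Finset β) :
    incidences (Function.swap R) N P = incidences R P N := by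
  simp only [incidences_eq_sum_right, card_filter, Function.swap]
  exact sum_comm

theorem incidences_mono (hP : P ⊆ P') (hN : N ⊆ N') : incidences R P N ≤ incidences R P' N' := by
  classical
  exact card_le_card (Rel.interedges_mono hP hN)

theorem incidences_le_incidences_image {γ δ : Type*} [DecidableEq γ] [DecidableEq δ]
    {R' : γ → δ → Prop} {f : α → γ} {g : β → δ} (hf : Set.InjOn f P) (hg : Set.InjOn g N)
    (hR : ∀ p ∈ P, ∀ s ∈ N, R p s → R' (f p) (g s)) :
    incidences R P N ≤ incidences R' (P.image f) (N.image g) := by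
  classical
  refine card_le_card_of_injOn (Prod.map f g) (fun e he ↦ ?_) ((hf.prodMap hg).mono fun e he ↦ ?_)
  · have ⟨hp, hs, h⟩ := Rel.mem_interedges_iff.1 he
    exact Rel.mem_interedges_iff.2
      ⟨mem_image_of_mem f hp, mem_image_of_mem g hs, hR _ hp _ hs h⟩
  · have ⟨hp, hs, _⟩ := Rel.mem_interedges_iff.1 he
    exact ⟨hp, hs⟩

theorem incidences_le_sum {γ : Type*} {T : Finset γ} {Q : γ → Finset α}
    (h : ∀ p ∈ P, ∃ t ∈ T, p ∈ Q t) : incidences R P N ≤ ∑ t ∈ T, incidences R (Q t) N := by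
  classical
  calc incidences R P N ≤ incidences R (T.biUnion Q) N :=
        incidences_mono (fun p hp ↦ mem_biUnion.2 (h p hp)) Subset.rfl
    _ ≤ ∑ t ∈ T, incidences R (Q t) N := by
        rw [incidences, Rel.interedges_biUnion_left]
        exact card_biUnion_le

theorem le_two_add_choose_three (n : ℕ) : n ≤ 2 + n.choose 3 := by
  induction n with
  | zero => exact Nat.zero_le _
  | succ n ih =>
    rcases lt_or_ge n 2 with hn | hn
    · omega
    · have := Nat.choose_pos hn
      have h_succ : (n + 1).choose 3 = n.choose 2 + n.choose 3 := Nat.choose_succ_succ' n 2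
      omega

open Classical in
theorem K33Free.sum_card_powersetCard_three_le (h : K33Free R P N) :
    ∑ s ∈ N, #(powersetCard 3 {p ∈ P | R p s}) ≤ 2 * #P ^ 3 := by
  calc ∑ s ∈ N, #(powersetCard 3 {p ∈ P | R p s})
      = ∑ s ∈ N, #{A ∈ powersetCard 3 P | ∀ p ∈ A, R p s} := by
        refine sum_congr rfl fun s _ ↦ congrArg card (ext fun A ↦ ?_)
        simp only [mem_filter, mem_powersetCard, subset_iff, forall_and]
        tauto
    _ = ∑ A ∈ powersetCard 3 P, #{s ∈ N | ∀ p ∈ A, R p s} :=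
        (sum_card_bipartiteAbove_eq_sum_card_bipartiteBelow _).symm
    _ ≤ ∑ A ∈ powersetCard 3 P, 2 := by
        refine sum_le_sum fun A hA ↦ ?_
        obtain ⟨hAP, hA_card⟩ := mem_powersetCard.1 hA
        exact (h A hAP {s ∈ N | ∀ p ∈ A, R p s} (filter_subset _ _) fun a ha b hb ↦
          (mem_filter.1 hb).2 a ha).resolve_left (by omega)
    _ ≤ 2 * #P ^ 3 := by
        rw [sum_const, card_powersetCard, smul_eq_mul, mul_comm]
        gcongr
        exact Nat.choose_le_pow _ _

open Classical in
theorem K33Free.incidences_le (h : K33Free R P N) :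
    incidences R P N ≤ 2 * #{s ∈ N | ∃ p ∈ P, R p s} + 2 * #P ^ 3 := by
  have h_card : ∀ s, #{p ∈ P | R p s} ≤
      (if ∃ p ∈ P, R p s then 2 else 0) + #(powersetCard 3 {p ∈ P | R p s}) := by
    intro s
    split_ifs with hs
    · rw [card_powersetCard]
      exact le_two_add_choose_three _
    · rw [filter_false_of_mem fun p hp hR ↦ hs ⟨p, hp, hR⟩]
      exact Nat.zero_le _
  calc incidences R P N
      ≤ ∑ s ∈ N, ((if ∃ p ∈ P, R p s then 2 else 0) + #(powersetCard 3 {p ∈ P | R p s})) := by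
        rw [incidences_eq_sum_right]
        exact sum_le_sum fun s _ ↦ h_card s
    _ ≤ 2 * #{s ∈ N | ∃ p ∈ P, R p s} + 2 * #P ^ 3 := by
        rw [sum_add_distrib, ← sum_filter, sum_const, smul_eq_mul, mul_comm]
        exact Nat.add_le_add_left h.sum_card_powersetCard_three_le _

theorem K33Free.incidences_le_card_right (h : K33Free R P N) :
    incidences R P N ≤ 2 * #N + 2 * #P ^ 3 := by
  classical
  exact h.incidences_le.trans (by gcongr; exact filter_subset _ _)

theorem K33Free.incidences_le_card_left (h : K33Free R P N) :
    incidences R P N ≤ 2 * #P + 2 * #N ^ 3 :=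
  incidences_swap R P N ▸ h.swap.incidences_le_card_right

end Incidences

section CellIncidences

open Finset

variable {σ β : Type*} {P : Finset (σ → ℝ)} {L : List (MvPolynomial σ ℝ)} {K : ℕ}

theorem card_filter_signClasses_le {r : (σ → ℝ) → Prop}
    [DecidablePred fun C : Finset (σ → ℝ) ↦ ∃ p ∈ C, r p]
    (hK : ∀ T ⊆ P, SignSeparated L T → (∀ t ∈ T, r t) → #T ≤ K) :
    #{C ∈ signClasses P L | ∃ p ∈ C, r p} ≤ K := by
  classical
  set W := Finset.filter (fun C ↦ ∃ p ∈ C, r p) (signClasses P L)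
  choose! g hg using fun C (hC : C ∈ W) ↦ (mem_filter.1 hC).2
  have h_class : ∀ C ∈ W, g C ∈ offZeros P L ∧ signClass P L (g C) = C :=
    fun C hC ↦ (mem_iff_of_mem_signClasses (mem_of_mem_filter C hC)).1 (hg C hC).1
  have h_inj : Set.InjOn g W := by
    intro C hC C' hC' h
    rw [← (h_class C hC).2, h, (h_class C' hC').2]
  rw [← card_image_of_injOn h_inj]
  refine hK _ ?_ ⟨?_, ?_⟩ ?_
  · exact image_subset_iff.2 fun C hC ↦ (mem_offZeros.1 (h_class C hC).1).1
  · exact forall_mem_image.2 fun C hC ↦ (mem_offZeros.1 (h_class C hC).1).2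
  · refine forall_mem_image.2 fun C hC ↦ forall_mem_image.2 fun C' hC' h ↦ ?_
    rw [← (h_class C hC).2, h.signClass_eq, (h_class C' hC').2]
  · exact forall_mem_image.2 fun C hC ↦ (hg C hC).2

theorem K33Free.incidences_offZeros_le {R : (σ → ℝ) → β → Prop} {N : Finset β}
    (h : K33Free R P N)
    (hK : ∀ s ∈ N, ∀ T ⊆ P, SignSeparated L T → (∀ t ∈ T, R t s) → #T ≤ K) :
    incidences R (offZeros P L) N ≤ 2 * K * #N + 2 * signPotential P L := by
  classical
  have h_mem : ∀ p ∈ offZeros P L, ∃ C ∈ signClasses P L, p ∈ C := fun p hp ↦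
    ⟨_, mem_image_of_mem _ hp, (mem_iff_of_mem_signClasses (mem_image_of_mem _ hp)).2 ⟨hp, rfl⟩⟩
  have h_subset : ∀ C ∈ signClasses P L, C ⊆ P := fun C hC p hp ↦
    (mem_offZeros.1 ((mem_iff_of_mem_signClasses hC).1 hp).1).1
  calc incidences R (offZeros P L) N ≤ ∑ C ∈ signClasses P L, incidences R C N :=
        incidences_le_sum h_mem
    _ ≤ ∑ C ∈ signClasses P L, (2 * #{s ∈ N | ∃ p ∈ C, R p s} + 2 * #C ^ 3) :=
        sum_le_sum fun C hC ↦ (h.mono (h_subset C hC) Subset.rfl).incidences_le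
    _ = 2 * ∑ s ∈ N, #{C ∈ signClasses P L | ∃ p ∈ C, R p s} + 2 * signPotential P L := by
        rw [sum_add_distrib, ← mul_sum, ← mul_sum, ← signPotential_eq_sum_card_cube]
        exact congrArg (2 * · + _) (sum_card_bipartiteAbove_eq_sum_card_bipartiteBelow _)
    _ ≤ 2 * ∑ _s ∈ N, K + 2 * signPotential P L := by
        gcongr with s hs
        exact card_filter_signClasses_le (hK s hs)
    _ = 2 * K * #N + 2 * signPotential P L := by
        rw [sum_const, smul_eq_mul, mul_comm #N, mul_assoc]

end CellIncidences

section PartitionThree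

open Finset

theorem exists_signPotential_le_div_pow (P : Finset (Fin 3 → ℝ)) (I : ℕ) :
    ∃ L : List (MvPolynomial (Fin 3) ℝ), (∀ f ∈ L, f ≠ 0) ∧
      (L.map totalDegree).sum ≤ 22 * 2 ^ I ∧
      (signPotential P L : ℝ) ≤ 432 * #P ^ 3 / 64 ^ I := by
  have h_finrank : ∀ i : ℕ,
      (8 : ℝ) ^ i / 6 ≤ finrank ℝ (restrictTotalDegree (Fin 3) ℝ (2 ^ i)) := by
    intro i
    have h : (6 * finrank ℝ (restrictTotalDegree (Fin 3) ℝ (2 ^ i)) : ℝ) =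
        (2 ^ i + 1) * (2 ^ i + 2) * (2 ^ i + 3) := by
      exact_mod_cast six_mul_finrank_restrictTotalDegree (K := ℝ) (2 ^ i)
    rw [show (8 : ℝ) ^ i = (2 ^ i) ^ 3 by rw [← pow_mul, mul_comm, pow_mul]; norm_num]
    nlinarith [show (0 : ℝ) < 2 ^ i by positivity]
  obtain ⟨L, hL, h_deg, h_le⟩ := exists_signPotential_le P (τ := fun i ↦ 8 ^ i / 6)
    (fun i ↦ by positivity) (by norm_num) (fun i ↦ by rw [pow_succ]; linarith) h_finrank
    (fun i ↦ le_rfl) I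
  refine ⟨L, fun f hf ↦ (hL f hf).choose_spec.2, h_deg, h_le.trans_eq ?_⟩
  rw [show (64 : ℝ) ^ I = (8 ^ I) ^ 2 by rw [← pow_mul, mul_comm, pow_mul]; norm_num]
  field_simp
  ring

theorem min_mul_four_pow_div_six_le_finrank {F : MvPolynomial (Fin 3) ℝ} (hF : F ≠ 0)
    {C : Submodule ℝ (MvPolynomial (Fin 3) ℝ)} {i : ℕ}
    (hC : finrank ℝ (idealOfDegreeLE (Ideal.span {F}) (2 ^ i)) + finrank ℝ C =
      finrank ℝ (restrictTotalDegree (Fin 3) ℝ (2 ^ i))) :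
    min (F.totalDegree : ℝ) (2 ^ i) * 4 ^ i / 6 ≤ finrank ℝ C := by
  have h_total : (6 * finrank ℝ (restrictTotalDegree (Fin 3) ℝ (2 ^ i)) : ℝ) =
      (2 ^ i + 1) * (2 ^ i + 2) * (2 ^ i + 3) := by
    exact_mod_cast six_mul_finrank_restrictTotalDegree (K := ℝ) (2 ^ i)
  have hC' : (finrank ℝ (idealOfDegreeLE (Ideal.span {F}) (2 ^ i)) : ℝ) + finrank ℝ C =
      finrank ℝ (restrictTotalDegree (Fin 3) ℝ (2 ^ i)) := by
    exact_mod_cast hC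
  have h_pos : (0 : ℝ) < 2 ^ i := by positivity
  rw [show (4 : ℝ) ^ i = (2 ^ i) ^ 2 by rw [← pow_mul, mul_comm, pow_mul]; norm_num]
  rcases lt_or_ge (2 ^ i) F.totalDegree with h_lt | h_ge
  · rw [idealOfDegreeLE_span_singleton_eq_bot h_lt, finrank_bot, Nat.cast_zero, zero_add] at hC'
    rw [min_eq_right (by exact_mod_cast h_lt.le)]
    nlinarith
  · rw [finrank_idealOfDegreeLE_span_singleton hF h_ge] at hC'
    obtain ⟨t, ht⟩ := Nat.exists_eq_add_of_le h_ge
    have ht' : (2 : ℝ) ^ i = F.totalDegree + t := by exact_mod_cast ht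
    have h_ideal : (6 * finrank ℝ (restrictTotalDegree (Fin 3) ℝ t) : ℝ) =
        (t + 1) * (t + 2) * (t + 3) := by
      exact_mod_cast six_mul_finrank_restrictTotalDegree (K := ℝ) t
    rw [ht, Nat.add_sub_cancel_left, ← ht] at hC'
    rw [ht'] at h_total ⊢
    rw [min_eq_left (by simp)]
    have h_add : (6 * finrank ℝ C : ℝ) =
        F.totalDegree * ((F.totalDegree + t) ^ 2 + t * (F.totalDegree + t) + t ^ 2 +
          6 * (F.totalDegree + 2 * t) + 11) := by
      linear_combination 6 * hC' + h_total - h_ideal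
    rw [div_le_iff₀ (by norm_num), mul_comm (finrank ℝ C : ℝ), h_add]
    gcongr
    linarith [show (0 : ℝ) ≤ t * (F.totalDegree + t) + t ^ 2 + 6 * (F.totalDegree + 2 * t) by
      positivity]

theorem exists_not_dvd_signPotential_le_div_pow {F : MvPolynomial (Fin 3) ℝ} (hF : Irreducible F)
    (P : Finset (Fin 3 → ℝ)) {I : ℕ} (hI : F.totalDegree ≤ 2 ^ I) :
    ∃ L : List (MvPolynomial (Fin 3) ℝ), (∀ f ∈ L, ¬ F ∣ f) ∧
      (L.map totalDegree).sum ≤ 22 * 2 ^ I ∧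
      (signPotential P L : ℝ) ≤ 432 * #P ^ 3 / (F.totalDegree ^ 2 * 16 ^ I) := by
  choose U hU h_compl h_finrank using
    fun i ↦ exists_complement_idealOfDegreeLE (Ideal.span {F}) (2 ^ i)
  have h_one : (1 : ℝ) ≤ F.totalDegree := by exact_mod_cast totalDegree_pos_of_irreducible hF
  have h_min : ∀ i, 0 < min (F.totalDegree : ℝ) (2 ^ i) := fun i ↦
    lt_min (by linarith) (by positivity)
  have h_double : ∀ i, min (F.totalDegree : ℝ) (2 ^ (i + 1)) ≤
      2 * min (F.totalDegree : ℝ) (2 ^ i) := by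
    intro i
    rw [pow_succ', mul_min_of_nonneg _ _ zero_le_two]
    exact min_le_min (by linarith) le_rfl
  obtain ⟨L, hL, h_deg, h_le⟩ := exists_signPotential_le P
    (τ := fun i ↦ min (F.totalDegree : ℝ) (2 ^ i) * 4 ^ i / 6)
    (fun i ↦ by have := h_min i; positivity) (by simp [h_one]; norm_num)
    (fun i ↦ by
      rw [pow_succ 4 i]
      nlinarith [mul_le_mul_of_nonneg_right (h_double i) (show (0 : ℝ) ≤ 4 ^ i by positivity)])
    (fun i ↦ min_mul_four_pow_div_six_le_finrank hF.ne_zero (h_finrank i)) hU I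
  refine ⟨L, fun f hf h_dvd ↦ ?_, h_deg, h_le.trans_eq ?_⟩
  · obtain ⟨i, hfU, hf_ne⟩ := hL f hf
    exact hf_ne (h_compl i f hfU (Ideal.mem_span_singleton.2 h_dvd))
  · rw [show (16 : ℝ) ^ I = (4 ^ I) ^ 2 by rw [← pow_mul, mul_comm, pow_mul]; norm_num,
      min_eq_left (by exact_mod_cast hI)]
    field_simp
    ring

end PartitionThree

section Graph

variable {n : ℕ} {R : Type*} [CommRing R]

/-- Restriction to the graph `x₀ = s(x₁, …, xₙ)`: the substitution of `s` for the variable `x₀`,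
with the remaining variables renumbered from `0`. -/
def restrictToGraph (s : MvPolynomial (Fin n) R) :
    MvPolynomial (Fin (n + 1)) R →ₐ[R] MvPolynomial (Fin n) R :=
  aeval (Fin.cons s X)

@[simp]
theorem restrictToGraph_X_zero (s : MvPolynomial (Fin n) R) : restrictToGraph s (X 0) = s := by
  simp [restrictToGraph]

@[simp]
theorem restrictToGraph_rename_succ (s g : MvPolynomial (Fin n) R) :
    restrictToGraph s (rename Fin.succ g) = g := by
  have h_comp : (Fin.cons s X : Fin (n + 1) → MvPolynomial (Fin n) R) ∘ Fin.succ = X := by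
    ext1 i
    simp
  rw [restrictToGraph, aeval_rename, h_comp, aeval_X_left_apply]

theorem restrictToGraph_eq_eval_finSuccEquiv (s : MvPolynomial (Fin n) R)
    (F : MvPolynomial (Fin (n + 1)) R) :
    restrictToGraph s F = Polynomial.eval s (finSuccEquiv R n F) := by
  have h_hom : (restrictToGraph s).toRingHom =
      (Polynomial.evalRingHom s).comp (finSuccEquiv R n).toRingEquiv.toRingHom := by
    refine MvPolynomial.ringHom_ext (fun r ↦ ?_) fun i ↦ ?_
    · simp [restrictToGraph, finSuccEquiv_apply]
    · refine Fin.cases ?_ (fun j ↦ ?_) i <;> simp [restrictToGraph, finSuccEquiv_apply]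
  exact congrArg (fun φ ↦ φ F) h_hom

theorem totalDegree_restrictToGraph_le {s : MvPolynomial (Fin n) R} {m : ℕ} (hm : 1 ≤ m)
    (hs : s.totalDegree ≤ m) (F : MvPolynomial (Fin (n + 1)) R) :
    (restrictToGraph s F).totalDegree ≤ m * F.totalDegree := by
  have h_var : ∀ i, ((Fin.cons s X : Fin (n + 1) → MvPolynomial (Fin n) R) i).totalDegree ≤ m := by
    refine Fin.cases (by simpa using hs) fun i ↦ ?_
    rw [Fin.cons_succ]
    exact (totalDegree_monomial_le _ _).trans ((Finsupp.sum_single_index rfl).trans_le hm)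
  rw [restrictToGraph, aeval_def, eval₂_eq', algebraMap_eq]
  refine totalDegree_finsetSum_le fun d hd ↦ (totalDegree_mul _ _).trans ?_
  rw [totalDegree_C, zero_add]
  calc _ ≤ ∑ i, m * d i := (totalDegree_finsetProd _ _).trans <| Finset.sum_le_sum fun i _ ↦ by
        rw [mul_comm]
        exact (totalDegree_pow _ _).trans (Nat.mul_le_mul_left _ (h_var i))
    _ = m * d.sum fun _ e ↦ e := by rw [← Finset.mul_sum, Finsupp.sum_fintype _ _ fun _ ↦ rfl]
    _ ≤ m * F.totalDegree := Nat.mul_le_mul_left _ (le_totalDegree hd)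

theorem totalDegree_list_prod_map_restrictToGraph_le {s : MvPolynomial (Fin n) R} {m : ℕ}
    (hm : 1 ≤ m) (hs : s.totalDegree ≤ m) (L : List (MvPolynomial (Fin (n + 1)) R)) :
    (L.map (restrictToGraph s)).prod.totalDegree ≤ m * (L.map totalDegree).sum := by
  calc (L.map (restrictToGraph s)).prod.totalDegree
      ≤ (L.map fun f ↦ (restrictToGraph s f).totalDegree).sum :=
        (totalDegree_list_prod _).trans_eq (congrArg List.sum List.map_map)
    _ ≤ (L.map fun f ↦ m * f.totalDegree).sum :=
        List.sum_le_sum fun f _ ↦ totalDegree_restrictToGraph_le hm hs f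
    _ = m * (L.map totalDegree).sum := List.sum_map_mul_left ..

theorem card_le_of_restrictToGraph_eq_zero [IsDomain R] {F : MvPolynomial (Fin (n + 1)) R}
    (hF : F ≠ 0) {N : Finset (MvPolynomial (Fin n) R)} (hN : ∀ s ∈ N, restrictToGraph s F = 0) :
    N.card ≤ F.totalDegree := by
  have h_ne : finSuccEquiv R n F ≠ 0 := (finSuccEquiv R n).map_ne_zero_iff.2 hF
  have h_roots : N.val ⊆ (finSuccEquiv R n F).roots := fun s hs ↦ by
    rw [Polynomial.mem_roots h_ne, Polynomial.IsRoot, ← restrictToGraph_eq_eval_finSuccEquiv]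
    exact hN s hs
  calc N.card ≤ (finSuccEquiv R n F).natDegree := Polynomial.card_le_degree_of_subset_roots h_roots
    _ = F.degreeOf 0 := natDegree_finSuccEquiv F
    _ ≤ F.totalDegree := degreeOf_le_totalDegree _ _

/-- The point `p` lies on the graph `x₀ = s(x₁, …, xₙ)`. -/
def OnGraph (p : Fin (n + 1) → R) (s : MvPolynomial (Fin n) R) : Prop :=
  p 0 = eval (Fin.tail p) s

namespace OnGraph

variable {p q : Fin (n + 1) → R} {s : MvPolynomial (Fin n) R}

theorem eval_restrictToGraph (h : OnGraph p s) (F : MvPolynomial (Fin (n + 1)) R) :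
    eval (Fin.tail p) (restrictToGraph s F) = eval p F := by
  have h_hom : (eval (Fin.tail p)).comp (restrictToGraph s).toRingHom = eval p := by
    refine MvPolynomial.ringHom_ext (fun r ↦ by simp [restrictToGraph]) (Fin.cases ?_ fun i ↦ ?_)
    · simpa using h.symm
    · simp [restrictToGraph, Fin.tail]
  exact congrArg (fun φ ↦ φ F) h_hom

theorem eq_of_tail_eq (hp : OnGraph p s) (hq : OnGraph q s) (h : Fin.tail p = Fin.tail q) :
    p = q := by
  rw [← Fin.cons_self_tail p, ← Fin.cons_self_tail q, hp, hq, h]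

end OnGraph

open Classical in
theorem card_image_tail_of_onGraph {s : MvPolynomial (Fin n) R} {T : Finset (Fin (n + 1) → R)}
    (hT : ∀ t ∈ T, OnGraph t s) : (T.image Fin.tail).card = T.card :=
  Finset.card_image_of_injOn fun p hp q hq ↦ (hT p hp).eq_of_tail_eq (hT q hq)

open Classical in
theorem SignSeparated.image_tail {s : MvPolynomial (Fin n) ℝ} {T : Finset (Fin (n + 1) → ℝ)}
    {L : List (MvPolynomial (Fin (n + 1)) ℝ)} (h : SignSeparated L T)
    (hT : ∀ t ∈ T, OnGraph t s) :
    SignSeparated (L.map (restrictToGraph s)) (T.image Fin.tail) := by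
  simp only [SignSeparated, Finset.forall_mem_image, List.forall_mem_map]
  refine ⟨fun t ht f hf ↦ ?_, fun p hp q hq hpq ↦ congrArg Fin.tail (h.2 p hp q hq ?_)⟩
  · rw [(hT t ht).eval_restrictToGraph]
    exact h.1 t ht f hf
  · simpa only [SameSign, List.forall_mem_map, (hT p hp).eval_restrictToGraph,
      (hT q hq).eval_restrictToGraph] using hpq

end Graph

section GraphIdeal

variable {n : ℕ} {K : Type*} [Field K] {g g' s s' t : MvPolynomial (Fin n) K}

/-- The ideal of the locus `g(x₁, …, xₙ) = 0` on the graph `x₀ = s(x₁, …, xₙ)`. For irreducible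
`g` it is prime, and for `n = 2` it stands for an irreducible curve on the graph. -/
def graphIdeal (g s : MvPolynomial (Fin n) K) : Ideal (MvPolynomial (Fin (n + 1)) K) :=
  (Ideal.span {g}).comap (restrictToGraph s)

theorem mem_graphIdeal {Φ : MvPolynomial (Fin (n + 1)) K} :
    Φ ∈ graphIdeal g s ↔ g ∣ restrictToGraph s Φ := by
  rw [graphIdeal, Ideal.mem_comap, Ideal.mem_span_singleton]

theorem rename_succ_mem_graphIdeal : rename Fin.succ t ∈ graphIdeal g s ↔ g ∣ t := by
  rw [mem_graphIdeal, restrictToGraph_rename_succ]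

theorem X_zero_sub_mem_graphIdeal : X 0 - rename Fin.succ t ∈ graphIdeal g s ↔ g ∣ s - t := by
  rw [mem_graphIdeal, map_sub, restrictToGraph_X_zero, restrictToGraph_rename_succ]

theorem graphIdeal_isPrime (hg : Irreducible g) (s : MvPolynomial (Fin n) K) :
    (graphIdeal g s).IsPrime := by
  have := (Ideal.span_singleton_prime hg.ne_zero).2 hg.prime
  exact Ideal.comap_isPrime _ _

theorem graphIdeal_congr (h : Associated g g') (s : MvPolynomial (Fin n) K) :
    graphIdeal g s = graphIdeal g' s := by
  ext Φ
  rw [mem_graphIdeal, mem_graphIdeal, h.dvd_iff_dvd_left]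

theorem graphIdeal_eq_of_dvd_sub (h : g ∣ s - t) : graphIdeal g s = graphIdeal g t := by
  ext Φ
  have h_sub := Polynomial.sub_dvd_eval_sub s t (finSuccEquiv K n Φ)
  rw [← restrictToGraph_eq_eval_finSuccEquiv, ← restrictToGraph_eq_eval_finSuccEquiv] at h_sub
  rw [mem_graphIdeal, mem_graphIdeal]
  exact dvd_iff_dvd_of_dvd_sub (h.trans h_sub)

theorem graphIdeal_eq_of_le (hg : Irreducible g) (hg' : Irreducible g')
    (h : graphIdeal g' s' ≤ graphIdeal g s) : graphIdeal g' s' = graphIdeal g s := by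
  have h_assoc : Associated g g' := hg.associated_of_dvd hg' <|
    rename_succ_mem_graphIdeal.1 (h (rename_succ_mem_graphIdeal.2 dvd_rfl))
  have h_sub : g ∣ s - s' := X_zero_sub_mem_graphIdeal.1 <|
    h (X_zero_sub_mem_graphIdeal.2 (by rw [sub_self]; exact dvd_zero _))
  rw [← graphIdeal_congr h_assoc, graphIdeal_eq_of_dvd_sub h_sub]

theorem mem_zeroLocus_graphIdeal {p : Fin (n + 1) → K} :
    p ∈ zeroLocus K (graphIdeal g s) ↔ OnGraph p s ∧ eval (Fin.tail p) g = 0 := by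
  simp only [mem_zeroLocus_iff, aeval_eq_eval]
  refine ⟨fun h ↦ ?_, fun ⟨hp, hg⟩ Φ hΦ ↦ ?_⟩
  · have h_graph := h _ (X_zero_sub_mem_graphIdeal.2 ((sub_self s).symm ▸ dvd_zero g))
    have h_g := h _ (rename_succ_mem_graphIdeal.2 (dvd_refl g))
    rw [map_sub, eval_X, eval_rename, sub_eq_zero] at h_graph
    rw [eval_rename] at h_g
    exact ⟨h_graph, h_g⟩
  · change eval p Φ = 0
    rw [← hp.eval_restrictToGraph]
    exact eval_eq_zero_of_dvd (mem_graphIdeal.1 hΦ) hg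

theorem onGraph_of_mem_zeroLocus {p : Fin (n + 1) → K} (hp : p ∈ zeroLocus K (graphIdeal g s))
    (h : g ∣ s - t) : OnGraph p t :=
  (mem_zeroLocus_graphIdeal.1 (graphIdeal_eq_of_dvd_sub h ▸ hp)).1

end GraphIdeal

section CurveDegrees

theorem exists_notMem_of_isPrime_of_not_le {R ι : Type*} [CommSemiring R] {T : Finset ι}
    {𝔭 : ι → Ideal R} {i : ι} (hi : (𝔭 i).IsPrime) (h : ∀ j ∈ T, j ≠ i → ¬ 𝔭 j ≤ 𝔭 i) :
    ∃ a ∉ 𝔭 i, ∀ j ∈ T, j ≠ i → a ∈ 𝔭 j := by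
  classical
  have h_inf : ¬ (T.erase i).inf 𝔭 ≤ 𝔭 i := by
    rw [hi.inf_le']
    rintro ⟨j, hj, h_le⟩
    exact h j (Finset.mem_of_mem_erase hj) (Finset.ne_of_mem_erase hj) h_le
  obtain ⟨a, ha, ha_notMem⟩ := SetLike.not_le_iff_exists.1 h_inf
  exact ⟨a, ha_notMem, fun j hj h_ne ↦ Finset.inf_le (f := 𝔭) (Finset.mem_erase.2 ⟨h_ne, hj⟩) ha⟩

variable {n : ℕ} {K ι : Type*} [Field K] {T : Finset ι} {g s : ι → MvPolynomial (Fin n) K}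

theorem dvd_of_sum_mul_rename_succ_mem_graphIdeal {Ψ : ι → MvPolynomial (Fin (n + 1)) K}
    {c : ι → MvPolynomial (Fin n) K} {i : ι} (hi : i ∈ T) (hg : Irreducible (g i))
    (hΨ : Ψ i ∉ graphIdeal (g i) (s i)) (hΨ' : ∀ j ∈ T, j ≠ i → Ψ j ∈ graphIdeal (g i) (s i))
    (h : ∑ j ∈ T, Ψ j * rename Fin.succ (c j) ∈ graphIdeal (g i) (s i)) : g i ∣ c i := by
  classical
  rw [← Finset.add_sum_erase _ _ hi, Ideal.add_mem_iff_left _ (Ideal.sum_mem _ fun j hj ↦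
    Ideal.mul_mem_right _ _ (hΨ' j (Finset.mem_of_mem_erase hj) (Finset.ne_of_mem_erase hj)))] at h
  have := graphIdeal_isPrime hg (s i)
  exact rename_succ_mem_graphIdeal.1 ((this.mem_or_mem h).resolve_left hΨ)

/-- For `c` in a product of spaces of polynomials on the graphs and `j` in a space of polynomials,
the polynomial `∑ Ψ i * c i + j`, with each `c i` read as a polynomial not involving `x₀`. -/
def graphSum (Ψ : ι → MvPolynomial (Fin (n + 1)) K) (T : Finset ι)
    (C : ι → Submodule K (MvPolynomial (Fin n) K))
    (J : Submodule K (MvPolynomial (Fin (n + 1)) K)) :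
    ((∀ i : T, C i) × J) →ₗ[K] MvPolynomial (Fin (n + 1)) K :=
  LinearMap.coprod (∑ i : T, LinearMap.mulLeft K (Ψ i) ∘ₗ (rename Fin.succ).toLinearMap ∘ₗ
    (C i).subtype ∘ₗ LinearMap.proj i) J.subtype

theorem graphSum_apply (Ψ : ι → MvPolynomial (Fin (n + 1)) K)
    {C : ι → Submodule K (MvPolynomial (Fin n) K)}
    {J : Submodule K (MvPolynomial (Fin (n + 1)) K)} (c : ∀ i : T, C i) (j : J) :
    graphSum Ψ T C J (c, j) = ∑ i : T, Ψ i * rename Fin.succ (c i : MvPolynomial _ K) + j := by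
  simp [graphSum]

theorem range_graphSum_le {Ψ : ι → MvPolynomial (Fin (n + 1)) K}
    {C : ι → Submodule K (MvPolynomial (Fin n) K)}
    {J : Submodule K (MvPolynomial (Fin (n + 1)) K)} {k e : ℕ}
    (hΨ : ∀ i ∈ T, (Ψ i).totalDegree ≤ e) (hC : ∀ i, C i ≤ restrictTotalDegree (Fin n) K k)
    (hJ : J ≤ restrictTotalDegree (Fin (n + 1)) K (k + e)) :
    LinearMap.range (graphSum Ψ T C J) ≤ restrictTotalDegree (Fin (n + 1)) K (k + e) := by
  rintro _ ⟨⟨c, j⟩, rfl⟩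
  rw [graphSum_apply]
  refine Submodule.add_mem _ (Submodule.sum_mem _ fun i _ ↦ ?_) (hJ j.2)
  rw [mem_restrictTotalDegree, add_comm k e]
  refine (totalDegree_mul _ _).trans (Nat.add_le_add (hΨ i i.2) ?_)
  exact (totalDegree_rename_le _ _).trans ((mem_restrictTotalDegree _ _ _).1 (hC i (c i).2))

theorem injective_graphSum {Ψ : ι → MvPolynomial (Fin (n + 1)) K}
    {C : ι → Submodule K (MvPolynomial (Fin n) K)}
    {J : Submodule K (MvPolynomial (Fin (n + 1)) K)} (hg : ∀ i ∈ T, Irreducible (g i))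
    (hΨ : ∀ i ∈ T, Ψ i ∉ graphIdeal (g i) (s i))
    (hΨ' : ∀ i ∈ T, ∀ j ∈ T, j ≠ i → Ψ i ∈ graphIdeal (g j) (s j))
    (hC : ∀ i, ∀ p ∈ C i, p ∈ Ideal.span {g i} → p = 0)
    (hJ : ∀ i ∈ T, ∀ p ∈ J, p ∈ graphIdeal (g i) (s i)) :
    Function.Injective (graphSum Ψ T C J) := by
  rw [← LinearMap.ker_eq_bot, LinearMap.ker_eq_bot']
  rintro ⟨c, j⟩ h
  rw [graphSum_apply] at h
  have hc : ∀ i, (c i : MvPolynomial (Fin n) K) = 0 := by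
    intro i
    refine hC i _ (c i).2 (Ideal.mem_span_singleton.2 ?_)
    refine dvd_of_sum_mul_rename_succ_mem_graphIdeal (T := Finset.univ) (g := fun i : T ↦ g i)
      (s := fun i : T ↦ s i) (Ψ := fun i : T ↦ Ψ i) (c := fun i : T ↦ c i) (Finset.mem_univ i)
      (hg i i.2) (hΨ i i.2) (fun i' _ h_ne ↦ hΨ' i' i'.2 i i.2 ?_) ?_
    · exact fun h_eq ↦ h_ne (Subtype.ext h_eq.symm)
    · rw [eq_neg_of_add_eq_zero_left h]
      exact neg_mem (hJ i i.2 j j.2)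
  have hj : (j : MvPolynomial (Fin (n + 1)) K) = 0 := by simpa [hc] using h
  exact Prod.ext (funext fun i ↦ Subtype.ext (hc i)) (Subtype.ext hj)

-- Each ideal `graphIdeal (g i) (s i)` omits some `Ψ i` that lies in all the others, so the
-- sum over `i` of `Ψ i` times a complement of `(g i)` is direct, and independent of `J`.
theorem exists_sum_finrank_add_finrank_le (hg : ∀ i ∈ T, Irreducible (g i))
    (h_inj : Set.InjOn (fun i ↦ graphIdeal (g i) (s i)) T)
    {J : Ideal (MvPolynomial (Fin (n + 1)) K)} (hJ : ∀ i ∈ T, J ≤ graphIdeal (g i) (s i)) :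
    ∃ e, ∀ k, ∑ _i ∈ T, finrank K (restrictTotalDegree (Fin n) K k) +
        finrank K (idealOfDegreeLE J (k + e)) ≤
      finrank K (restrictTotalDegree (Fin (n + 1)) K (k + e)) +
        ∑ i ∈ T, finrank K (idealOfDegreeLE (Ideal.span {g i}) k) := by
  have h_sep : ∀ i ∈ T, ∃ a ∉ graphIdeal (g i) (s i), ∀ j ∈ T, j ≠ i →
      a ∈ graphIdeal (g j) (s j) := fun i hi ↦
    exists_notMem_of_isPrime_of_not_le (𝔭 := fun i ↦ graphIdeal (g i) (s i))
      (graphIdeal_isPrime (hg i hi) _) fun j hj h_ne h_le ↦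
        h_ne (h_inj hj hi (graphIdeal_eq_of_le (hg i hi) (hg j hj) h_le))
  choose! Ψ hΨ hΨ' using h_sep
  refine ⟨∑ i ∈ T, (Ψ i).totalDegree, fun k ↦ ?_⟩
  choose C hC_le hC h_finrank using fun i ↦ exists_complement_idealOfDegreeLE (Ideal.span {g i}) k
  have : ∀ i : T, Module.Finite K (C i) := fun i ↦ Submodule.finiteDimensional_of_le (hC_le i)
  have h_range := Submodule.finrank_mono <| range_graphSum_le (T := T)
    (fun i hi ↦ Finset.single_le_sum (f := fun i ↦ (Ψ i).totalDegree) (fun _ _ ↦ Nat.zero_le _) hi)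
    hC_le (idealOfDegreeLE_le J (k + ∑ i ∈ T, (Ψ i).totalDegree))
  rw [LinearMap.finrank_range_of_inj (injective_graphSum hg hΨ hΨ' hC fun i hi p hp ↦
    hJ i hi (mem_idealOfDegreeLE.1 hp).1), finrank_prod, finrank_pi_fintype,
    Finset.sum_coe_sort T fun i ↦ finrank K (C i)] at h_range
  rw [← Finset.sum_congr rfl fun i _ ↦ h_finrank i, Finset.sum_add_distrib]
  linarith

theorem two_mul_finrank_restrictTotalDegree_two_sub {d k : ℕ} (hd : d ≤ k) :
    (2 * finrank K (restrictTotalDegree (Fin 2) K k) -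
      2 * finrank K (restrictTotalDegree (Fin 2) K (k - d)) : ℤ) = d * (2 * k + 3 - d) := by
  obtain ⟨r, rfl⟩ := Nat.exists_eq_add_of_le hd
  have h_add := two_mul_finrank_restrictTotalDegree (K := K) (d + r)
  have h_r := two_mul_finrank_restrictTotalDegree (K := K) r
  rw [Nat.add_sub_cancel_left]
  zify at h_add h_r
  push_cast
  linear_combination h_add - h_r

theorem two_mul_finrank_restrictTotalDegree_three_le {a b M : ℕ} (h : a + b ≤ M) :
    2 * (finrank K (restrictTotalDegree (Fin 3) K M) +
        finrank K (restrictTotalDegree (Fin 3) K (M - a - b))) ≤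
      2 * (finrank K (restrictTotalDegree (Fin 3) K (M - a)) +
        finrank K (restrictTotalDegree (Fin 3) K (M - b))) + a * b * (2 * M + 4) := by
  obtain ⟨r, rfl⟩ := Nat.exists_eq_add_of_le h
  rw [show a + b + r - a - b = r by omega, show a + b + r - a = b + r by omega,
    show a + b + r - b = a + r by omega]
  have h_total := six_mul_finrank_restrictTotalDegree (K := K) (a + b + r)
  have h_r := six_mul_finrank_restrictTotalDegree (K := K) r
  have h_br := six_mul_finrank_restrictTotalDegree (K := K) (b + r)
  have h_ar := six_mul_finrank_restrictTotalDegree (K := K) (a + r)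
  have h_nonneg : 0 ≤ a * b * (a + b) := Nat.zero_le _
  zify at *
  linarith

-- The dimension counts of both sides at a large degree `k + e` are quadratic in `k`, with leading
-- terms `k * ∑ deg g i` and `k * deg F * deg G`.
theorem sum_totalDegree_le_of_mem_graphIdeal {g s : ι → MvPolynomial (Fin 2) K}
    {F G : MvPolynomial (Fin 3) K} (hF : F ≠ 0) (hG : G ≠ 0) (h_rel : IsRelPrime F G)
    (hg : ∀ i ∈ T, Irreducible (g i)) (h_inj : Set.InjOn (fun i ↦ graphIdeal (g i) (s i)) T)
    (hTF : ∀ i ∈ T, F ∈ graphIdeal (g i) (s i)) (hTG : ∀ i ∈ T, G ∈ graphIdeal (g i) (s i)) :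
    ∑ i ∈ T, (g i).totalDegree ≤ F.totalDegree * G.totalDegree := by
  obtain ⟨e, he⟩ := exists_sum_finrank_add_finrank_le hg h_inj (J := Ideal.span {F, G}) fun i hi ↦
    Ideal.span_le.2 (Set.pair_subset (hTF i hi) (hTG i hi))
  set a := F.totalDegree
  set b := G.totalDegree
  set Q := ∑ i ∈ T, (g i).totalDegree ^ 2
  set k := a * b * (2 * e + 1) + Q + a + b with hk
  have h_deg : ∀ i ∈ T, (g i).totalDegree ≤ k := fun i hi ↦ by
    have h_sq : (g i).totalDegree ^ 2 ≤ Q :=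
      Finset.single_le_sum (f := fun i ↦ (g i).totalDegree ^ 2) (fun _ _ ↦ Nat.zero_le _) hi
    have := Nat.le_self_pow two_ne_zero (g i).totalDegree
    omega
  have h_curves : (2 * ∑ _i ∈ T, finrank K (restrictTotalDegree (Fin 2) K k) -
      2 * ∑ i ∈ T, finrank K (idealOfDegreeLE (Ideal.span {g i}) k) : ℤ) =
      (2 * k + 3) * ∑ i ∈ T, ((g i).totalDegree : ℤ) - Q := by
    push_cast [Q]
    simp only [Finset.mul_sum, ← Finset.sum_sub_distrib]
    refine Finset.sum_congr rfl fun i hi ↦ ?_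
    rw [finrank_idealOfDegreeLE_span_singleton (hg i hi).ne_zero (h_deg i hi),
      two_mul_finrank_restrictTotalDegree_two_sub (h_deg i hi)]
    ring
  have h_pair := le_finrank_idealOfDegreeLE_span_pair hF hG h_rel (N := k + e) (by omega)
  have h_total := two_mul_finrank_restrictTotalDegree_three_le (K := K)
    (show a + b ≤ k + e by omega)
  have h_le : _ ≤ finrank K (restrictTotalDegree (Fin 3) K (k + e)) + _ := he k
  by_contra! h_lt
  zify at h_pair h_total h_le h_lt hk h_curves
  have h_mul := mul_le_mul_of_nonneg_left (Int.add_one_le_of_lt h_lt)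
    (show (0 : ℤ) ≤ 2 * k + 3 by positivity)
  linarith

end CurveDegrees

section IncidenceDecompositions

open Finset

variable {α β γ : Type*} {R : α → β → Prop} {P : Finset α} {N : Finset β}

theorem incidences_filter_left_add_not (R : α → β → Prop) (P : Finset α) (N : Finset β)
    (q : α → Prop) [DecidablePred q] :
    incidences R {p ∈ P | q p} N + incidences R {p ∈ P | ¬ q p} N = incidences R P N := by
  classical
  simp only [incidences_eq_sum_right, ← sum_add_distrib]
  refine sum_congr rfl fun s _ ↦ ?_
  rw [filter_comm, filter_comm (fun p ↦ ¬ q p), card_filter_add_card_filter_not]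

theorem incidences_filter_right_add_not (R : α → β → Prop) (P : Finset α) (N : Finset β)
    (q : β → Prop) [DecidablePred q] :
    incidences R P {s ∈ N | q s} + incidences R P {s ∈ N | ¬ q s} = incidences R P N := by
  simp only [incidences_eq_sum_right]
  exact sum_filter_add_sum_filter_not N q _

theorem exists_incidences_le_sum {T : Finset γ} {q : α → γ → Prop}
    (h : ∀ p ∈ P, ∃ t ∈ T, q p t) :
    ∃ Q : γ → Finset α, (∀ t, Q t ⊆ P) ∧ (∀ t, ∀ p ∈ Q t, q p t) ∧ ∑ t ∈ T, #(Q t) = #P ∧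
      ∀ (R : α → β → Prop) (N : Finset β), incidences R P N ≤ ∑ t ∈ T, incidences R (Q t) N := by
  classical
  rcases P.eq_empty_or_nonempty with rfl | ⟨p₀, hp₀⟩
  · exact ⟨fun _ ↦ ∅, by simp, by simp, by simp, fun R N ↦ incidences_le_sum (by simp)⟩
  have : Nonempty γ := ⟨(h p₀ hp₀).choose⟩
  choose! k hkT hk using h
  refine ⟨fun t ↦ {p ∈ P | k p = t}, fun t ↦ filter_subset _ P, fun t p hp ↦ ?_,
    (card_eq_sum_card_fiberwise hkT).symm,
    fun R N ↦ incidences_le_sum fun p hp ↦ ⟨k p, hkT p hp, mem_filter.2 ⟨hp, rfl⟩⟩⟩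
  obtain ⟨hpP, rfl⟩ := mem_filter.1 hp
  exact hk p hpP

open Classical in
theorem K33Free.incidences_le_of_forall_or_card_le (h : K33Free R P N) {K : ℕ}
    (hK : ∀ s ∈ N, (∀ p ∈ P, R p s) ∨ #{p ∈ P | R p s} ≤ K) :
    incidences R P N ≤ 2 * #P + (2 + K) * #N := by
  set W := Finset.filter (fun s ↦ ∀ p ∈ P, R p s) N
  have h_mul : #W * #P ≤ 2 * #P + 2 * #N := by
    rcases h P Subset.rfl W (filter_subset _ N)
      fun p hp s hs ↦ (mem_filter.1 hs).2 p hp with hP | hW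
    · nlinarith [card_filter_le N fun s ↦ ∀ p ∈ P, R p s]
    · nlinarith
  calc incidences R P N = ∑ s ∈ N, #{p ∈ P | R p s} := incidences_eq_sum_right R P N
    _ ≤ ∑ s ∈ N, ((if ∀ p ∈ P, R p s then #P else 0) + K) := by
        refine sum_le_sum fun s hs ↦ ?_
        split_ifs with hP
        · exact (card_filter_le _ _).trans (Nat.le_add_right _ _)
        · exact ((hK s hs).resolve_left hP).trans (Nat.le_add_left _ _)
    _ = #W * #P + #N * K := by
        rw [sum_add_distrib, ← sum_filter, sum_const, sum_const, smul_eq_mul, smul_eq_mul]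
    _ ≤ 2 * #P + (2 + K) * #N := by linarith

end IncidenceDecompositions

section CommonCurves

open Finset UniqueFactorizationMonoid

variable {K : Type*} [Field K] {F G : MvPolynomial (Fin 3) K} {s : MvPolynomial (Fin 2) K}

theorem exists_common_graphIdeals (hF : F ≠ 0) (hG : G ≠ 0) (h_rel : IsRelPrime F G)
    {N : Finset (MvPolynomial (Fin 2) K)} (hN : ∀ s ∈ N, restrictToGraph s F ≠ 0) :
    ∃ C : Finset (MvPolynomial (Fin 2) K × MvPolynomial (Fin 2) K),
      (∀ κ ∈ C, Irreducible κ.1 ∧ κ.2 ∈ N) ∧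
      ∑ κ ∈ C, κ.1.totalDegree ≤ F.totalDegree * G.totalDegree ∧
      ∀ s ∈ N, ∀ g, Irreducible g → g ∣ restrictToGraph s F → g ∣ restrictToGraph s G →
        ∃ κ ∈ C, graphIdeal κ.1 κ.2 = graphIdeal g s := by
  classical
  set X : Finset (MvPolynomial (Fin 2) K × MvPolynomial (Fin 2) K) :=
    N.biUnion fun s ↦ ((factors (restrictToGraph s F)).toFinset.filter
      (· ∣ restrictToGraph s G)).image (·, s)
  have h_mem : ∀ g s, (g, s) ∈ X ↔
      s ∈ N ∧ g ∈ factors (restrictToGraph s F) ∧ g ∣ restrictToGraph s G := by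
    simp [X, and_assoc]
  obtain ⟨C, hC, h_inj, h_image⟩ := exists_subset_injOn_image_eq_of_surjOn (X : Set _)
    (X.image fun κ ↦ graphIdeal κ.1 κ.2) (by rw [coe_image]; exact Set.surjOn_image _ _)
  have h_X : ∀ κ ∈ C, κ.2 ∈ N ∧ κ.1 ∈ factors (restrictToGraph κ.2 F) ∧
    κ.1 ∣ restrictToGraph κ.2 G := fun κ hκ ↦ (h_mem κ.1 κ.2).1 (hC hκ)
  refine ⟨C, fun κ hκ ↦ ⟨irreducible_of_factor _ (h_X κ hκ).2.1, (h_X κ hκ).1⟩,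
    sum_totalDegree_le_of_mem_graphIdeal hF hG h_rel
      (fun κ hκ ↦ irreducible_of_factor _ (h_X κ hκ).2.1) h_inj
      (fun κ hκ ↦ mem_graphIdeal.2 (dvd_of_mem_factors (h_X κ hκ).2.1))
      (fun κ hκ ↦ mem_graphIdeal.2 (h_X κ hκ).2.2), fun s hs g hg hgF hgG ↦ ?_⟩
  obtain ⟨g', hg', h_assoc⟩ := exists_mem_factors_of_dvd (hN s hs) hg hgF
  have h_ideal : graphIdeal g s ∈ X.image fun κ ↦ graphIdeal κ.1 κ.2 := mem_image.2
    ⟨(g', s), (h_mem g' s).2 ⟨hs, hg', h_assoc.dvd_iff_dvd_left.1 hgG⟩,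
      (graphIdeal_congr h_assoc s).symm⟩
  rwa [← h_image, mem_image] at h_ideal

open Classical in
theorem card_onGraph_le_of_not_dvd {g t : MvPolynomial (Fin 2) K} {m : ℕ}
    {T : Finset (Fin 3 → K)} (hg : Irreducible g) (ht : t.totalDegree ≤ m)
    (hs : s.totalDegree ≤ m) (h : ¬ g ∣ t - s) (hT : ∀ p ∈ T, p ∈ zeroLocus K (graphIdeal g t)) :
    #{p ∈ T | OnGraph p s} ≤ m * g.totalDegree := by
  have h_on : ∀ p ∈ {p ∈ T | OnGraph p s}, OnGraph p s := fun p hp ↦ (mem_filter.1 hp).2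
  have h_zero : ∀ p ∈ {p ∈ T | OnGraph p s}, OnGraph p t ∧ eval (Fin.tail p) g = 0 :=
    fun p hp ↦ mem_zeroLocus_graphIdeal.1 (hT p (mem_filter.1 hp).1)
  rw [← card_image_tail_of_onGraph h_on, mul_comm]
  refine (card_le_totalDegree_mul_totalDegree hg.ne_zero (fun h₀ : t - s = 0 ↦ h (h₀ ▸ dvd_zero g))
    (hg.isRelPrime_iff_not_dvd.2 h) ?_ ?_).trans
      (Nat.mul_le_mul_left _ ((totalDegree_sub t s).trans (max_le ht hs)))
  · exact forall_mem_image.2 fun p hp ↦ (h_zero p hp).2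
  · refine forall_mem_image.2 fun p hp ↦ ?_
    rw [map_sub, ← (h_zero p hp).1, ← h_on p hp, sub_self]

theorem card_le_of_onGraph_of_notMem_zeroLocus {m : ℕ} {T : Finset (Fin 3 → K)} (hm : 1 ≤ m)
    (hs : s.totalDegree ≤ m) (hF : restrictToGraph s F ≠ 0) (hT : ∀ p ∈ T, OnGraph p s)
    (hTF : ∀ p ∈ T, eval p F = 0) (hTG : ∀ p ∈ T, eval p G = 0)
    (h : ∀ g, Irreducible g → g ∣ restrictToGraph s F → g ∣ restrictToGraph s G →
      ∀ p ∈ T, p ∉ zeroLocus K (graphIdeal g s)) :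
    #T ≤ m ^ 2 * (F.totalDegree * G.totalDegree) := by
  classical
  rw [← card_image_tail_of_onGraph hT]
  calc #(T.image Fin.tail)
      ≤ (restrictToGraph s F).totalDegree * (restrictToGraph s G).totalDegree := by
        refine card_le_totalDegree_mul_totalDegree_of_common_factor hF ?_ ?_
          fun g hg hgF hgG ↦ forall_mem_image.2 fun p hp hgp ↦
            h g hg hgF hgG p hp (mem_zeroLocus_graphIdeal.2 ⟨hT p hp, hgp⟩)
        · exact forall_mem_image.2 fun p hp ↦ (hT p hp).eval_restrictToGraph F ▸ hTF p hp
        · exact forall_mem_image.2 fun p hp ↦ (hT p hp).eval_restrictToGraph G ▸ hTG p hp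
    _ ≤ m * F.totalDegree * (m * G.totalDegree) := Nat.mul_le_mul
        (totalDegree_restrictToGraph_le hm hs F) (totalDegree_restrictToGraph_le hm hs G)
    _ = m ^ 2 * (F.totalDegree * G.totalDegree) := by ring

end CommonCurves

section QuadricGraphs

open Finset

variable {P : Finset (Fin 3 → ℝ)} {N : Finset (MvPolynomial (Fin 2) ℝ)}
  {F G : MvPolynomial (Fin 3) ℝ}

theorem K33Free.incidences_onGraph_le_of_mem_zeroLocus (h : K33Free OnGraph P N)
    (hN : ∀ s ∈ N, s.totalDegree ≤ 2) {g t : MvPolynomial (Fin 2) ℝ} (hg : Irreducible g)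
    (ht : t.totalDegree ≤ 2) (hP : ∀ p ∈ P, p ∈ zeroLocus ℝ (graphIdeal g t)) :
    incidences OnGraph P N ≤ 2 * #P + (2 + 2 * g.totalDegree) * #N := by
  classical
  refine h.incidences_le_of_forall_or_card_le fun s hs ↦ ?_
  by_cases h_dvd : g ∣ t - s
  · exact Or.inl fun p hp ↦ onGraph_of_mem_zeroLocus (hP p hp) h_dvd
  · exact Or.inr (card_onGraph_le_of_not_dvd hg ht (hN s hs) h_dvd hP)

-- The surfaces `F = 0` and `G = 0` meet in curves of total degree at most `deg F * deg G`. A point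
-- on a curve `κ` lying in a graph is incident either to all graphs containing `κ`, or to one of the
-- graphs meeting `κ` in at most `2 * deg κ` points.
theorem K33Free.incidences_onGraph_le_of_not_dvd (h : K33Free OnGraph P N)
    (hN : ∀ s ∈ N, s.totalDegree ≤ 2) (hF : Irreducible F) (hFG : ¬ F ∣ G)
    (hNF : ∀ s ∈ N, restrictToGraph s F ≠ 0) (hPF : ∀ p ∈ P, eval p F = 0)
    (hPG : ∀ p ∈ P, eval p G = 0) :
    incidences OnGraph P N ≤ 8 * (F.totalDegree * G.totalDegree) * #N + 2 * #P := by
  classical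
  obtain ⟨C, hC, h_deg, h_ex⟩ := exists_common_graphIdeals hF.ne_zero
    (fun hG : G = 0 ↦ hFG (hG ▸ dvd_zero F)) (hF.isRelPrime_iff_not_dvd.2 hFG) hNF
  set q : (Fin 3 → ℝ) → Prop := fun p ↦ ∃ κ ∈ C, p ∈ zeroLocus ℝ (graphIdeal κ.1 κ.2)
  set P₁ := P.filter q
  have h_on : incidences OnGraph P₁ N ≤ 2 * #P + 4 * (F.totalDegree * G.totalDegree) * #N := by
    obtain ⟨Q, hQP, hQ, h_card, h_le⟩ := exists_incidences_le_sum (β := MvPolynomial (Fin 2) ℝ)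
      fun p (hp : p ∈ P₁) ↦ (mem_filter.1 hp).2
    calc incidences OnGraph P₁ N ≤ ∑ κ ∈ C, incidences OnGraph (Q κ) N := h_le OnGraph N
      _ ≤ ∑ κ ∈ C, (2 * #(Q κ) + κ.1.totalDegree * (4 * #N)) := by
          refine sum_le_sum fun κ hκ ↦ ?_
          obtain ⟨hκ_irr, hκN⟩ := hC κ hκ
          have h_pos := totalDegree_pos_of_irreducible hκ_irr
          refine ((h.mono ((hQP κ).trans (filter_subset _ P))
            Subset.rfl).incidences_onGraph_le_of_mem_zeroLocus hN hκ_irr (hN _ hκN) (hQ κ)).trans ?_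
          nlinarith
      _ = 2 * #P₁ + (∑ κ ∈ C, κ.1.totalDegree) * (4 * #N) := by
          rw [sum_add_distrib, ← mul_sum, h_card, ← sum_mul]
      _ ≤ 2 * #P + F.totalDegree * G.totalDegree * (4 * #N) := by
          gcongr
          exact filter_subset _ P
      _ = _ := by ring
  have h_off : incidences OnGraph {p ∈ P | ¬ q p} N ≤
      4 * (F.totalDegree * G.totalDegree) * #N := by
    rw [incidences_eq_sum_right, mul_comm, ← smul_eq_mul, ← sum_const]
    refine sum_le_sum fun s hs ↦ ?_
    simp only [filter_filter]
    refine card_le_of_onGraph_of_notMem_zeroLocus (m := 2) one_le_two (hN s hs) (hNF s hs)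
      (fun p hp ↦ (mem_filter.1 hp).2.2) (fun p hp ↦ hPF p (mem_filter.1 hp).1)
      (fun p hp ↦ hPG p (mem_filter.1 hp).1) fun g hg hgF hgG p hp hpg ↦ ?_
    obtain ⟨κ, hκ, h_eq⟩ := h_ex s hs g hg hgF hgG
    exact (mem_filter.1 hp).2.1 ⟨κ, hκ, h_eq ▸ hpg⟩
  linarith [h_on, h_off, incidences_filter_left_add_not OnGraph P N q]

theorem incidences_offZeros_add {α : Type*} (R : (Fin 3 → ℝ) → α → Prop) (P : Finset (Fin 3 → ℝ))
    (L : List (MvPolynomial (Fin 3) ℝ)) (N : Finset α) :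
    incidences R (offZeros P L) N + incidences R {p ∈ P | eval p L.prod = 0} N =
      incidences R P N := by
  classical
  rw [← incidences_filter_left_add_not R P N fun p ↦ eval p L.prod = 0, add_comm]
  congr 2
  ext p
  simp only [mem_offZeros, mem_filter, ← eval_list_prod_ne_zero_iff, ne_eq]

theorem SignSeparated.card_le_of_onGraph {L : List (MvPolynomial (Fin 3) ℝ)}
    {T : Finset (Fin 3 → ℝ)} (h : SignSeparated L T) {s : MvPolynomial (Fin 2) ℝ}
    (hs : s.totalDegree ≤ 2) (hT : ∀ t ∈ T, OnGraph t s) :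
    #T ≤ (2 * (L.map totalDegree).sum + 2) ^ 2 := by
  rw [← card_image_tail_of_onGraph hT]
  exact (h.image_tail hT).card_le_sq.trans (Nat.pow_le_pow_left (Nat.add_le_add_right
    (totalDegree_list_prod_map_restrictToGraph_le one_le_two hs L) 2) 2)

theorem SignSeparated.card_le_of_onGraph_of_eval_eq_zero {L : List (MvPolynomial (Fin 3) ℝ)}
    {T : Finset (Fin 3 → ℝ)} (h : SignSeparated L T) {s : MvPolynomial (Fin 2) ℝ}
    (hs : s.totalDegree ≤ 2) (hT : ∀ t ∈ T, OnGraph t s) (hF : restrictToGraph s F ≠ 0)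
    (hTF : ∀ t ∈ T, eval t F = 0) :
    #T ≤ 2 * F.totalDegree * (2 * F.totalDegree + 2 * (L.map totalDegree).sum + 2) := by
  have h_deg := totalDegree_restrictToGraph_le one_le_two hs F
  rw [← card_image_tail_of_onGraph hT]
  refine ((h.image_tail hT).card_le_of_eval_eq_zero hF ?_).trans (Nat.mul_le_mul h_deg ?_)
  · exact forall_mem_image.2 fun t ht ↦ (hT t ht).eval_restrictToGraph F ▸ hTF t ht
  · gcongr
    exact totalDegree_list_prod_map_restrictToGraph_le one_le_two hs L

theorem K33Free.incidences_onGraph_le_of_irreducible (h : K33Free OnGraph P N)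
    (hN : ∀ s ∈ N, s.totalDegree ≤ 2) (hF : Irreducible F)
    (hNF : ∀ s ∈ N, restrictToGraph s F ≠ 0) (hPF : ∀ p ∈ P, eval p F = 0) {J : ℕ}
    (hJ : F.totalDegree ≤ 2 ^ J) :
    (incidences OnGraph P N : ℝ) ≤ 368 * (F.totalDegree * 2 ^ J) * #N +
      864 * (#P ^ 3 / (F.totalDegree ^ 2 * 16 ^ J)) + 2 * #P := by
  obtain ⟨L, hFL, h_deg, h_pot⟩ := exists_not_dvd_signPotential_le_div_pow hF P hJ
  have h_two : 2 ≤ 2 * 2 ^ J := Nat.le_mul_of_pos_right 2 (by positivity)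
  have h_off : incidences OnGraph (offZeros P L) N ≤
      2 * (96 * (F.totalDegree * 2 ^ J)) * #N + 2 * signPotential P L := by
    refine h.incidences_offZeros_le fun s hs T hT h_sep h_on ↦ ?_
    calc #T ≤ 2 * F.totalDegree * (2 * F.totalDegree + 2 * (L.map totalDegree).sum + 2) :=
          h_sep.card_le_of_onGraph_of_eval_eq_zero (hN s hs) h_on (hNF s hs)
            fun t ht ↦ hPF t (hT ht)
      _ ≤ 2 * F.totalDegree * (48 * 2 ^ J) := by
          refine Nat.mul_le_mul_left _ ?_
          linarith [hJ, h_deg, h_two]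
      _ = 96 * (F.totalDegree * 2 ^ J) := by ring
  have h_zeros : incidences OnGraph {p ∈ P | eval p L.prod = 0} N ≤
      8 * (F.totalDegree * (22 * 2 ^ J)) * #N + 2 * #P := by
    refine ((h.mono (filter_subset _ P) Subset.rfl).incidences_onGraph_le_of_not_dvd hN hF
      (hF.prime.not_dvd_prod hFL) hNF (fun p hp ↦ hPF p (mem_filter.1 hp).1)
      fun p hp ↦ (mem_filter.1 hp).2).trans ?_
    gcongr
    · exact (totalDegree_list_prod L).trans h_deg
    · exact filter_subset _ P
  have h_sum : incidences OnGraph P N ≤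
      368 * (F.totalDegree * 2 ^ J) * #N + 2 * signPotential P L + 2 * #P := by
    linarith [h_off, h_zeros, incidences_offZeros_add OnGraph P L N]
  rw [mul_div_assoc] at h_pot
  calc (incidences OnGraph P N : ℝ)
      ≤ 368 * (F.totalDegree * 2 ^ J) * #N + 2 * signPotential P L + 2 * #P := by
        exact_mod_cast h_sum
    _ ≤ _ := by linarith [h_pot]

-- `2 ^ J` is taken next to the larger of `D` and `√(p * d ^ 3 / (m * D))`.
theorem exists_two_pow_balance {D p d m : ℝ} (hD : 1 ≤ D) (hp : 0 ≤ p) (hd : 0 < d) (hm : 0 < m) :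
    ∃ J : ℕ, D ≤ 2 ^ J ∧ D * 2 ^ J ≤ 2 * (D ^ 2 + D * d + p * d ^ 2 / m) ∧
      p ^ 3 / (D ^ 2 * 16 ^ J) ≤ p * m ^ 2 / d ^ 6 := by
  have hD₀ : 0 < D := one_pos.trans_le hD
  set x := √(p * d ^ 3 / (m * D))
  have hx₀ : 0 ≤ x := Real.sqrt_nonneg _
  have hx : x ^ 2 = p * d ^ 3 / (m * D) := Real.sq_sqrt (by positivity)
  have hDx : D * x ≤ D * d + p * d ^ 2 / m := by
    refine le_of_sq_le_sq ?_ (by positivity)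
    calc (D * x) ^ 2 = D * d * (p * d ^ 2 / m) := by rw [mul_pow, hx]; field_simp
      _ ≤ (D * d + p * d ^ 2 / m) ^ 2 := by
          have : 0 ≤ D * d := by positivity
          have : 0 ≤ p * d ^ 2 / m := by positivity
          nlinarith
  obtain ⟨j, hj, hj'⟩ := exists_nat_pow_near (hD.trans (le_max_left D x)) (one_lt_two (α := ℝ))
  have h_pow : max D x ≤ 2 ^ (j + 1) := hj'.le
  refine ⟨j + 1, (le_max_left D x).trans h_pow, ?_, ?_⟩
  · calc D * 2 ^ (j + 1) ≤ D * (2 * (D + x)) := by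
          gcongr
          rw [pow_succ']
          gcongr
          exact hj.trans (max_le_add_of_nonneg hD₀.le hx₀)
      _ ≤ 2 * (D ^ 2 + D * d + p * d ^ 2 / m) := by linarith
  · calc p ^ 3 / (D ^ 2 * 16 ^ (j + 1)) = p ^ 3 / (D ^ 2 * (2 ^ (j + 1)) ^ 4) := by
          rw [← pow_mul, mul_comm (j + 1), pow_mul]; norm_num
      _ ≤ p * m ^ 2 / d ^ 6 := by
          rw [div_le_iff₀ (by positivity)]
          calc p ^ 3 = p * m ^ 2 / d ^ 6 * (D ^ 2 * (x ^ 2) ^ 2) := by rw [hx]; field_simp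
            _ = p * m ^ 2 / d ^ 6 * (D ^ 2 * x ^ 4) := by ring
            _ ≤ p * m ^ 2 / d ^ 6 * (D ^ 2 * (2 ^ (j + 1)) ^ 4) := by
                gcongr
                exact (le_max_right D x).trans h_pow

theorem K33Free.incidences_onGraph_le_of_irreducible_of_pos (h : K33Free OnGraph P N)
    (hN : ∀ s ∈ N, s.totalDegree ≤ 2) (hF : Irreducible F)
    (hNF : ∀ s ∈ N, restrictToGraph s F ≠ 0) (hPF : ∀ p ∈ P, eval p F = 0) {d m : ℝ}
    (hd : 0 < d) (hm : 0 < m) :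
    (incidences OnGraph P N : ℝ) ≤
      736 * (F.totalDegree ^ 2 + F.totalDegree * d + #P * d ^ 2 / m) * #N +
        864 * (#P * m ^ 2 / d ^ 6) + 2 * #P := by
  obtain ⟨J, hJ, h_lin, h_cub⟩ := exists_two_pow_balance (D := F.totalDegree) (p := #P)
    (by exact_mod_cast totalDegree_pos_of_irreducible hF) (Nat.cast_nonneg _) hd hm
  have h_inc := h.incidences_onGraph_le_of_irreducible hN hF hNF hPF (by exact_mod_cast hJ)
  have h_mul := mul_le_mul_of_nonneg_right h_lin (Nat.cast_nonneg (α := ℝ) #N)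
  linarith

theorem K33Free.incidences_onGraph_le_of_eval_eq_zero (h : K33Free OnGraph P N)
    (hN : ∀ s ∈ N, s.totalDegree ≤ 2) (hF : F ≠ 0) (hNF : ∀ s ∈ N, restrictToGraph s F ≠ 0)
    (hPF : ∀ p ∈ P, eval p F = 0) {d : ℝ} (hd : 0 < d) :
    (incidences OnGraph P N : ℝ) ≤
      736 * (F.totalDegree ^ 2 + F.totalDegree * d + d ^ 2) * #N + 864 * (#P ^ 3 / d ^ 6) +
        2 * #P := by
  classical
  rcases P.eq_empty_or_nonempty with rfl | hP
  · rw [incidences_eq_sum_right]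
    simp only [filter_empty, card_empty, sum_const_zero, Nat.cast_zero]
    positivity
  have hm : (0 : ℝ) < #P := by exact_mod_cast hP.card_pos
  set S := (UniqueFactorizationMonoid.factors F).toFinset
  obtain ⟨Q, hQP, hQ, h_card, h_le⟩ := exists_incidences_le_sum (β := MvPolynomial (Fin 2) ℝ)
    (T := S) (q := fun p f ↦ eval p f = 0) fun p (hp : p ∈ P) ↦
      (exists_mem_factors_eval_eq_zero hF (hPF p hp)).imp fun f hf ↦
        ⟨Multiset.mem_toFinset.2 hf.1, hf.2⟩
  have h_card' : ∑ f ∈ S, (#(Q f) : ℝ) = #P := by exact_mod_cast h_card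
  have h_deg : ∑ f ∈ S, (f.totalDegree : ℝ) ≤ F.totalDegree := by
    exact_mod_cast sum_totalDegree_toFinset_factors_le hF
  have h_sq : ∑ f ∈ S, (f.totalDegree : ℝ) ^ 2 ≤ F.totalDegree ^ 2 :=
    (sum_sq_le_sq_sum_of_nonneg fun _ _ ↦ Nat.cast_nonneg _).trans (by gcongr)
  have h_fib : ∀ f ∈ S, (incidences OnGraph (Q f) N : ℝ) ≤
      736 * (f.totalDegree ^ 2 + f.totalDegree * d + #(Q f) * d ^ 2 / #P) * #N +
        864 * (#(Q f) * #P ^ 2 / d ^ 6) + 2 * #(Q f) := fun f hf ↦ by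
    have hf := Multiset.mem_toFinset.1 hf
    obtain ⟨g, hg⟩ := UniqueFactorizationMonoid.dvd_of_mem_factors hf
    refine (h.mono (hQP f) Subset.rfl).incidences_onGraph_le_of_irreducible_of_pos hN
      (UniqueFactorizationMonoid.irreducible_of_factor f hf) (fun s hs hfs ↦ hNF s hs ?_) (hQ f)
      hd hm
    rw [hg, map_mul, hfs, zero_mul]
  calc (incidences OnGraph P N : ℝ) ≤ ∑ f ∈ S, (incidences OnGraph (Q f) N : ℝ) := by
        exact_mod_cast h_le OnGraph N
    _ ≤ _ := sum_le_sum h_fib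
    _ = 736 * (∑ f ∈ S, (f.totalDegree : ℝ) ^ 2 + (∑ f ∈ S, (f.totalDegree : ℝ)) * d +
          #P * d ^ 2 / #P) * #N + 864 * (#P * #P ^ 2 / d ^ 6) + 2 * #P := by
        simp only [sum_add_distrib, ← sum_mul, ← mul_sum, ← sum_div, h_card']
    _ ≤ 736 * (F.totalDegree ^ 2 + F.totalDegree * d + #P * d ^ 2 / #P) * #N +
          864 * (#P * #P ^ 2 / d ^ 6) + 2 * #P := by gcongr
    _ = _ := by
        rw [mul_div_cancel_left₀ _ hm.ne']
        ring

theorem K33Free.incidences_onGraph_le_of_list_prod (h : K33Free OnGraph P N)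
    (hN : ∀ s ∈ N, s.totalDegree ≤ 2) {L : List (MvPolynomial (Fin 3) ℝ)} (hL : L.prod ≠ 0) {I : ℕ}
    (h_deg : (L.map totalDegree).sum ≤ 22 * 2 ^ I) (hNL : ∀ s ∈ N, restrictToGraph s L.prod ≠ 0) :
    (incidences OnGraph P N : ℝ) ≤
      377384 * (#N * 4 ^ I) + 2 * signPotential P L + 864 * (#P ^ 3 / 64 ^ I) + 2 * #P := by
  have h_deg_prod : L.prod.totalDegree ≤ 22 * 2 ^ I := (totalDegree_list_prod L).trans h_deg
  have h_off : incidences OnGraph (offZeros P L) N ≤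
      2 * (46 * 2 ^ I) ^ 2 * #N + 2 * signPotential P L :=
    h.incidences_offZeros_le fun s hs T _ h_sep h_on ↦
      (h_sep.card_le_of_onGraph (hN s hs) h_on).trans <| by
        gcongr
        linarith [h_deg, Nat.one_le_two_pow (n := I)]
  have h_zeros : (incidences OnGraph {p ∈ P | eval p L.prod = 0} N : ℝ) ≤
      736 * ((22 * 2 ^ I) ^ 2 + 22 * 2 ^ I * 2 ^ I + (2 ^ I) ^ 2) * #N +
        864 * (#P ^ 3 / (2 ^ I) ^ 6) + 2 * #P := by
    have h_le := (h.mono (filter_subset (eval · L.prod = 0) P)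
      Subset.rfl).incidences_onGraph_le_of_eval_eq_zero hN hL hNL
        (fun p hp ↦ (mem_filter.1 hp).2) (d := 2 ^ I) (by positivity)
    refine h_le.trans ?_
    gcongr
    · exact_mod_cast h_deg_prod
    · exact_mod_cast h_deg_prod
    · exact filter_subset _ P
    · exact filter_subset _ P
  have h_off' : (incidences OnGraph (offZeros P L) N : ℝ) ≤
      2 * (46 * 2 ^ I) ^ 2 * #N + 2 * signPotential P L := by exact_mod_cast h_off
  have h_add : (incidences OnGraph (offZeros P L) N : ℝ) +
      incidences OnGraph {p ∈ P | eval p L.prod = 0} N = incidences OnGraph P N := by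
    exact_mod_cast incidences_offZeros_add OnGraph P L N
  have h_four : ((2 : ℝ) ^ I) ^ 2 = 4 ^ I := by rw [pow_right_comm]; norm_num
  have h_sixty_four : ((2 : ℝ) ^ I) ^ 6 = 64 ^ I := by rw [pow_right_comm]; norm_num
  rw [h_sixty_four] at h_zeros
  rw [← h_four]
  linarith [h_off', h_zeros, h_add]

theorem K33Free.incidences_onGraph_le_pow (h : K33Free OnGraph P N)
    (hN : ∀ s ∈ N, s.totalDegree ≤ 2) (I : ℕ) :
    (incidences OnGraph P N : ℝ) ≤ 10 ^ 6 * (#N * 4 ^ I + #P ^ 3 / 64 ^ I + #P + 8 ^ I) := by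
  classical
  obtain ⟨L, hL, h_deg, h_pot⟩ := exists_signPotential_le_div_pow P I
  set N₀ := Finset.filter (fun s ↦ restrictToGraph s L.prod = 0) N
  set N₁ := Finset.filter (fun s ↦ ¬ restrictToGraph s L.prod = 0) N
  have hL_prod : L.prod ≠ 0 := List.prod_ne_zero fun h₀ ↦ hL 0 h₀ rfl
  have h_vanish : incidences OnGraph P N₀ ≤ 2 * #P + 2 * (22 * 2 ^ I) ^ 3 :=
    (h.mono Subset.rfl (filter_subset _ N)).incidences_le_card_left.trans <| by
      gcongr
      exact (card_le_of_restrictToGraph_eq_zero hL_prod fun s hs ↦ (mem_filter.1 hs).2).trans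
        ((totalDegree_list_prod L).trans h_deg)
  have h_proper := (h.mono Subset.rfl
    (filter_subset _ N : N₁ ⊆ N)).incidences_onGraph_le_of_list_prod
      (fun s hs ↦ hN s (mem_of_mem_filter s hs)) hL_prod h_deg fun s hs ↦ (mem_filter.1 hs).2
  have h_card : (#N₁ : ℝ) * 4 ^ I ≤ #N * 4 ^ I := by
    gcongr
    exact filter_subset _ N
  have h_add :
      (incidences OnGraph P N₀ : ℝ) + incidences OnGraph P N₁ = incidences OnGraph P N := by
    exact_mod_cast
      incidences_filter_right_add_not OnGraph P N fun s ↦ restrictToGraph s L.prod = 0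
  have h_eight : ((2 : ℝ) ^ I) ^ 3 = 8 ^ I := by rw [pow_right_comm]; norm_num
  have h_vanish' : (incidences OnGraph P N₀ : ℝ) ≤ 2 * #P + 2 * (22 ^ 3 * 8 ^ I) := by
    rw [← h_eight, ← mul_pow]
    exact_mod_cast h_vanish
  have h_pos : (0 : ℝ) ≤ #N * 4 ^ I ∧ (0 : ℝ) ≤ #P ^ 3 / 64 ^ I ∧ (0 : ℝ) ≤ #P ∧
    (0 : ℝ) ≤ 8 ^ I := ⟨by positivity, by positivity, by positivity, by positivity⟩
  rw [mul_div_assoc] at h_pot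
  linarith [h_pos.1, h_pos.2.1, h_pos.2.2.1, h_pos.2.2.2]

theorem exists_four_pow_balance {m n : ℝ} (hm : 0 < m) (hn : 0 < n) (hnm : n ≤ m ^ 3)
    (hmn : m ≤ n ^ 3) : ∃ I : ℕ, n * 4 ^ I ≤ m ^ ((3 : ℝ) / 4) * n ^ ((3 : ℝ) / 4) ∧
      m ^ 3 / 64 ^ I ≤ 64 * (m ^ ((3 : ℝ) / 4) * n ^ ((3 : ℝ) / 4)) ∧
      8 ^ I ≤ m ^ ((3 : ℝ) / 4) * n ^ ((3 : ℝ) / 4) := by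
  obtain ⟨x, hx, rfl⟩ : ∃ x : ℝ, 0 < x ∧ x ^ 8 = m :=
    ⟨m ^ (8⁻¹ : ℝ), by positivity, by
      exact_mod_cast Real.rpow_inv_natCast_pow hm.le (n := 8) (by simp)⟩
  obtain ⟨y, hy, rfl⟩ : ∃ y : ℝ, 0 < y ∧ y ^ 8 = n :=
    ⟨n ^ (8⁻¹ : ℝ), by positivity, by
      exact_mod_cast Real.rpow_inv_natCast_pow hn.le (n := 8) (by simp)⟩
  have h_rpow : ∀ z : ℝ, 0 < z → (z ^ 8) ^ ((3 : ℝ) / 4) = z ^ 6 := fun z hz ↦ by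
    rw [← Real.rpow_natCast_mul hz.le, ← Real.rpow_natCast]
    norm_num
  rw [h_rpow x hx, h_rpow y hy]
  have hyx : y ≤ x ^ 3 := le_of_pow_le_pow_left₀ (by norm_num : 8 ≠ 0) (by positivity) (by linarith)
  have hxy : x ≤ y ^ 3 := le_of_pow_le_pow_left₀ (by norm_num : 8 ≠ 0) (by positivity) (by linarith)
  obtain ⟨I, hI, hI'⟩ := exists_nat_pow_near ((one_le_div hy).2 hyx) (one_lt_two (α := ℝ))
  rw [le_div_iff₀ hy] at hI
  rw [div_lt_iff₀ hy] at hI'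
  have h_base : ∀ k : ℕ, ((2 : ℝ) ^ k) ^ I = (2 ^ I) ^ k := fun k ↦ pow_right_comm _ _ _
  refine ⟨I, ?_, ?_, ?_⟩
  · calc y ^ 8 * 4 ^ I = y ^ 6 * (2 ^ I * y) ^ 2 := by
          rw [show (4 : ℝ) = 2 ^ 2 by norm_num, h_base]; ring
      _ ≤ y ^ 6 * (x ^ 3) ^ 2 := by gcongr
      _ = x ^ 6 * y ^ 6 := by ring
  · rw [div_le_iff₀ (by positivity)]
    calc (x ^ 8) ^ 3 = x ^ 6 * (x ^ 3) ^ 6 := by ring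
      _ ≤ x ^ 6 * (2 ^ (I + 1) * y) ^ 6 := by gcongr
      _ = 64 * (x ^ 6 * y ^ 6) * 64 ^ I := by
          rw [show (64 : ℝ) ^ I = (2 ^ 6) ^ I by norm_num, h_base]; ring
  · calc (8 : ℝ) ^ I = (2 ^ I) ^ 3 := by rw [← h_base]; norm_num
      _ ≤ (x ^ 3 / y) ^ 3 := by gcongr; exact (le_div_iff₀ hy).2 hI
      _ = x ^ 6 * (x ^ 3 / y ^ 3) := by ring
      _ ≤ x ^ 6 * y ^ 6 := by
          gcongr
          rw [div_le_iff₀ (by positivity)]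
          calc x ^ 3 ≤ (y ^ 3) ^ 3 := by gcongr
            _ = y ^ 6 * y ^ 3 := by ring

theorem K33Free.incidences_onGraph_le (h : K33Free OnGraph P N)
    (hN : ∀ s ∈ N, s.totalDegree ≤ 2) :
    (incidences OnGraph P N : ℝ) ≤
      7 * 10 ^ 7 * ((#P : ℝ) ^ ((3 : ℝ) / 4) * (#N : ℝ) ^ ((3 : ℝ) / 4) + #P + #N) := by
  have h_pos : (0 : ℝ) ≤ (#P : ℝ) ^ ((3 : ℝ) / 4) * (#N : ℝ) ^ ((3 : ℝ) / 4) := by positivity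
  have hP₀ : (0 : ℝ) ≤ #P := Nat.cast_nonneg _
  have hN₀ : (0 : ℝ) ≤ #N := Nat.cast_nonneg _
  rcases le_or_gt ((#P : ℝ) ^ 3) #N with hPN | hPN
  · have h_le : (incidences OnGraph P N : ℝ) ≤ 2 * #N + 2 * #P ^ 3 := by
      exact_mod_cast h.incidences_le_card_right
    linarith
  rcases le_or_gt ((#N : ℝ) ^ 3) #P with hNP | hNP
  · have h_le : (incidences OnGraph P N : ℝ) ≤ 2 * #P + 2 * #N ^ 3 := by
      exact_mod_cast h.incidences_le_card_left
    linarith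
  have h_root : ∀ {x : ℝ}, 0 ≤ x → 0 < x ^ 3 → 0 < x := fun hx hx₃ ↦
    hx.lt_of_ne fun hx₀ ↦ by simp [← hx₀] at hx₃
  obtain ⟨I, h_lin, h_cub, h_pow⟩ := exists_four_pow_balance (h_root hP₀ (hN₀.trans_lt hPN))
    (h_root hN₀ (hP₀.trans_lt hNP)) hPN.le hNP.le
  linarith [h.incidences_onGraph_le_pow hN I]

end QuadricGraphs

section UnitVectors

variable {V : Type*} [NormedAddCommGroup V] [InnerProductSpace ℝ V] {u z w : V}

theorem inner_sub_inner_smul_self (hu : ‖u‖ = 1) (z : V) : ⟪u, z - ⟪u, z⟫ • u⟫ = 0 := by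
  simp [inner_sub_right, inner_smul_right, hu]

theorem norm_sub_inner_smul_sq (hu : ‖u‖ = 1) (z : V) :
    ‖z - ⟪u, z⟫ • u‖ ^ 2 = ‖z‖ ^ 2 - ⟪u, z⟫ ^ 2 := by
  rw [norm_sub_sq_real, norm_smul, inner_smul_right, real_inner_comm, hu, mul_one, Real.norm_eq_abs,
    sq_abs]
  ring

theorem eq_inner_smul_of_norm_eq_abs_inner (hu : ‖u‖ = 1) (hz : ‖z‖ = |⟪u, z⟫|) :
    z = ⟪u, z⟫ • u := by
  rw [← sub_eq_zero, ← norm_eq_zero, ← sq_eq_zero_iff, norm_sub_inner_smul_sq hu, hz, sq_abs,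
    sub_self]

theorem exists_eq_smul_of_forall_inner_eq (hV : finrank ℝ V = 3) {v : Fin 3 → V} {r ρ σ : ℝ}
    (hv : Function.Injective v) (hr : ∀ i, ‖v i‖ = r) (hw : w ≠ 0) (hρ : ∀ i, ⟪v i, w⟫ = ρ)
    (hσ : ∀ i, ⟪v i, z⟫ = σ) : ∃ t : ℝ, z = t • w := by
  have : FiniteDimensional ℝ V := .of_finrank_pos (by simp [hV])
  have h_sphere : EuclideanGeometry.Cospherical (Set.range v) :=
    ⟨0, r, by rintro _ ⟨i, rfl⟩; rw [dist_zero_right, hr]⟩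
  have h_span : finrank ℝ (vectorSpan ℝ (Set.range v)) = 2 :=
    (h_sphere.affineIndependent subset_rfl hv).finrank_vectorSpan rfl
  have h_mem : ∀ {x : V} {τ : ℝ}, (∀ i, ⟪v i, x⟫ = τ) → x ∈ (vectorSpan ℝ (Set.range v))ᗮ := by
    intro x τ hx
    have h_le : vectorSpan ℝ (Set.range v) ≤ (ℝ ∙ x)ᗮ := by
      refine Submodule.span_le.2 ?_
      rintro _ ⟨_, ⟨i, rfl⟩, _, ⟨j, rfl⟩, rfl⟩
      refine Submodule.mem_orthogonal_singleton_iff_inner_left.2 ?_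
      simp only [vsub_eq_sub, inner_sub_left, hx, sub_self]
    exact fun y hy ↦ Submodule.mem_orthogonal_singleton_iff_inner_left.1 (h_le hy)
  have h_finrank : finrank ℝ (vectorSpan ℝ (Set.range v))ᗮ = 1 := by
    have := Submodule.finrank_add_finrank_orthogonal (vectorSpan ℝ (Set.range v))
    omega
  obtain ⟨t, ht⟩ := (finrank_eq_one_iff_of_nonzero' (⟨w, h_mem hρ⟩ : (vectorSpan ℝ (Set.range v))ᗮ)
    (by simpa using hw)).1 h_finrank ⟨z, h_mem hσ⟩
  exact ⟨t, congrArg Subtype.val ht.symm⟩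

theorem angle_sub_inner_smul_self (hu : ‖u‖ = 1) (hw : w ≠ 0) :
    InnerProductGeometry.angle (w - ⟪u, w⟫ • u) w = Real.arcsin (|⟪u, w⟫| / ‖w‖) := by
  have h_orth : ⟪w - ⟪u, w⟫ • u, ⟪u, w⟫ • u⟫ = 0 := by
    rw [inner_smul_right, real_inner_comm u, inner_sub_inner_smul_self hu, mul_zero]
  have h_ne : w - ⟪u, w⟫ • u ≠ 0 ∨ ⟪u, w⟫ • u ≠ 0 := by
    by_contra! h
    exact hw (by rw [← sub_add_cancel w (⟪u, w⟫ • u), h.1, h.2, add_zero])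
  have h_angle := InnerProductGeometry.angle_add_eq_arcsin_of_inner_eq_zero h_orth h_ne
  rwa [sub_add_cancel, norm_smul, hu, mul_one, Real.norm_eq_abs] at h_angle

theorem abs_lt_norm_of_forall_inner_eq {ι : Type*} [Nontrivial ι] {v : ι → V} {ρ : ℝ}
    (hv : Function.Injective v) (hv_norm : ∀ i, ‖v i‖ = 1) (hw : w ≠ 0)
    (hρ : ∀ i, ⟪v i, w⟫ = ρ) : |ρ| < ‖w‖ := by
  obtain ⟨i, j, hij⟩ := exists_pair_ne ι
  have h_le : |ρ| ≤ ‖w‖ := by simpa [hρ, hv_norm] using abs_real_inner_le_norm (v i) w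
  refine h_le.lt_of_ne fun h_eq ↦ hij (hv ?_)
  have hw_eq : ∀ k, w = ρ • v k := fun k ↦ hρ k ▸
    eq_inner_smul_of_norm_eq_abs_inner (hv_norm k) (by rw [hρ k, h_eq])
  have hρ₀ : ρ ≠ 0 := by
    rintro rfl
    exact hw (by simpa using hw_eq i)
  exact smul_right_injective V hρ₀ ((hw_eq i).symm.trans (hw_eq j))

end UnitVectors

section TangentPlanes

variable {u a c w : Pt3} {d r : ℝ}

theorem Tangent3.abs_inner_sub_eq (hu : ‖u‖ = 1)
    (h : Tangent3 {x | ⟪u, x⟫ = d} (Metric.sphere c r)) : |⟪u, c⟫ - d| = r := by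
  obtain ⟨p, hp⟩ := h
  obtain ⟨hp_plane, hp_sphere⟩ : ⟪u, p⟫ = d ∧ ‖p - c‖ = r := by
    simpa using hp.ge (Set.mem_singleton p)
  set refl := (ℝ ∙ u).reflection
  have h_refl_u : refl u = u :=
    Submodule.reflection_mem_subspace_eq_self (Submodule.mem_span_singleton_self u)
  have h_reflected : c + refl (p - c) = p := by
    refine hp.le ⟨?_, ?_⟩
    · calc ⟪u, c + refl (p - c)⟫ = ⟪u, c⟫ + ⟪refl u, refl (p - c)⟫ := by
            rw [inner_add_right, h_refl_u]
        _ = d := by rw [LinearIsometryEquiv.inner_map_map, inner_sub_right, hp_plane]; ring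
    · rw [mem_sphere_iff_norm, add_sub_cancel_left, LinearIsometryEquiv.norm_map, hp_sphere]
  obtain ⟨t, ht⟩ := Submodule.mem_span_singleton.1
    (Submodule.reflection_eq_self_iff _ |>.1 (eq_sub_of_add_eq' h_reflected))
  have h_inner : ⟪u, c⟫ - d = -t := by
    rw [← hp_plane, ← neg_sub, ← inner_sub_right, ← ht, inner_smul_right,
      real_inner_self_eq_norm_sq, hu]
    ring
  rw [h_inner, abs_neg, ← hp_sphere, ← ht, norm_smul, hu, mul_one, Real.norm_eq_abs]

theorem infDist_lineThrough3 {z : Pt3} (hz : ⟪z, w⟫ = 0) (t : ℝ) :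
    Metric.infDist (a + t • w + z) (lineThrough3 a w) = ‖z‖ := by
  have h_mem : a + t • w ∈ lineThrough3 a w := ⟨t, rfl⟩
  refine le_antisymm ?_ ((Metric.le_infDist ⟨_, h_mem⟩).2 ?_)
  · refine (Metric.infDist_le_dist_of_mem h_mem).trans_eq ?_
    rw [dist_eq_norm, add_sub_cancel_left]
  · rintro _ ⟨s, rfl⟩
    have h_pyth : ‖z + (t - s) • w‖ ^ 2 = ‖z‖ ^ 2 + ‖(t - s) • w‖ ^ 2 := by
      rw [norm_add_sq_real, inner_smul_right, hz]; ring
    rw [dist_eq_norm, show a + t • w + z - (a + s • w) = z + (t - s) • w by module]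
    exact le_of_sq_le_sq (h_pyth ▸ le_add_of_nonneg_right (sq_nonneg _)) (norm_nonneg _)

theorem exists_eq_add_smul_add (hw : w ≠ 0) (a x : Pt3) :
    ∃ (t : ℝ) (z : Pt3), ⟪z, w⟫ = 0 ∧ x = a + t • w + z := by
  refine ⟨⟪x - a, w⟫ / ‖w‖ ^ 2, x - a - (⟪x - a, w⟫ / ‖w‖ ^ 2) • w, ?_, by module⟩
  have : ‖w‖ ≠ 0 := norm_ne_zero_iff.2 hw
  rw [inner_sub_left, real_inner_smul_left, real_inner_self_eq_norm_sq]
  field_simp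
  ring

theorem tangentPlaneCyl_of_inner_eq_zero (hu : ‖u‖ = 1) (hw : w ≠ 0) (huw : ⟪u, w⟫ = 0) :
    TangentPlaneCyl {x | ⟪u, x⟫ = d} a w |⟪u, a⟫ - d| := by
  set e := ⟪u, a⟫ - d with he
  refine ⟨lineThrough3 (a - e • u) w, ⟨_, _, hw, rfl⟩, Set.Subset.antisymm ?_ ?_⟩
  · rintro x ⟨hx_plane, hx_cyl⟩
    obtain ⟨t, z, hz, rfl⟩ := exists_eq_add_smul_add hw a x
    have hz_norm : ‖z‖ = |e| := (infDist_lineThrough3 hz t).symm.trans hx_cyl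
    have hz_inner : ⟪u, z⟫ = -e := by
      have : ⟪u, a⟫ + t * ⟪u, w⟫ + ⟪u, z⟫ = d := by
        simpa only [Set.mem_ofPred_eq, inner_add_right, inner_smul_right] using hx_plane
      rw [huw] at this
      linarith
    have hz_eq : z = ⟪u, z⟫ • u :=
      eq_inner_smul_of_norm_eq_abs_inner hu (by rw [hz_norm, hz_inner, abs_neg])
    exact ⟨t, by rw [hz_eq, hz_inner]; module⟩
  · rintro _ ⟨t, rfl⟩
    constructor
    · simp [inner_add_right, inner_sub_right, inner_smul_right, huw, hu, he]
    · have h_orth : ⟪(-e) • u, w⟫ = 0 := by rw [real_inner_smul_left, huw, mul_zero]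
      calc Metric.infDist (a - e • u + t • w) (lineThrough3 a w)
          = Metric.infDist (a + t • w + (-e) • u) (lineThrough3 a w) := by congr 1; module
        _ = |e| := by rw [infDist_lineThrough3 h_orth, norm_smul, hu, mul_one, norm_neg,
            Real.norm_eq_abs]

theorem tangentPlaneCone_of_inner_eq (hu : ‖u‖ = 1) (hua : ⟪u, a⟫ = d)
    (hw : w - ⟪u, w⟫ • u ≠ 0) :
    TangentPlaneCone {x | ⟪u, x⟫ = d} a w (InnerProductGeometry.angle (w - ⟪u, w⟫ • u) w) := by
  set v := w - ⟪u, w⟫ • u with hv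
  have huv : ⟪u, v⟫ = 0 := inner_sub_inner_smul_self hu w
  have h_inner : ∀ {y : Pt3}, ⟪u, y⟫ = 0 → ⟪v, y⟫ = ⟪y, w⟫ := fun {y} hy ↦ by
    rw [hv, inner_sub_left, real_inner_smul_left, hy, real_inner_comm, mul_zero, sub_zero]
  have h_cos : Real.cos (InnerProductGeometry.angle v w) * ‖w‖ = ‖v‖ := by
    have hvw := InnerProductGeometry.cos_angle_mul_norm_mul_norm v w
    rw [← h_inner huv, real_inner_self_eq_norm_sq] at hvw
    exact mul_right_cancel₀ (norm_ne_zero_iff.2 hw) (by linarith)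
  refine ⟨lineThrough3 a v, ⟨_, _, hw, rfl⟩, Set.Subset.antisymm ?_ ?_⟩
  · rintro x ⟨hx_plane : ⟪u, x⟫ = d, rfl | hx_cone⟩
    · exact ⟨0, by simp⟩
    have hy : ⟪u, x - a⟫ = 0 := by rw [inner_sub_right, hx_plane, hua, sub_self]
    have h_abs_cos : |Real.cos (InnerProductGeometry.angle (x - a) w)| * ‖w‖ = ‖v‖ := by
      rw [← abs_norm w, ← abs_mul, ← abs_norm v, ← h_cos]
      rcases hx_cone with h | h
      · rw [h]
      · rw [h, Real.cos_pi_sub, neg_mul, abs_neg]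
    have h_eq : ‖⟪v, x - a⟫‖ = ‖v‖ * ‖x - a‖ := by
      rw [h_inner hy, ← InnerProductGeometry.cos_angle_mul_norm_mul_norm, ← h_abs_cos,
        Real.norm_eq_abs, abs_mul, abs_mul, abs_norm, abs_norm]
      ring
    have h_or : v = 0 ∨ ∃ t : ℝ, x - a = t • v :=
      ((norm_inner_eq_norm_tfae ℝ v (x - a)).out 0 2).1 h_eq
    obtain ⟨t, ht⟩ := h_or.resolve_left hw
    exact ⟨t, by rw [← ht, add_sub_cancel]⟩
  · rintro _ ⟨t, rfl⟩
    refine ⟨by simp [inner_add_right, inner_smul_right, huv, hua], ?_⟩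
    rw [coneSet, Set.mem_ofPred_eq, add_sub_cancel_left]
    rcases lt_trichotomy t 0 with ht | rfl | ht
    · right; right
      rw [InnerProductGeometry.angle_smul_left_of_neg _ _ ht, InnerProductGeometry.angle_neg_left]
    · left; simp
    · right; left
      rw [InnerProductGeometry.angle_smul_left_of_pos _ _ ht]

end TangentPlanes

/-- `g = (u, d)` is a unit normal `u` of the plane `q` together with the offset `d` of `q`
along `u`; each plane has two of them. -/
def IsUnitNormal (q : Set Pt3) (g : Pt3 × ℝ) : Prop :=
  ‖g.1‖ = 1 ∧ q = {x | ⟪g.1, x⟫ = g.2}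

/-- The sphere `s` (a center and a radius) touches the oriented plane `g` (a unit normal and an
offset) from the side into which `ε` times the normal points, for `ε = 1` or `ε = -1`. -/
def OrientedContact (ε : ℝ) (g s : Pt3 × ℝ) : Prop :=
  ⟪g.1, s.1⟫ - g.2 = ε * s.2

section Contact

theorem IsPlane3.exists_isUnitNormal {q : Set Pt3} (hq : IsPlane3 q) :
    ∃ g : Pt3 × ℝ, IsUnitNormal q g ∧ g.1 2 ≠ 1 := by
  obtain ⟨u, d, hu, rfl⟩ := hq
  have h_smul : ∀ {t : ℝ}, |t| = ‖u‖⁻¹ → IsUnitNormal {x | ⟪u, x⟫ = d} (t • u, t * d) := by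
    intro t ht
    have hu_norm : ‖u‖ ≠ 0 := norm_ne_zero_iff.2 hu
    have ht₀ : t ≠ 0 := abs_ne_zero.1 (ht ▸ inv_ne_zero hu_norm)
    refine ⟨by rw [norm_smul, Real.norm_eq_abs, ht, inv_mul_cancel₀ hu_norm], ?_⟩
    simp only [real_inner_smul_left, mul_right_inj' ht₀]
  have h_abs : |‖u‖⁻¹| = ‖u‖⁻¹ := abs_of_nonneg (by positivity)
  by_cases h_pole : (‖u‖⁻¹ • u) 2 = 1
  · refine ⟨_, h_smul ((abs_neg _).trans h_abs), ?_⟩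
    dsimp only
    rw [neg_smul, PiLp.neg_apply, h_pole]
    norm_num
  · exact ⟨_, h_smul h_abs, h_pole⟩

variable {ε : ℝ}

theorem IsUnitNormal.orientedContact_or {q : Set Pt3} {g s : Pt3 × ℝ} (hg : IsUnitNormal q g)
    (h : Tangent3 q (Metric.sphere s.1 s.2)) :
    OrientedContact 1 g s ∨ OrientedContact (-1) g s := by
  have h_abs := (hg.2 ▸ h).abs_inner_sub_eq hg.1
  rw [OrientedContact, OrientedContact, one_mul, neg_one_mul, ← h_abs]
  exact (abs_choice (⟪g.1, s.1⟫ - g.2)).imp Eq.symm fun h ↦ by rw [h, neg_neg]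

theorem exists_common_tangent_cone_or_cyl {ι : Type*} [Nontrivial ι] {q : ι → Set Pt3}
    {g : ι → Pt3 × ℝ} {a w : Pt3} {e ρ : ℝ} (hg : ∀ i, IsUnitNormal (q i) (g i))
    (hg_inj : Function.Injective fun i ↦ (g i).1) (he : e ≠ 0) (hw : w ≠ 0)
    (ha : ∀ i, ⟪(g i).1, a⟫ - (g i).2 = e) (hρ : ∀ i, ⟪(g i).1, w⟫ = ρ) :
    (∃ b ∈ lineThrough3 a w, ∃ θ : ℝ, 0 < θ ∧ θ < Real.pi / 2 ∧
        ∀ i, TangentPlaneCone (q i) b w θ) ∨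
      ∃ r : ℝ, 0 < r ∧ ∀ i, TangentPlaneCyl (q i) a w r := by
  rcases eq_or_ne ρ 0 with rfl | hρ₀
  · refine .inr ⟨|e|, abs_pos.2 he, fun i ↦ ?_⟩
    rw [(hg i).2, ← ha i]
    exact tangentPlaneCyl_of_inner_eq_zero (hg i).1 hw (hρ i)
  have h_lt : |ρ| < ‖w‖ := abs_lt_norm_of_forall_inner_eq hg_inj (fun i ↦ (hg i).1) hw hρ
  have hw_pos : 0 < ‖w‖ := norm_pos_iff.2 hw
  refine .inl ⟨a + (-(e / ρ)) • w, ⟨_, rfl⟩, Real.arcsin (|ρ| / ‖w‖),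
    Real.arcsin_pos.2 (by positivity),
    Real.arcsin_lt_pi_div_two.2 ((div_lt_one hw_pos).2 h_lt), fun i ↦ ?_⟩
  have h_apex : ⟪(g i).1, a + (-(e / ρ)) • w⟫ = (g i).2 := by
    rw [inner_add_right, inner_smul_right, hρ, neg_mul, div_mul_cancel₀ _ hρ₀, ← ha i]
    ring
  have h_ne : w - ⟪(g i).1, w⟫ • (g i).1 ≠ 0 := by
    intro h
    refine h_lt.ne ?_
    rw [sub_eq_zero.1 h, norm_smul, (hg i).1, hρ, mul_one, Real.norm_eq_abs]
  have h_cone := tangentPlaneCone_of_inner_eq (hg i).1 h_apex h_ne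
  rwa [angle_sub_inner_smul_self (hg i).1 hw, hρ, ← (hg i).2] at h_cone

theorem sphereConeCylConfig33_of_orientedContact {S : Finset (Pt3 × ℝ)} {Pl : Finset (Set Pt3)}
    {q : Fin 3 → Set Pt3} {g s : Fin 3 → Pt3 × ℝ} (hε : ε ≠ 0) (hq : ∀ i, q i ∈ Pl)
    (hq_inj : Function.Injective q) (hg : ∀ i, IsUnitNormal (q i) (g i)) (hs : ∀ j, s j ∈ S)
    (hs_inj : Function.Injective s) (hs_pos : 0 < (s 0).2)
    (h : ∀ i j, OrientedContact ε (g i) (s j)) : SphereConeCylConfig33 S Pl := by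
  have hg_inj : Function.Injective fun i ↦ (g i).1 := by
    intro i j (hij : (g i).1 = (g j).1)
    have h_offset : (g i).2 = (g j).2 := by
      have hi := h i 0
      rw [OrientedContact, hij, ← h j 0] at hi
      exact sub_right_injective hi
    exact hq_inj (by rw [(hg i).2, (hg j).2, hij, h_offset])
  have h_inner : ∀ i j, ⟪(g i).1, (s j).1 - (s 0).1⟫ = ε * (s j).2 - ε * (s 0).2 := by
    intro i j
    rw [inner_sub_right, ← h i j, ← h i 0]
    ring
  have h_center : (s 1).1 - (s 0).1 ≠ 0 := by
    intro h₀
    have h_radius := h_inner 0 1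
    rw [h₀, inner_zero_right, eq_comm, sub_eq_zero] at h_radius
    exact hs_inj.ne one_ne_zero (Prod.ext (sub_eq_zero.1 h₀) (mul_left_cancel₀ hε h_radius))
  have h_line : ∀ j, (s j).1 ∈ lineThrough3 (s 0).1 ((s 1).1 - (s 0).1) := by
    intro j
    obtain ⟨t, ht⟩ := exists_eq_smul_of_forall_inner_eq finrank_euclideanSpace_fin hg_inj
      (fun i ↦ (hg i).1) h_center (h_inner · 1) (h_inner · j)
    exact ⟨t, by rw [← ht, add_sub_cancel]⟩
  refine ⟨(s 0).1, _, h_center, ⟨s 0, hs 0, s 1, hs 1, s 2, hs 2, hs_inj.ne (by decide),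
    hs_inj.ne (by decide), hs_inj.ne (by decide), h_line 0, h_line 1, h_line 2⟩, q 0, hq 0, q 1,
    hq 1, q 2, hq 2, hq_inj.ne (by decide), hq_inj.ne (by decide), hq_inj.ne (by decide), ?_⟩
  refine (exists_common_tangent_cone_or_cyl hg hg_inj (mul_ne_zero hε hs_pos.ne') h_center
    (h · 0) (h_inner · 1)).imp ?_ ?_
  · rintro ⟨b, hb, θ, hθ₀, hθ, h_tangent⟩
    exact ⟨b, hb, θ, hθ₀, hθ, h_tangent 0, h_tangent 1, h_tangent 2⟩
  · rintro ⟨r, hr, h_tangent⟩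
    exact ⟨r, hr, h_tangent 0, h_tangent 1, h_tangent 2⟩

theorem k33Free_orientedContact {S : Finset (Pt3 × ℝ)} {Pl : Finset (Set Pt3)}
    {g : Set Pt3 → Pt3 × ℝ} (hg : ∀ q ∈ Pl, IsUnitNormal q (g q)) (hS : ∀ s ∈ S, 0 < s.2)
    (h_free : ¬ SphereConeCylConfig33 S Pl) (hε : ε ≠ 0) :
    K33Free (fun q ↦ OrientedContact ε (g q)) Pl S := by
  intro A hA B hB h_contact
  by_contra! h_card
  obtain ⟨f⟩ : Nonempty (Fin 3 ↪ A) :=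
    Function.Embedding.nonempty_of_card_le (by simpa using Nat.succ_le_of_lt h_card.1)
  obtain ⟨f'⟩ : Nonempty (Fin 3 ↪ B) :=
    Function.Embedding.nonempty_of_card_le (by simpa using Nat.succ_le_of_lt h_card.2)
  exact h_free <| sphereConeCylConfig33_of_orientedContact hε (fun i ↦ hA (f i).2)
    (Subtype.val_injective.comp f.injective) (fun i ↦ hg _ (hA (f i).2)) (fun j ↦ hB (f' j).2)
    (Subtype.val_injective.comp f'.injective) (hS _ (hB (f' 0).2))
    fun i j ↦ h_contact _ (f i).2 _ (f' j).2

end Contact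

/-- Stereographic coordinates of the unit normal `g.1`, projected from the north pole, preceded
by the offset `g.2` rescaled so that contact with a sphere becomes incidence with the graph of
its `spherePolynomial`. -/
def planePoint (g : Pt3 × ℝ) : Fin 3 → ℝ :=
  ![2 * g.2 / (1 - g.1 2), g.1 0 / (1 - g.1 2), g.1 1 / (1 - g.1 2)]

/-- The quadratic polynomial on whose graph `planePoint` places the planes in contact, with
orientation `ε`, with the sphere `s`. -/
def spherePolynomial (ε : ℝ) (s : Pt3 × ℝ) : MvPolynomial (Fin 2) ℝ :=
  C (s.1 2 - ε * s.2) * (X 0 ^ 2 + X 1 ^ 2) + C (2 * s.1 0) * X 0 + C (2 * s.1 1) * X 1 -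
    C (s.1 2 + ε * s.2)

section StereographicCoordinates

variable {ε : ℝ} {g : Pt3 × ℝ}

theorem sum_sq_eq_one {u : Pt3} (hu : ‖u‖ = 1) : u 0 ^ 2 + u 1 ^ 2 + u 2 ^ 2 = 1 := by
  have h_norm := EuclideanSpace.real_norm_sq_eq u
  rwa [hu, one_pow, Fin.sum_univ_three, eq_comm] at h_norm

theorem eval_spherePolynomial (ε : ℝ) (s : Pt3 × ℝ) (x : Fin 2 → ℝ) :
    eval x (spherePolynomial ε s) = (s.1 2 - ε * s.2) * (x 0 ^ 2 + x 1 ^ 2) + 2 * s.1 0 * x 0 +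
      2 * s.1 1 * x 1 - (s.1 2 + ε * s.2) := by
  simp [spherePolynomial]

theorem totalDegree_spherePolynomial_le (ε : ℝ) (s : Pt3 × ℝ) :
    (spherePolynomial ε s).totalDegree ≤ 2 := by
  have h_lin : ∀ (t : ℝ) (i : Fin 2), (C t * X i : MvPolynomial (Fin 2) ℝ).totalDegree ≤ 2 :=
    fun t i ↦ (totalDegree_mul _ _).trans (by simp)
  have h_sq : ∀ t : ℝ, (C t * (X 0 ^ 2 + X 1 ^ 2) : MvPolynomial (Fin 2) ℝ).totalDegree ≤ 2 :=
    fun t ↦ (totalDegree_mul _ _).trans <| by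
      rw [totalDegree_C, zero_add]
      exact (totalDegree_add _ _).trans (by simp)
  refine (totalDegree_sub _ _).trans (max_le ?_ ((totalDegree_C _).trans_le (Nat.zero_le _)))
  refine (totalDegree_add _ _).trans (max_le ?_ (h_lin _ _))
  exact (totalDegree_add _ _).trans (max_le (h_sq _) (h_lin _ _))

theorem spherePolynomial_injective (hε : ε ≠ 0) : Function.Injective (spherePolynomial ε) := by
  intro s t hst
  have h_eval : ∀ x : Fin 2 → ℝ, _ := fun x ↦ (eval_spherePolynomial ε s x).symm.trans
    ((congrArg (eval x) hst).trans (eval_spherePolynomial ε t x))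
  have h₀₀ := h_eval ![0, 0]
  have h₁₀ := h_eval ![1, 0]
  have h₁₀' := h_eval ![-1, 0]
  have h₀₁ := h_eval ![0, 1]
  simp only [Matrix.cons_val_zero, Matrix.cons_val_one] at h₀₀ h₁₀ h₁₀' h₀₁
  have h_center : ∀ i, s.1 i = t.1 i := by
    intro i
    fin_cases i <;> dsimp only [Fin.zero_eta, Fin.mk_one, Fin.reduceFinMk] <;> linarith
  exact Prod.ext (PiLp.ext h_center) (mul_left_cancel₀ hε (by linarith))

theorem planePoint_sq_add_sq (hg : ‖g.1‖ = 1) (h_pole : g.1 2 ≠ 1) :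
    planePoint g 1 ^ 2 + planePoint g 2 ^ 2 = (1 + g.1 2) / (1 - g.1 2) := by
  have h_sum := sum_sq_eq_one hg
  have h_ne : 1 - g.1 2 ≠ 0 := sub_ne_zero.2 h_pole.symm
  change (g.1 0 / (1 - g.1 2)) ^ 2 + (g.1 1 / (1 - g.1 2)) ^ 2 = _
  field_simp
  linarith

theorem onGraph_planePoint_iff (hg : ‖g.1‖ = 1) (h_pole : g.1 2 ≠ 1) (s : Pt3 × ℝ) :
    OnGraph (planePoint g) (spherePolynomial ε s) ↔ OrientedContact ε g s := by
  have h_ne : 1 - g.1 2 ≠ 0 := sub_ne_zero.2 h_pole.symm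
  have h_inner : ⟪g.1, s.1⟫ = g.1 0 * s.1 0 + g.1 1 * s.1 1 + g.1 2 * s.1 2 := by
    rw [EuclideanSpace.inner_eq_star_dotProduct]
    simp [dotProduct, Fin.sum_univ_three, mul_comm]
  rw [OnGraph, eval_spherePolynomial, OrientedContact, h_inner]
  change 2 * g.2 / (1 - g.1 2) = (s.1 2 - ε * s.2) * (planePoint g 1 ^ 2 + planePoint g 2 ^ 2) +
    2 * s.1 0 * (g.1 0 / (1 - g.1 2)) + 2 * s.1 1 * (g.1 1 / (1 - g.1 2)) - (s.1 2 + ε * s.2) ↔ _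
  rw [planePoint_sq_add_sq hg h_pole]
  field_simp
  constructor <;> intro h <;> linarith

theorem planePoint_injOn : Set.InjOn planePoint {g | ‖g.1‖ = 1 ∧ g.1 2 ≠ 1} := by
  rintro g ⟨hg, hg_pole⟩ h ⟨hh, hh_pole⟩ h_eq
  have hg_ne : 1 - g.1 2 ≠ 0 := sub_ne_zero.2 hg_pole.symm
  have hh_ne : 1 - h.1 2 ≠ 0 := sub_ne_zero.2 hh_pole.symm
  have h_two : g.1 2 = h.1 2 := by
    have h_sq := planePoint_sq_add_sq hg hg_pole
    rw [h_eq, planePoint_sq_add_sq hh hh_pole, div_eq_div_iff hh_ne hg_ne] at h_sq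
    linarith
  have h_cancel : ∀ {x y : ℝ}, x / (1 - g.1 2) = y / (1 - h.1 2) → x = y := fun hxy ↦ by
    rwa [h_two, div_left_inj' hh_ne] at hxy
  refine Prod.ext (PiLp.ext fun i ↦ ?_)
    (mul_left_cancel₀ two_ne_zero (h_cancel (congrFun h_eq 0)))
  fin_cases i
  exacts [h_cancel (congrFun h_eq 1), h_cancel (congrFun h_eq 2), h_two]

end StereographicCoordinates

section Tangencies

variable {S : Finset (Pt3 × ℝ)} {Pl : Finset (Set Pt3)} {g : Set Pt3 → Pt3 × ℝ}

open Finset in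
theorem incidences_orientedContact_le {ε : ℝ} (hε : ε ≠ 0)
    (hg : ∀ q ∈ Pl, IsUnitNormal q (g q) ∧ (g q).1 2 ≠ 1) (hS : ∀ s ∈ S, 0 < s.2)
    (h_free : ¬ SphereConeCylConfig33 S Pl) :
    (incidences (fun q ↦ OrientedContact ε (g q)) Pl S : ℝ) ≤
      7 * 10 ^ 7 * ((#Pl : ℝ) ^ ((3 : ℝ) / 4) * (#S : ℝ) ^ ((3 : ℝ) / 4) + #Pl + #S) := by
  classical
  have h_contact : ∀ q ∈ Pl, ∀ s ∈ S,
      OnGraph (planePoint (g q)) (spherePolynomial ε s) ↔ OrientedContact ε (g q) s :=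
    fun q hq s _ ↦ onGraph_planePoint_iff (hg q hq).1.1 (hg q hq).2 s
  have hg_inj : Set.InjOn (fun q ↦ planePoint (g q)) Pl := by
    intro q hq q' hq' h_eq
    have h_normal : g q = g q' :=
      planePoint_injOn ⟨(hg q hq).1.1, (hg q hq).2⟩ ⟨(hg q' hq').1.1, (hg q' hq').2⟩ h_eq
    rw [(hg q hq).1.2, (hg q' hq').1.2, h_normal]
  have h_image := (k33Free_orientedContact (fun q hq ↦ (hg q hq).1) hS h_free hε).image
    fun q hq s hs ↦ (h_contact q hq s hs).1
  have h_bound := h_image.incidences_onGraph_le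
    (forall_mem_image.2 fun s _ ↦ totalDegree_spherePolynomial_le ε s)
  rw [card_image_of_injOn hg_inj, card_image_of_injective _ (spherePolynomial_injective hε)]
    at h_bound
  refine le_trans ?_ h_bound
  exact_mod_cast incidences_le_incidences_image hg_inj (spherePolynomial_injective hε).injOn
    fun q hq s hs ↦ (h_contact q hq s hs).2

theorem ncard_tangencies_le (hg : ∀ q ∈ Pl, IsUnitNormal q (g q)) :
    {q : Set Pt3 × (Pt3 × ℝ) | q.1 ∈ Pl ∧ q.2 ∈ S ∧
        Tangent3 q.1 (Metric.sphere q.2.1 q.2.2)}.ncard ≤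
      incidences (fun q ↦ OrientedContact 1 (g q)) Pl S +
        incidences (fun q ↦ OrientedContact (-1) (g q)) Pl S := by
  classical
  refine (Set.ncard_le_ncard ?_ (Finset.finite_toSet _)).trans
    ((Set.ncard_coe_finset _).trans_le (Finset.card_union_le _ _))
  rintro ⟨q, s⟩ ⟨hq, hs, h_tangent⟩
  rw [Finset.mem_coe, Finset.mem_union, Rel.mem_interedges_iff, Rel.mem_interedges_iff]
  exact ((hg q hq).orientedContact_or h_tangent).imp (⟨hq, hs, ·⟩) (⟨hq, hs, ·⟩)

end Tangencies

theorem plane_sphere_tangencies_no_config :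
    ∃ A : ℝ, 0 < A ∧
      ∀ (n k : ℕ) (Pl : Finset (Set Pt3)) (S : Finset (Pt3 × ℝ)),
        Pl.card = n → S.card = k →
        (∀ q ∈ Pl, IsPlane3 q) → (∀ s ∈ S, 0 < s.2) →
        ¬ SphereConeCylConfig33 S Pl →
        (({q : Set Pt3 × (Pt3 × ℝ) | q.1 ∈ Pl ∧ q.2 ∈ S ∧
            Tangent3 q.1 (Metric.sphere q.2.1 q.2.2)}).ncard : ℝ) ≤
          A * ((n : ℝ) ^ ((3 : ℝ) / 4) * (k : ℝ) ^ ((3 : ℝ) / 4) + (n : ℝ) + (k : ℝ)) := by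
  refine ⟨14 * 10 ^ 7, by norm_num, ?_⟩
  rintro n k Pl S rfl rfl hPl hS h_free
  choose! g hg using fun q hq ↦ (hPl q hq).exists_isUnitNormal
  have h_outer := incidences_orientedContact_le one_ne_zero hg hS h_free
  have h_inner := incidences_orientedContact_le (neg_ne_zero.2 one_ne_zero) hg hS h_free
  have h_ncard := Nat.cast_le (α := ℝ) |>.2
    (ncard_tangencies_le (S := S) fun q hq ↦ (hg q hq).1)
  rw [Nat.cast_add] at h_ncard
  linarith
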